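/- arXiv:1902.10000 — 2 statements merged into one kernel-verified Lean document; each statement's English description precedes it below -/
import Mathlib

section
/- Fix β ∈ (1+α, 2), and if α ≥ 1/2 assume additionally that W(x,y) ≥ c_*((x/y)^α + (y/x)^α) for some c_* > 0 and all x,y > 0. For each μ > 0 there exist constants C_μ > 0 and ε_* > 0 such that for every ε ∈ (0, ε_*) and every pair of normalised self-similar profiles φ¹_ε, φ²_ε for K_ε one has ‖e^{−x}(φ¹_ε − φ²_ε)‖_{X_{−α,β}} ≤ μ ‖φ¹_ε − φ²_ε‖_{X_{−α,β}} + C_μ ‖(1 − e^{−x})(φ¹_ε − φ²_ε)‖_{X_{−α,β}}. -/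
open MeasureTheory Real Set Filter

noncomputable def weight (a b x : ℝ) : ℝ := if x ≤ 1 then x ^ a else x ^ b

noncomputable def Xnorm (a b : ℝ) (g : ℝ → ℝ) : ℝ :=
  ∫ x in Ioi (0:ℝ), |g x| * weight a b x

def MemX (a b : ℝ) (g : ℝ → ℝ) : Prop :=
  IntegrableOn (fun x => g x * weight a b x) (Ioi 0)

noncomputable def Kern (ε : ℝ) (W : ℝ → ℝ → ℝ) (x y : ℝ) : ℝ := 2 + ε * W x y

def GoodW (α : ℝ) (W : ℝ → ℝ → ℝ) : Prop :=
  ContinuousOn (fun p : ℝ × ℝ => W p.1 p.2) (Ioi 0 ×ˢ Ioi 0) ∧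
  (∀ x y : ℝ, 0 < x → 0 < y → W x y = W y x) ∧
  (∀ l x y : ℝ, 0 < l → 0 < x → 0 < y → W (l * x) (l * y) = W x y) ∧
  (∀ x y : ℝ, 0 < x → 0 < y → 0 ≤ W x y ∧ W x y ≤ (x / y) ^ α + (y / x) ^ α)

def IsProfile (K : ℝ → ℝ → ℝ) (φ : ℝ → ℝ) : Prop :=
  LocallyIntegrableOn φ (Ioi 0) ∧
  (∀ᵐ x ∂(volume.restrict (Ioi (0:ℝ))), 0 ≤ φ x) ∧
  IntegrableOn (fun x => x * φ x) (Ioi 0) ∧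
  (∀ᵐ x ∂(volume.restrict (Ioi (0:ℝ))),
    x ^ 2 * φ x = ∫ y in Ioo 0 x, ∫ z in Ioi (x - y), y * K y z * φ y * φ z)

def IsNormalised (φ : ℝ → ℝ) : Prop := ∫ x in Ioi (0:ℝ), x * φ x = 1


open scoped ENNReal

noncomputable abbrev nu : Measure ℝ := volume.restrict (Ioi (0:ℝ))

noncomputable def GG (ε : ℝ) (w : ℝ → ℝ → ℝ) (φ : ℝ → ℝ) (y z : ℝ) : ℝ≥0∞ :=
  ENNReal.ofReal (y * (2 + ε * w y z) * φ y * φ z)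

structure GW (α : ℝ) (w : ℝ → ℝ → ℝ) : Prop where
  meas : Measurable (fun p : ℝ × ℝ => w p.1 p.2)
  symm : ∀ x y, w x y = w y x
  nn : ∀ x y, 0 ≤ w x y
  le : ∀ x y, 0 < x → 0 < y → w x y ≤ (x / y) ^ α + (y / x) ^ α

structure Good (ε : ℝ) (w : ℝ → ℝ → ℝ) (φ : ℝ → ℝ) : Prop where
  meas : Measurable φ
  nn : ∀ x, 0 ≤ φ x
  mass : ∫⁻ x, ENNReal.ofReal (x * φ x) ∂nu = 1
  eqn : ∀ᵐ x ∂nu, ENNReal.ofReal (x ^ 2 * φ x) =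
    ∫⁻ y in Iio x, ∫⁻ z in Ioi (x - y), GG ε w φ y z ∂nu ∂nu

lemma GG_meas {α ε : ℝ} {w : ℝ → ℝ → ℝ} {φ : ℝ → ℝ} (hw : GW α w) (hφ : Measurable φ) :
    Measurable (fun p : ℝ × ℝ => GG ε w φ p.1 p.2) := by
  unfold GG
  have := hw.meas
  fun_prop

lemma ae_nu_pos : ∀ᵐ x ∂nu, 0 < x := ae_restrict_mem measurableSet_Ioi

/-- Tonelli form of flux integrals tested with `f`. -/
lemma flux_test (G : ℝ → ℝ → ℝ≥0∞) (hG : Measurable (fun p : ℝ × ℝ => G p.1 p.2))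
    (f : ℝ → ℝ≥0∞) (hf : Measurable f) :
    ∫⁻ x, (∫⁻ y in Iio x, ∫⁻ z in Ioi (x - y), G y z ∂nu ∂nu) * f x ∂nu =
      ∫⁻ y, ∫⁻ z, G y z * (∫⁻ x in Ioo y (y + z), f x) ∂nu ∂nu := by
  set S : Set (ℝ × ℝ × ℝ) := {p | p.2.1 < p.1 ∧ p.1 - p.2.1 < p.2.2} with hS
  have hSm : MeasurableSet S := by
    have e1 : MeasurableSet {p : ℝ × ℝ × ℝ | p.2.1 < p.1} :=
      measurableSet_lt (by fun_prop) (by fun_prop)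
    have e2 : MeasurableSet {p : ℝ × ℝ × ℝ | p.1 - p.2.1 < p.2.2} :=
      measurableSet_lt (by fun_prop) (by fun_prop)
    exact e1.inter e2
  set k : ℝ × ℝ × ℝ → ℝ≥0∞ := S.indicator (fun p => G p.2.1 p.2.2 * f p.1) with hk
  have hkm : Measurable k := by
    apply Measurable.indicator _ hSm
    have : Measurable (fun p : ℝ × ℝ × ℝ => G p.2.1 p.2.2) :=
      hG.comp (by fun_prop : Measurable (fun p : ℝ × ℝ × ℝ => (p.2.1, p.2.2)))
    fun_prop
  have h1 : ∀ x, (∫⁻ y in Iio x, ∫⁻ z in Ioi (x - y), G y z ∂nu ∂nu) * f x =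
      ∫⁻ y, ∫⁻ z, k (x, y, z) ∂nu ∂nu := by
    intro x
    rw [← lintegral_indicator measurableSet_Iio, ← lintegral_mul_const]
    · apply lintegral_congr
      intro y
      by_cases hy : y < x
      · rw [indicator_of_mem (by exact hy), ← lintegral_indicator measurableSet_Ioi,
          ← lintegral_mul_const]
        · apply lintegral_congr
          intro z
          by_cases hz : x - y < z
          · rw [indicator_of_mem (by exact hz), hk, indicator_of_mem (by exact ⟨hy, hz⟩)]
          · rw [indicator_of_notMem (by exact hz), hk, indicator_of_notMem (fun h => hz h.2)]
            simp
        · exact (hG.comp (by fun_prop : Measurable (fun z : ℝ => (y, z)))).indicator measurableSet_Ioi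
      · rw [indicator_of_notMem (by exact hy)]
        have : ∀ z, k (x, y, z) = 0 := fun z => indicator_of_notMem (fun h => hy h.1) _
        simp [this]
    · apply Measurable.indicator _ measurableSet_Iio
      have : ∀ y, ∫⁻ z in Ioi (x - y), G y z ∂nu =
          ∫⁻ z, ({p : ℝ × ℝ | x - p.1 < p.2}.indicator (fun p => G p.1 p.2) (y, z)) ∂nu := by
        intro y
        rw [← lintegral_indicator measurableSet_Ioi]
        rfl
      simp_rw [this]
      apply Measurable.lintegral_prod_right'
        (f := fun p : ℝ × ℝ => {p : ℝ × ℝ | x - p.1 < p.2}.indicator (fun p => G p.1 p.2) p)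
      exact hG.indicator (measurableSet_lt (by fun_prop) (by fun_prop))
  simp_rw [h1]
  rw [lintegral_lintegral_swap]
  · apply lintegral_congr_ae
    filter_upwards [ae_nu_pos] with y hy
    rw [lintegral_lintegral_swap]
    · apply lintegral_congr_ae
      filter_upwards [ae_nu_pos] with z hz
      have h2 : ∀ x, k (x, y, z) = G y z * (Ioo y (y + z)).indicator f x := by
        intro x
        by_cases hx : x ∈ Ioo y (y + z)
        · rw [indicator_of_mem hx, hk, indicator_of_mem]
          exact ⟨hx.1, by have := hx.2; simp only; linarith⟩
        · rw [indicator_of_notMem hx, hk, indicator_of_notMem]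
          · simp
          · rintro ⟨h, h'⟩
            exact hx ⟨h, by simp only at h'; linarith⟩
      simp_rw [h2]
      rw [lintegral_const_mul _ (hf.indicator measurableSet_Ioo),
        lintegral_indicator measurableSet_Ioo, nu, Measure.restrict_restrict measurableSet_Ioo]
      congr 3
      apply inter_eq_left.2
      intro x hx
      exact hy.trans hx.1
    · exact (hkm.comp (by fun_prop : Measurable (fun p : ℝ × ℝ => (p.1, y, p.2)))).aemeasurable
  · have : Measurable (fun p : (ℝ × ℝ) × ℝ => k (p.1.1, p.1.2, p.2)) :=
      hkm.comp (by fun_prop)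
    exact this.lintegral_prod_right'.aemeasurable

lemma Good.test {α ε : ℝ} {w : ℝ → ℝ → ℝ} {φ : ℝ → ℝ} (hw : GW α w) (h : Good ε w φ)
    (f : ℝ → ℝ≥0∞) (hf : Measurable f) :
    ∫⁻ x, ENNReal.ofReal (x ^ 2 * φ x) * f x ∂nu =
      ∫⁻ y, ∫⁻ z, GG ε w φ y z * (∫⁻ x in Ioo y (y + z), f x) ∂nu ∂nu := by
  rw [← flux_test _ (GG_meas hw h.meas) f hf]
  apply lintegral_congr_ae
  filter_upwards [h.eqn] with x hx
  rw [hx]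

open MeasureTheory Real Set Filter
open scoped ENNReal

noncomputable def JJ (ε : ℝ) (w : ℝ → ℝ → ℝ) (φ : ℝ → ℝ) (x : ℝ) : ℝ≥0∞ :=
  ∫⁻ y in Iio x, ∫⁻ z in Ioi (x - y), GG ε w φ y z ∂nu ∂nu

noncomputable def HH (ε : ℝ) (w : ℝ → ℝ → ℝ) (φ : ℝ → ℝ) (a b : ℝ) : ℝ≥0∞ :=
  ∫⁻ y in Iio a, ∫⁻ z in Ioi b, GG ε w φ y z ∂nu ∂nu

lemma rpow_le_one_add {t α : ℝ} (ht : 0 ≤ t) (h0 : 0 ≤ α) (h1 : α ≤ 1) : t ^ α ≤ 1 + t := by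
  rcases le_total t 1 with h | h
  · have := Real.rpow_le_one ht h h0
    linarith
  · have := Real.rpow_le_rpow_of_exponent_le h h1
    rw [Real.rpow_one] at this
    linarith

section
variable {α ε : ℝ} {w : ℝ → ℝ → ℝ} {φ : ℝ → ℝ}

lemma strip_ne_top (hα : α ∈ Ioo (0:ℝ) 1) (hε : 0 < ε) (hw : GW α w) (hm : Measurable φ)
    (hnn : ∀ x, 0 ≤ φ x) (hmass : ∫⁻ x, ENNReal.ofReal (x * φ x) ∂nu ≠ ∞)
    {a' a b : ℝ} (ha' : 0 < a') (hb : 0 < b) :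
    ∫⁻ y in Ico a' a, ∫⁻ z in Ioi b, GG ε w φ y z ∂nu ∂nu ≠ ∞ := by
  set C : ℝ := 2 / b + ε * ((1 + |a| / b) / b + (1 / b + 1 / a')) with hC
  have hCnn : 0 ≤ C := by positivity
  have key : ∀ y ∈ Ico a' a, ∀ z ∈ Ioi b, GG ε w φ y z ≤
      ENNReal.ofReal C * (ENNReal.ofReal (y * φ y) * ENNReal.ofReal (z * φ z)) := by
    intro y hy z hz
    have hz' : b < z := hz
    have hy0 : 0 < y := ha'.trans_le hy.1
    have hz0 : 0 < z := hb.trans hz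
    rw [← ENNReal.ofReal_mul (mul_nonneg hy0.le (hnn y)), ← ENNReal.ofReal_mul hCnn]
    unfold GG
    apply ENNReal.ofReal_le_ofReal
    have e1 : (y / z) ^ α ≤ 1 + |a| / b := by
      refine (rpow_le_one_add (by positivity) hα.1.le hα.2.le).trans ?_
      have : y ≤ |a| := hy.2.le.trans (le_abs_self a)
      gcongr
    have e2 : (z / y) ^ α ≤ 1 + z / a' := by
      refine (rpow_le_one_add (by positivity) hα.1.le hα.2.le).trans ?_
      have := hy.1
      gcongr
    have hzb : 1 ≤ z / b := by rw [le_div_iff₀ hb]; linarith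
    have e3 : w y z ≤ ((1 + |a| / b) / b + (1 / b + 1 / a')) * z := by
      have := hw.le y z hy0 hz0
      have h4 : (1 + |a| / b) ≤ (1 + |a| / b) * (z / b) :=
        le_mul_of_one_le_right (by positivity) hzb
      have h5 : ((1 + |a| / b) / b + (1 / b + 1 / a')) * z = (1 + |a| / b) * (z / b) + (z / b + z / a') := by
        field_simp
      rw [h5]; linarith
    have e4 : 2 + ε * w y z ≤ C * z := by
      have : C * z = 2 * (z / b) + ε * (((1 + |a| / b) / b + (1 / b + 1 / a')) * z) := by
        rw [hC]; ring
      rw [this]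
      have := mul_le_mul_of_nonneg_left e3 hε.le
      linarith
    calc y * (2 + ε * w y z) * φ y * φ z = (2 + ε * w y z) * (y * φ y * φ z) := by ring
      _ ≤ (C * z) * (y * φ y * φ z) := by
        apply mul_le_mul_of_nonneg_right e4
        have := hnn y; have := hnn z; positivity
      _ = _ := by ring
  have hle : ∫⁻ y in Ico a' a, ∫⁻ z in Ioi b, GG ε w φ y z ∂nu ∂nu ≤
      ∫⁻ y, ∫⁻ z, ENNReal.ofReal C * (ENNReal.ofReal (y * φ y) * ENNReal.ofReal (z * φ z)) ∂nu ∂nu := by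
    calc _ ≤ ∫⁻ y in Ico a' a, ∫⁻ z in Ioi b, ENNReal.ofReal C * (ENNReal.ofReal (y * φ y) * ENNReal.ofReal (z * φ z)) ∂nu ∂nu := by
          apply setLIntegral_mono' measurableSet_Ico
          intro y hy
          apply setLIntegral_mono' measurableSet_Ioi
          intro z hz
          exact key y hy z hz
      _ ≤ _ := by
          refine (setLIntegral_le_lintegral _ _).trans ?_
          apply lintegral_mono
          intro y
          exact setLIntegral_le_lintegral _ _
  refine ne_top_of_le_ne_top ?_ hle
  have hmz : Measurable (fun z => ENNReal.ofReal (z * φ z)) := by fun_prop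
  simp_rw [lintegral_const_mul _ (hmz.const_mul _)]
  rw [lintegral_const_mul]
  · simp_rw [lintegral_const_mul _ hmz]
    rw [lintegral_mul_const _ hmz]
    exact ENNReal.mul_ne_top ENNReal.ofReal_ne_top (ENNReal.mul_ne_top hmass hmass)
  · simp_rw [lintegral_const_mul _ hmz]
    fun_prop

lemma HH_le_add {a' a b : ℝ} : HH ε w φ a b ≤ HH ε w φ a' b +
    ∫⁻ y in Ico a' a, ∫⁻ z in Ioi b, GG ε w φ y z ∂nu ∂nu := by
  unfold HH
  refine le_trans (lintegral_mono_set ?_) (lintegral_union_le _ (Iio a') (Ico a' a))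
  intro y hy
  rcases lt_or_ge y a' with h | h
  · exact Or.inl h
  · exact Or.inr ⟨h, hy⟩

lemma HH_diag_ne_top (hα : α ∈ Ioo (0:ℝ) 1) (hε : 0 < ε) (hw : GW α w) (hm : Measurable φ)
    (hnn : ∀ x, 0 ≤ φ x) (hmass : ∫⁻ x, ENNReal.ofReal (x * φ x) ∂nu ≠ ∞)
    (heq : ∀ᵐ x ∂nu, x ^ 2 * φ x = (JJ ε w φ x).toReal) {b : ℝ} (hb : 0 < b) :
    HH ε w φ b b ≠ ∞ := by
  intro htop
  have hx : ∀ᵐ x ∂nu, x < b → φ x = 0 := by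
    filter_upwards [heq, ae_nu_pos] with x hx hx0 hxb
    have h1 : HH ε w φ x b = ∞ := by
      by_contra hne
      exact (ENNReal.add_ne_top.2 ⟨hne, strip_ne_top hα hε hw hm hnn hmass (a := b) hx0 hb⟩)
        (top_le_iff.1 (htop ▸ HH_le_add))
    have h2 : HH ε w φ x b ≤ JJ ε w φ x := by
      unfold HH JJ
      apply lintegral_mono_ae
      filter_upwards [ae_restrict_of_ae ae_nu_pos] with y hy
      apply lintegral_mono_set
      intro z hz
      have : b < z := hz
      show x - y < z
      linarith
    rw [h1, top_le_iff] at h2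
    rw [h2] at hx
    simp only [ENNReal.toReal_top, mul_eq_zero] at hx
    rcases hx with h | h
    · exact absurd h (by positivity)
    · exact h
  have : HH ε w φ b b = 0 := by
    unfold HH
    rw [← lintegral_zero (μ := nu.restrict (Iio b))]
    apply lintegral_congr_ae
    filter_upwards [ae_restrict_of_ae hx, ae_restrict_mem measurableSet_Iio] with y hy hyb
    simp [GG, hy hyb]
  rw [this] at htop
  simp at htop

lemma HH_ne_top (hα : α ∈ Ioo (0:ℝ) 1) (hε : 0 < ε) (hw : GW α w) (hm : Measurable φ)
    (hnn : ∀ x, 0 ≤ φ x) (hmass : ∫⁻ x, ENNReal.ofReal (x * φ x) ∂nu ≠ ∞)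
    (heq : ∀ᵐ x ∂nu, x ^ 2 * φ x = (JJ ε w φ x).toReal) {a b : ℝ} (hb : 0 < b) :
    HH ε w φ a b ≠ ∞ :=
  ne_top_of_le_ne_top (ENNReal.add_ne_top.2 ⟨HH_diag_ne_top hα hε hw hm hnn hmass heq hb,
    strip_ne_top hα hε hw hm hnn hmass hb hb⟩) HH_le_add

lemma JJ_loc (hα : α ∈ Ioo (0:ℝ) 1) (hε : 0 < ε) (hw : GW α w) (hm : Measurable φ)
    (hnn : ∀ x, 0 ≤ φ x) (hmass : ∫⁻ x, ENNReal.ofReal (x * φ x) ∂nu ≠ ∞)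
    (heq : ∀ᵐ x ∂nu, x ^ 2 * φ x = (JJ ε w φ x).toReal) {a b : ℝ} (ha : 0 < a) (hab : a < b) :
    ∫⁻ x, JJ ε w φ x * (Ioo a b).indicator 1 x ∂nu ≠ ∞ := by
  have hb : 0 < b := ha.trans hab
  have hGm := GG_meas (ε := ε) hw hm
  have hft := flux_test (GG ε w φ) hGm ((Ioo a b).indicator 1)
    (measurable_one.indicator measurableSet_Ioo)
  change ∫⁻ x, JJ ε w φ x * (Ioo a b).indicator 1 x ∂nu = _ at hft
  rw [hft]
  set T : ℝ × ℝ → ℝ≥0∞ := (Iio b ×ˢ Ioi (a/2)).indicator (fun p => GG ε w φ p.1 p.2) with hT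
  have hTm : Measurable T := hGm.indicator (measurableSet_Iio.prod measurableSet_Ioi)
  have hTint : ∫⁻ y, ∫⁻ z, T (y, z) ∂nu ∂nu = HH ε w φ b (a/2) := by
    unfold HH
    rw [← lintegral_indicator measurableSet_Iio]
    apply lintegral_congr
    intro y
    by_cases hy : y ∈ Iio b
    · rw [indicator_of_mem hy, ← lintegral_indicator (μ := nu) (s := Ioi (a/2)) measurableSet_Ioi]
      apply lintegral_congr
      intro z
      by_cases hz : z ∈ Ioi (a/2)
      · rw [indicator_of_mem hz, hT, indicator_of_mem (by exact ⟨hy, hz⟩)]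
      · rw [indicator_of_notMem hz, hT, indicator_of_notMem (fun h => hz h.2)]
    · rw [indicator_of_notMem hy]
      have : ∀ z, T (y, z) = 0 := fun z => indicator_of_notMem (fun h => hy h.1) _
      simp [this]
  have key : ∀ y z : ℝ, 0 < y → 0 < z →
      GG ε w φ y z * (∫⁻ x in Ioo y (y + z), (Ioo a b).indicator 1 x) ≤
      ENNReal.ofReal b * (T (y, z) + T (z, y)) := by
    intro y z hy hz
    rw [lintegral_indicator_one measurableSet_Ioo, Measure.restrict_apply measurableSet_Ioo]
    by_cases hyb : y < b
    swap
    · have : Ioo a b ∩ Ioo y (y + z) = ∅ := by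
        ext x; simp only [mem_inter_iff, mem_Ioo, mem_empty_iff_false, iff_false]
        rintro ⟨⟨_, h1⟩, h2, _⟩; linarith
      simp [this]
    by_cases hyz : a < y + z
    swap
    · have : Ioo a b ∩ Ioo y (y + z) = ∅ := by
        ext x; simp only [mem_inter_iff, mem_Ioo, mem_empty_iff_false, iff_false]
        rintro ⟨⟨h1, _⟩, _, h2⟩; linarith
      simp [this]
    by_cases hza : a / 2 < z
    · have h1 : T (y, z) = GG ε w φ y z := indicator_of_mem (by exact ⟨hyb, hza⟩) _
      rw [h1, mul_comm]
      have h2 : volume (Ioo a b ∩ Ioo y (y + z)) ≤ ENNReal.ofReal b := by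
        refine (measure_mono inter_subset_left).trans ?_
        rw [Real.volume_Ioo]
        exact ENNReal.ofReal_le_ofReal (by linarith)
      exact mul_le_mul' h2 le_self_add
    · have h1 : T (z, y) = GG ε w φ z y :=
        indicator_of_mem (by exact ⟨by show z < b; linarith, by show a/2 < y; linarith⟩) _
      have h2 : volume (Ioo a b ∩ Ioo y (y + z)) ≤ ENNReal.ofReal z := by
        refine (measure_mono inter_subset_right).trans ?_
        rw [Real.volume_Ioo]
        exact ENNReal.ofReal_le_ofReal (by linarith)
      calc _ ≤ GG ε w φ y z * ENNReal.ofReal z := by gcongr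
        _ ≤ ENNReal.ofReal b * GG ε w φ z y := by
          unfold GG
          have := hw.nn y z
          have := hnn y
          have := hnn z
          rw [← ENNReal.ofReal_mul (by positivity), ← ENNReal.ofReal_mul hb.le]
          apply ENNReal.ofReal_le_ofReal
          rw [hw.symm z y]
          calc _ = y * (z * (2 + ε * w y z) * φ z * φ y) := by ring
            _ ≤ _ := mul_le_mul_of_nonneg_right hyb.le (by positivity)
        _ ≤ _ := by rw [h1]; gcongr; exact le_add_self
  refine ne_top_of_le_ne_top ?_ (lintegral_mono_ae (g := fun y => ∫⁻ z, ENNReal.ofReal b * (T (y, z) + T (z, y)) ∂nu) ?_)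
  · have m1 : ∀ y, Measurable (fun z => T (y, z)) := fun y => hTm.comp (by fun_prop)
    have m2 : ∀ y, Measurable (fun z => T (z, y)) := fun y => hTm.comp (by fun_prop)
    have m3 : Measurable (fun y => ∫⁻ z, T (y, z) ∂nu) := hTm.lintegral_prod_right'
    have m4 : Measurable (fun y => ∫⁻ z, T (z, y) ∂nu) :=
      (hTm.comp measurable_swap).lintegral_prod_right'
    have e1 : ∀ y, ∫⁻ z, ENNReal.ofReal b * (T (y, z) + T (z, y)) ∂nu =
        ENNReal.ofReal b * (∫⁻ z, T (y, z) ∂nu + ∫⁻ z, T (z, y) ∂nu) := by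
      intro y
      rw [lintegral_const_mul, lintegral_add_left (m1 y)]
      exact (m1 y).add (m2 y)
    simp_rw [e1]
    rw [lintegral_const_mul, lintegral_add_left m3]
    swap
    · exact m3.add m4
    have sw : ∫⁻ y, ∫⁻ z, T (z, y) ∂nu ∂nu = ∫⁻ y, ∫⁻ z, T (y, z) ∂nu ∂nu := by
      rw [lintegral_lintegral_swap]
      exact (hTm.comp measurable_swap).aemeasurable
    rw [sw, hTint]
    have := HH_ne_top hα hε hw hm hnn hmass heq (a := b) (half_pos ha)
    exact ENNReal.mul_ne_top ENNReal.ofReal_ne_top (ENNReal.add_ne_top.2 ⟨this, this⟩)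
  · filter_upwards [ae_nu_pos] with y hy
    apply lintegral_mono_ae
    filter_upwards [ae_nu_pos] with z hz
    exact key y z hy hz

lemma JJ_meas (hw : GW α w) (hm : Measurable φ) : Measurable (JJ ε w φ) := by
  unfold JJ
  set S : Set (ℝ × ℝ × ℝ) := {p | p.2.1 < p.1 ∧ p.1 - p.2.1 < p.2.2} with hS
  have hSm : MeasurableSet S := by
    have e1 : MeasurableSet {p : ℝ × ℝ × ℝ | p.2.1 < p.1} :=
      measurableSet_lt (by fun_prop) (by fun_prop)
    have e2 : MeasurableSet {p : ℝ × ℝ × ℝ | p.1 - p.2.1 < p.2.2} :=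
      measurableSet_lt (by fun_prop) (by fun_prop)
    exact e1.inter e2
  have hk : Measurable (S.indicator (fun p => GG ε w φ p.2.1 p.2.2)) := by
    apply Measurable.indicator _ hSm
    exact (GG_meas hw hm).comp (by fun_prop : Measurable (fun p : ℝ × ℝ × ℝ => (p.2.1, p.2.2)))
  have h1 : ∀ x, (∫⁻ y in Iio x, ∫⁻ z in Ioi (x - y), GG ε w φ y z ∂nu ∂nu) =
      ∫⁻ y, ∫⁻ z, (S.indicator (fun p => GG ε w φ p.2.1 p.2.2)) (x, y, z) ∂nu ∂nu := by
    intro x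
    rw [← lintegral_indicator measurableSet_Iio]
    apply lintegral_congr
    intro y
    by_cases hy : y < x
    · rw [indicator_of_mem (by exact hy), ← lintegral_indicator measurableSet_Ioi]
      apply lintegral_congr
      intro z
      by_cases hz : x - y < z
      · rw [indicator_of_mem (by exact hz), indicator_of_mem (by exact ⟨hy, hz⟩)]
      · rw [indicator_of_notMem (by exact hz), indicator_of_notMem (fun h => hz h.2)]
    · rw [indicator_of_notMem (by exact hy)]
      have : ∀ z, (S.indicator (fun p => GG ε w φ p.2.1 p.2.2)) (x, y, z) = 0 :=
        fun z => indicator_of_notMem (fun h => hy h.1) _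
      simp [this]
  simp_rw [h1]
  have : Measurable (fun p : (ℝ × ℝ) × ℝ =>
      (S.indicator (fun p => GG ε w φ p.2.1 p.2.2)) (p.1.1, p.1.2, p.2)) := hk.comp (by fun_prop)
  exact (this.lintegral_prod_right').lintegral_prod_right'

lemma JJ_ae_ne_top (hα : α ∈ Ioo (0:ℝ) 1) (hε : 0 < ε) (hw : GW α w) (hm : Measurable φ)
    (hnn : ∀ x, 0 ≤ φ x) (hmass : ∫⁻ x, ENNReal.ofReal (x * φ x) ∂nu ≠ ∞)
    (heq : ∀ᵐ x ∂nu, x ^ 2 * φ x = (JJ ε w φ x).toReal) :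
    ∀ᵐ x ∂nu, JJ ε w φ x ≠ ∞ := by
  have h : ∀ n : ℕ, ∀ᵐ x ∂nu, JJ ε w φ x * (Ioo (1 / ((n:ℝ) + 2)) ((n:ℝ) + 2)).indicator 1 x < ∞ := by
    intro n
    apply ae_lt_top
    · exact (JJ_meas hw hm).mul (measurable_one.indicator measurableSet_Ioo)
    · apply JJ_loc hα hε hw hm hnn hmass heq
      · positivity
      · rw [div_lt_iff₀ (by positivity)]
        have : (0:ℝ) ≤ n := Nat.cast_nonneg n
        nlinarith
  rw [← ae_all_iff] at h
  filter_upwards [h, ae_nu_pos] with x hx hx0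
  obtain ⟨n, hn⟩ := exists_nat_gt (max x (1 / x))
  have h1 := hx n
  have h2 : x ∈ Ioo (1 / ((n:ℝ) + 2)) ((n:ℝ) + 2) := by
    constructor
    · rw [div_lt_iff₀ (by positivity)]
      have := (le_max_right x (1/x)).trans_lt hn
      rw [div_lt_iff₀ hx0] at this
      nlinarith
    · have := (le_max_left x (1/x)).trans_lt hn
      linarith
  rw [indicator_of_mem h2] at h1
  simpa using h1.ne

end

open MeasureTheory Real Set Filter
open scoped ENNReal

noncomputable def cutW (W : ℝ → ℝ → ℝ) (x y : ℝ) : ℝ :=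
  (Ioi (0:ℝ) ×ˢ Ioi (0:ℝ)).indicator (fun p : ℝ × ℝ => W p.1 p.2) (x, y)

lemma cutW_of_pos {W : ℝ → ℝ → ℝ} {x y : ℝ} (hx : 0 < x) (hy : 0 < y) : cutW W x y = W x y :=
  indicator_of_mem (by exact ⟨hx, hy⟩) _

lemma cutW_of_not {W : ℝ → ℝ → ℝ} {x y : ℝ} (h : ¬ (0 < x ∧ 0 < y)) : cutW W x y = 0 := by
  unfold cutW
  rw [indicator_of_notMem]
  exact fun h' => h h'

lemma cutW_GW {α : ℝ} {W : ℝ → ℝ → ℝ} (hW : GoodW α W) : GW α (cutW W) := by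
  obtain ⟨hc, hs, -, hb⟩ := hW
  refine ⟨?_, ?_, ?_, ?_⟩
  · have hms : MeasurableSet (Ioi (0:ℝ) ×ˢ Ioi (0:ℝ)) := measurableSet_Ioi.prod measurableSet_Ioi
    have := hc.measurable_piecewise (g := fun _ => (0:ℝ)) continuousOn_const hms
    convert this using 1
    ext p
    unfold cutW
    simp only [indicator, piecewise]
  · intro x y
    by_cases h : 0 < x ∧ 0 < y
    · rw [cutW_of_pos h.1 h.2, cutW_of_pos h.2 h.1, hs x y h.1 h.2]
    · rw [cutW_of_not h, cutW_of_not (fun h' => h h'.symm)]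
  · intro x y
    by_cases h : 0 < x ∧ 0 < y
    · rw [cutW_of_pos h.1 h.2]; exact (hb x y h.1 h.2).1
    · rw [cutW_of_not h]
  · intro x y hx hy
    rw [cutW_of_pos hx hy]; exact (hb x y hx hy).2

lemma inner_ne_top {α ε : ℝ} {w : ℝ → ℝ → ℝ} {φ : ℝ → ℝ}
    (hα : α ∈ Ioo (0:ℝ) 1) (hε : 0 < ε) (hw : GW α w) (hm : Measurable φ)
    (hnn : ∀ x, 0 ≤ φ x) (hmass : ∫⁻ x, ENNReal.ofReal (x * φ x) ∂nu ≠ ∞)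
    {y b : ℝ} (hy : 0 < y) (hb : 0 < b) :
    ∫⁻ z in Ioi b, GG ε w φ y z ∂nu ≠ ∞ := by
  set C : ℝ := y * φ y * (2 / b + ε * ((1 + y / b) / b + (1 / b + 1 / y))) with hC
  have hCnn : 0 ≤ C := by have := hnn y; positivity
  have key : ∀ z ∈ Ioi b, GG ε w φ y z ≤
      ENNReal.ofReal C * (ENNReal.ofReal (z * φ z)) := by
    intro z hz
    have hz' : b < z := hz
    have hz0 : 0 < z := hb.trans hz
    rw [← ENNReal.ofReal_mul hCnn]
    unfold GG
    apply ENNReal.ofReal_le_ofReal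
    have e1 : (y / z) ^ α ≤ 1 + y / b := by
      refine (rpow_le_one_add (by positivity) hα.1.le hα.2.le).trans ?_
      gcongr
    have e2 : (z / y) ^ α ≤ 1 + z / y :=
      rpow_le_one_add (by positivity) hα.1.le hα.2.le
    have hzb : 1 ≤ z / b := by rw [le_div_iff₀ hb]; linarith
    have e3 : w y z ≤ ((1 + y / b) / b + (1 / b + 1 / y)) * z := by
      have := hw.le y z hy hz0
      have h4 : (1 + y / b) ≤ (1 + y / b) * (z / b) :=
        le_mul_of_one_le_right (by positivity) hzb
      have h5 : ((1 + y / b) / b + (1 / b + 1 / y)) * z = (1 + y / b) * (z / b) + (z / b + z / y) := by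
        field_simp
      rw [h5]; linarith
    have e4 : 2 + ε * w y z ≤ (2 / b + ε * ((1 + y / b) / b + (1 / b + 1 / y))) * z := by
      have : (2 / b + ε * ((1 + y / b) / b + (1 / b + 1 / y))) * z =
        2 * (z / b) + ε * (((1 + y / b) / b + (1 / b + 1 / y)) * z) := by ring
      rw [this]
      have := mul_le_mul_of_nonneg_left e3 hε.le
      linarith
    calc y * (2 + ε * w y z) * φ y * φ z = (2 + ε * w y z) * (y * φ y * φ z) := by ring
      _ ≤ ((2 / b + ε * ((1 + y / b) / b + (1 / b + 1 / y))) * z) * (y * φ y * φ z) := by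
        apply mul_le_mul_of_nonneg_right e4
        have := hnn y; have := hnn z; positivity
      _ = _ := by rw [hC]; ring
  have hmz : Measurable (fun z => ENNReal.ofReal (z * φ z)) := by fun_prop
  refine ne_top_of_le_ne_top ?_ ((setLIntegral_mono' measurableSet_Ioi key).trans
    (setLIntegral_le_lintegral _ _))
  rw [lintegral_const_mul _ hmz]
  exact ENNReal.mul_ne_top ENNReal.ofReal_ne_top hmass

lemma to_good {α ε : ℝ} {W : ℝ → ℝ → ℝ} {φ : ℝ → ℝ} (hα : α ∈ Ioo (0:ℝ) 1)
    (hW : GoodW α W) (hε : 0 < ε) (hφ : IsProfile (Kern ε W) φ) (hn : IsNormalised φ) :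
    ∃ φ', Good ε (cutW W) φ' ∧ φ' =ᵐ[nu] φ := by
  obtain ⟨hloc, hnn, hitg, heq⟩ := hφ
  have hw := cutW_GW hW
  have hae : AEStronglyMeasurable φ nu := hloc.aestronglyMeasurable
  set φ' : ℝ → ℝ := fun x => max (hae.mk φ x) 0 with hφ'
  have hm : Measurable φ' := (hae.stronglyMeasurable_mk.measurable).max measurable_const
  have hnn' : ∀ x, 0 ≤ φ' x := fun x => le_max_right _ _
  have hee : φ' =ᵐ[nu] φ := by
    filter_upwards [hae.ae_eq_mk, hnn] with x hx hx0
    simp only [hφ']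
    rw [← hx, max_eq_left hx0]
  have hmass : ∫⁻ x, ENNReal.ofReal (x * φ' x) ∂nu = 1 := by
    have h1 : ∫⁻ x, ENNReal.ofReal (x * φ' x) ∂nu = ∫⁻ x, ENNReal.ofReal (x * φ x) ∂nu := by
      apply lintegral_congr_ae
      filter_upwards [hee] with x hx
      rw [hx]
    rw [h1, ← ofReal_integral_eq_lintegral_ofReal hitg]
    · unfold IsNormalised at hn
      rw [hn, ENNReal.ofReal_one]
    · filter_upwards [hnn, ae_nu_pos] with x hx hx0
      exact mul_nonneg hx0.le hx
  have hmass' : ∫⁻ x, ENNReal.ofReal (x * φ' x) ∂nu ≠ ∞ := by rw [hmass]; simp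
  have heq' : ∀ᵐ x ∂nu, x ^ 2 * φ' x = (JJ ε (cutW W) φ' x).toReal := by
    filter_upwards [heq, hee, ae_nu_pos] with x hx hxe hx0
    rw [hxe, hx]
    have hset : nu.restrict (Iio x) = volume.restrict (Ioo 0 x) := by
      rw [nu, Measure.restrict_restrict measurableSet_Iio]
      congr 1
      ext t; simp only [mem_inter_iff, mem_Iio, mem_Ioi, mem_Ioo]; tauto
    unfold JJ
    rw [hset]
    have h1 : ∀ᵐ y ∂(volume.restrict (Ioo 0 x)),
        (∫ z in Ioi (x - y), y * Kern ε W y z * φ y * φ z) =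
        (∫⁻ z in Ioi (x - y), GG ε (cutW W) φ' y z ∂nu).toReal := by
      have hey : ∀ᵐ y ∂(volume.restrict (Ioo 0 x)), φ' y = φ y := by
        rw [← hset]; exact ae_restrict_of_ae hee
      filter_upwards [hey, ae_restrict_mem measurableSet_Ioo] with y hye hy
      have hs2 : nu.restrict (Ioi (x - y)) = volume.restrict (Ioi (x - y)) := by
        rw [nu, Measure.restrict_restrict measurableSet_Ioi]
        congr 1
        apply inter_eq_left.2
        intro z hz
        have h1 : x - y < z := hz
        have h2 := hy.2
        show 0 < z
        linarith
      have hez : ∀ᵐ z ∂(volume.restrict (Ioi (x - y))), φ' z = φ z := by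
        rw [← hs2]; exact ae_restrict_of_ae hee
      have h2 : (∫ z in Ioi (x - y), y * Kern ε W y z * φ y * φ z) =
          ∫ z in Ioi (x - y), y * (2 + ε * cutW W y z) * φ' y * φ' z := by
        apply integral_congr_ae
        filter_upwards [hez, ae_restrict_mem measurableSet_Ioi] with z hze hz
        have h1 : x - y < z := hz
        have h2 := hy.2
        rw [hze, hye, cutW_of_pos hy.1 (by linarith)]
        rfl
      rw [h2, hs2, integral_eq_lintegral_of_nonneg_ae]
      · rfl
      · refine Eventually.of_forall (fun z => ?_)
        have := hnn' y
        have := hnn' z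
        have := hw.nn y z
        have := hy.1
        show 0 ≤ y * (2 + ε * cutW W y z) * φ' y * φ' z
        positivity
      · have : Measurable (fun z => cutW W y z) := hw.meas.comp (by fun_prop : Measurable (fun z : ℝ => (y, z)))
        exact (by fun_prop : Measurable (fun z => y * (2 + ε * cutW W y z) * φ' y * φ' z)).aestronglyMeasurable
    rw [integral_congr_ae h1]
    have hmeas : Measurable (fun y => ∫⁻ z in Ioi (x - y), GG ε (cutW W) φ' y z ∂nu) := by
      have : ∀ y, ∫⁻ z in Ioi (x - y), GG ε (cutW W) φ' y z ∂nu =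
          ∫⁻ z, ({p : ℝ × ℝ | x - p.1 < p.2}.indicator (fun p => GG ε (cutW W) φ' p.1 p.2) (y, z)) ∂nu := by
        intro y
        rw [← lintegral_indicator (μ := nu) measurableSet_Ioi]
        rfl
      simp_rw [this]
      apply Measurable.lintegral_prod_right'
        (f := fun p : ℝ × ℝ => {p : ℝ × ℝ | x - p.1 < p.2}.indicator (fun p => GG ε (cutW W) φ' p.1 p.2) p)
      exact (GG_meas hw hm).indicator (measurableSet_lt (by fun_prop) (by fun_prop))
    rw [integral_toReal hmeas.aemeasurable]
    filter_upwards [ae_restrict_mem measurableSet_Ioo] with y hy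
    exact (inner_ne_top hα hε hw hm hnn' hmass' hy.1 (by linarith [hy.2])).lt_top
  refine ⟨φ', ⟨hm, hnn', hmass, ?_⟩, hee⟩
  filter_upwards [heq', JJ_ae_ne_top hα hε hw hm hnn' hmass' heq'] with x hx hx'
  rw [hx, ENNReal.ofReal_toReal hx']
  rfl

open MeasureTheory Real Set Filter
open scoped ENNReal Topology

noncomputable def DD (q y z : ℝ) : ℝ :=
  (1 - exp (-(q * y))) / y - (1 - exp (-(q * (y + z)))) / (y + z)

noncomputable def ff (q x : ℝ) : ℝ := (1 - (1 + q * x) * exp (-(q * x))) / x ^ 2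

lemma one_sub_bd {t : ℝ} (ht : 0 ≤ t) : 0 ≤ 1 - (1 + t) * exp (-t) ∧ 1 - (1 + t) * exp (-t) ≤ t ^ 2
    ∧ 1 - (1 + t) * exp (-t) ≤ 1 := by
  have h1 : 1 - t ≤ exp (-t) := by have := add_one_le_exp (-t); linarith
  have h2 : 1 + t ≤ exp t := by have := add_one_le_exp t; linarith
  have h3 : exp t * exp (-t) = 1 := by rw [← exp_add]; simp
  have h4 := exp_pos (-t)
  refine ⟨?_, ?_, ?_⟩
  · nlinarith
  · nlinarith
  · nlinarith

lemma ff_nn {q x : ℝ} (hq : 0 < q) (hx : 0 < x) : 0 ≤ ff q x := by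
  unfold ff
  exact div_nonneg (one_sub_bd (by positivity)).1 (by positivity)

lemma ff_le {q x : ℝ} (hq : 0 < q) (hx : 0 < x) : ff q x ≤ q ^ 2 ∧ ff q x ≤ 1 / x ^ 2 := by
  unfold ff
  obtain ⟨_, h2, h3⟩ := one_sub_bd (t := q * x) (by positivity)
  constructor
  · rw [div_le_iff₀ (by positivity)]; nlinarith
  · gcongr

lemma hasDerivAt_F {q x : ℝ} (hx0 : 0 < x) :
    HasDerivAt (fun x => -((1 - exp (-(q * x))) / x)) (ff q x) x := by
  have h1 : HasDerivAt (fun x : ℝ => exp (-(q * x))) (exp (-(q * x)) * (-(q * 1))) x :=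
    (((hasDerivAt_id x).const_mul q).neg).exp
  have h2 := ((h1.const_sub 1).div (hasDerivAt_id x) hx0.ne').neg
  refine HasDerivAt.congr_deriv h2 ?_
  unfold ff
  simp only [id]
  field_simp
  ring

lemma lint_ff {q y z : ℝ} (hq : 0 < q) (hy : 0 < y) (hz : 0 < z) :
    ∫⁻ x in Ioo y (y + z), ENNReal.ofReal (ff q x) = ENNReal.ofReal (DD q y z) := by
  have hcont : ContinuousOn (ff q) (Icc y (y + z)) := by
    unfold ff
    apply ContinuousOn.div (by fun_prop) (by fun_prop)
    intro x hx
    have : 0 < x := hy.trans_le hx.1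
    positivity
  have hitg : IntegrableOn (ff q) (Ioo y (y + z)) :=
    (hcont.integrableOn_Icc).mono_set Ioo_subset_Icc_self
  rw [← ofReal_integral_eq_lintegral_ofReal hitg]
  · congr 1
    rw [← integral_Ioc_eq_integral_Ioo, ← intervalIntegral.integral_of_le (by linarith)]
    have hd : ∀ x ∈ uIcc y (y + z), HasDerivAt (fun x => -((1 - exp (-(q * x))) / x)) (ff q x) x := by
      intro x hx
      rw [uIcc_of_le (by linarith)] at hx
      have hx0 : 0 < x := hy.trans_le hx.1
      exact hasDerivAt_F hx0
    rw [intervalIntegral.integral_eq_sub_of_hasDerivAt hd]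
    · unfold DD; ring
    · apply ContinuousOn.intervalIntegrable
      rwa [uIcc_of_le (by linarith)]
  · filter_upwards [ae_restrict_mem measurableSet_Ioo] with x hx
    exact ff_nn hq (hy.trans hx.1)

lemma DD_nn {q y z : ℝ} (hq : 0 < q) (hy : 0 < y) (hz : 0 < z) : 0 ≤ DD q y z := by
  have hmono : MonotoneOn (fun x => -((1 - exp (-(q * x))) / x)) (Icc y (y + z)) := by
    have hd : ∀ x, 0 < x → HasDerivAt (fun x => -((1 - exp (-(q * x))) / x)) (ff q x) x := by
      intro x hx0
      exact hasDerivAt_F hx0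
    apply monotoneOn_of_deriv_nonneg (convex_Icc _ _)
    · intro x hx
      exact (hd x (hy.trans_le hx.1)).continuousAt.continuousWithinAt
    · intro x hx
      rw [interior_Icc] at hx
      exact (hd x (hy.trans hx.1)).differentiableAt.differentiableWithinAt
    · intro x hx
      rw [interior_Icc] at hx
      rw [(hd x (hy.trans hx.1)).deriv]
      exact ff_nn hq (hy.trans hx.1)
  have := hmono (left_mem_Icc.2 (by linarith)) (right_mem_Icc.2 (by linarith)) (by linarith : y ≤ y + z)
  unfold DD
  simp only at this
  linarith

lemma DD_le_of {q y z c : ℝ} (hq : 0 < q) (hy : 0 < y) (hz : 0 < z) (hc : 0 ≤ c)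
    (h : ∀ x, y < x → ff q x ≤ c) : DD q y z ≤ c * z := by
  have h1 : ENNReal.ofReal (DD q y z) ≤ ENNReal.ofReal (c * z) := by
    rw [← lint_ff hq hy hz]
    calc _ ≤ ∫⁻ x in Ioo y (y + z), ENNReal.ofReal c := by
          apply setLIntegral_mono' measurableSet_Ioo
          intro x hx
          exact ENNReal.ofReal_le_ofReal (h x hx.1)
      _ = _ := by
          rw [setLIntegral_const, Real.volume_Ioo, ← ENNReal.ofReal_mul hc]
          congr 2; ring
  exact (ENNReal.ofReal_le_ofReal_iff (by positivity)).1 h1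

lemma DD_le1 {q y z : ℝ} (hq : 0 < q) (hy : 0 < y) (hz : 0 < z) : DD q y z ≤ q ^ 2 * z :=
  DD_le_of hq hy hz (by positivity) (fun x hx => (ff_le hq (hy.trans hx)).1)

lemma DD_le2 {q y z : ℝ} (hq : 0 < q) (hy : 0 < y) (hz : 0 < z) : DD q y z ≤ 1 / y ^ 2 * z :=
  DD_le_of hq hy hz (by positivity) (fun x hx => (ff_le hq (hy.trans hx)).2.trans (by gcongr))

lemma DD_le3 {q y z : ℝ} (hq : 0 < q) (hy : 0 < y) (hz : 0 < z) : DD q y z ≤ q := by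
  unfold DD
  have h1 : (1 - exp (-(q * y))) / y ≤ q := by
    rw [div_le_iff₀ hy]
    have := add_one_le_exp (-(q * y)); linarith
  have h2 : 0 ≤ (1 - exp (-(q * (y + z)))) / (y + z) := by
    apply div_nonneg _ (by positivity)
    have : exp (-(q * (y + z))) ≤ 1 := by
      apply exp_le_one_iff.2
      have : 0 < q * (y + z) := by positivity
      linarith
    linarith
  linarith

lemma DD_le4 {α q y z : ℝ} (hα : α ∈ Ioo (0:ℝ) 1) (hq : 0 < q) (hy : 0 < y) (hz : 0 < z) :
    DD q y z ≤ q * (q * z) ^ (1 - α) := by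
  have h1 := DD_le1 hq hy hz
  have h3 := DD_le3 hq hy hz
  have hqz : 0 < q * z := by positivity
  rcases le_total (q * z) 1 with h | h
  · have : (q * z) ≤ (q * z) ^ (1 - α) := by
      conv_lhs => rw [← Real.rpow_one (q * z)]
      exact Real.rpow_le_rpow_of_exponent_ge hqz h (by linarith [hα.1])
    nlinarith
  · have : 1 ≤ (q * z) ^ (1 - α) := Real.one_le_rpow h (by linarith [hα.2])
    nlinarith

lemma DD_le5 {α q y z : ℝ} (hα : α ∈ Ioo (0:ℝ) 1) (hq : 0 < q) (hy : 0 < y) (hz : 0 < z) :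
    DD q y z ≤ z * q ^ 2 * (q * y) ^ (-α) := by
  have hqy : 0 < q * y := by positivity
  rcases le_total (q * y) 1 with h | h
  · have h1 := DD_le1 hq hy hz
    have : 1 ≤ (q * y) ^ (-α) := Real.one_le_rpow_of_pos_of_le_one_of_nonpos hqy h (by linarith [hα.1])
    calc _ ≤ q ^ 2 * z := h1
      _ = z * q ^ 2 * 1 := by ring
      _ ≤ _ := by gcongr
  · have h2 := DD_le2 hq hy hz
    have : (q * y) ^ (-2:ℝ) ≤ (q * y) ^ (-α) :=
      Real.rpow_le_rpow_of_exponent_le h (by linarith [hα.2])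
    have e : (q * y) ^ (-2:ℝ) = 1 / (q * y) ^ 2 := by
      rw [Real.rpow_neg hqy.le]; norm_num
    calc _ ≤ 1 / y ^ 2 * z := h2
      _ = z * q ^ 2 * (q * y) ^ (-2:ℝ) := by rw [e]; field_simp
      _ ≤ _ := by gcongr

lemma wDD_le {α q y z : ℝ} {w : ℝ → ℝ → ℝ} (hw : GW α w) (hα : α ∈ Ioo (0:ℝ) 1)
    (hq : 0 < q) (hy : 0 < y) (hz : 0 < z) :
    y * w y z * DD q y z ≤ q ^ (2 - α) * (y ^ (1 - α) * z + y * z ^ (1 - α)) := by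
  have h0 := DD_nn hq hy hz
  have hq2 : q ^ (2 - α) = q * q ^ (1 - α) := by
    rw [show 2 - α = 1 + (1 - α) by ring, Real.rpow_add hq, Real.rpow_one]
  have hy1 : ∀ t : ℝ, 0 < t → t ^ (1 - α) = t * (t ^ α)⁻¹ := by
    intro t ht
    rw [Real.rpow_sub ht, Real.rpow_one]; rfl
  have hya := Real.rpow_pos_of_pos hy α
  have hza := Real.rpow_pos_of_pos hz α
  have hqa := Real.rpow_pos_of_pos hq α
  calc y * w y z * DD q y z ≤ y * ((y / z) ^ α + (z / y) ^ α) * DD q y z := by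
        gcongr; exact hw.le y z hy hz
    _ = y * (y / z) ^ α * DD q y z + y * (z / y) ^ α * DD q y z := by ring
    _ ≤ y * (y / z) ^ α * (z * q ^ 2 * (q * y) ^ (-α)) + y * (z / y) ^ α * (q * (q * z) ^ (1 - α)) := by
        gcongr
        · exact DD_le5 hα hq hy hz
        · exact DD_le4 hα hq hy hz
    _ = _ := by
        rw [hq2, Real.mul_rpow hq.le hz.le, Real.rpow_neg (by positivity), Real.mul_rpow hq.le hy.le,
          Real.div_rpow hy.le hz.le, Real.div_rpow hz.le hy.le, hy1 q hq, hy1 z hz, hy1 y hy]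
        field_simp
        ring

lemma ode_nonneg (H H' : ℝ → ℝ) (hd : ∀ q > 0, HasDerivAt H (H' q) q)
    (hpos : ∀ q > 0, H q < 0 → 0 ≤ H' q)
    (hlim : ∀ c < 0, ∀ᶠ q in 𝓝[>] (0:ℝ), c < H q) : ∀ q > 0, 0 ≤ H q := by
  intro q1 hq1
  by_contra hneg
  push Not at hneg
  have hc : H q1 / 2 < 0 := by linarith
  obtain ⟨a, ha, haq, hac⟩ : ∃ a, 0 < a ∧ a < q1 ∧ H q1 / 2 < H a := by
    have h1 := hlim _ hc
    have h2 : ∀ᶠ q in 𝓝[>] (0:ℝ), q ∈ Ioo 0 q1 := Ioo_mem_nhdsGT hq1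
    obtain ⟨a, h3, h4⟩ := (h1.and h2).exists
    exact ⟨a, h4.1, h4.2, h3⟩
  have hcont : ContinuousOn H (Icc a q1) := fun x hx =>
    (hd x (ha.trans_le hx.1)).continuousAt.continuousWithinAt
  set Z : Set ℝ := Icc a q1 ∩ H ⁻¹' (Ici (H q1 / 2)) with hZ
  have hZc : IsCompact Z := by
    apply IsCompact.of_isClosed_subset isCompact_Icc _ inter_subset_left
    exact hcont.preimage_isClosed_of_isClosed isClosed_Icc isClosed_Ici
  have hZn : Z.Nonempty := ⟨a, ⟨le_rfl, haq.le⟩, hac.le⟩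
  obtain ⟨b, hbZ, hb⟩ := hZc.exists_isGreatest hZn
  have hb1 : H q1 / 2 ≤ H b := hbZ.2
  have hba : a ≤ b := hbZ.1.1
  have hbq : b ≤ q1 := hbZ.1.2
  have hlt : ∀ x ∈ Ioo b q1, H x < 0 := by
    intro x hx
    by_contra h
    push Not at h
    have : x ∈ Z := ⟨⟨by linarith [hx.1], hx.2.le⟩, by show H q1 / 2 ≤ H x; linarith⟩
    have := hb this
    linarith [hx.1]
  have hmono : MonotoneOn H (Icc b q1) := by
    apply monotoneOn_of_deriv_nonneg (convex_Icc _ _)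
    · exact hcont.mono (Icc_subset_Icc_left hba)
    · intro x hx
      rw [interior_Icc] at hx
      exact (hd x (by linarith [hx.1])).differentiableAt.differentiableWithinAt
    · intro x hx
      rw [interior_Icc] at hx
      rw [(hd x (by linarith [hx.1])).deriv]
      exact hpos x (by linarith [hx.1]) (hlt x hx)
  have := hmono (left_mem_Icc.2 hbq) (right_mem_Icc.2 hbq) hbq
  linarith

/-- product of lower integrals -/
lemma lint_prod (g h : ℝ → ℝ) (hg : Measurable g) (hh : Measurable h) (c : ℝ) (hc : 0 ≤ c)
    (hgn : ∀ y, 0 < y → 0 ≤ g y) :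
    ∫⁻ y, ∫⁻ z, ENNReal.ofReal (c * (g y * h z)) ∂nu ∂nu =
      ENNReal.ofReal c * ((∫⁻ y, ENNReal.ofReal (g y) ∂nu) * ∫⁻ z, ENNReal.ofReal (h z) ∂nu) := by
  have h1 : ∀ᵐ y ∂nu, ∫⁻ z, ENNReal.ofReal (c * (g y * h z)) ∂nu =
      ENNReal.ofReal c * (ENNReal.ofReal (g y) * ∫⁻ z, ENNReal.ofReal (h z) ∂nu) := by
    filter_upwards [ae_nu_pos] with y hy
    simp_rw [ENNReal.ofReal_mul hc, ENNReal.ofReal_mul (hgn y hy)]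
    rw [lintegral_const_mul _ (by fun_prop), lintegral_const_mul _ (by fun_prop)]
  rw [lintegral_congr_ae h1, lintegral_const_mul _ (by fun_prop), lintegral_mul_const _ (by fun_prop)]

open MeasureTheory Real Set Filter
open scoped ENNReal Topology

noncomputable def uu (φ : ℝ → ℝ) (q : ℝ) : ℝ := ∫ x, (1 - exp (-(q * x))) * φ x ∂nu
noncomputable def vv (φ : ℝ → ℝ) (q : ℝ) : ℝ := ∫ x, x * exp (-(q * x)) * φ x ∂nu
noncomputable def II (ε : ℝ) (w : ℝ → ℝ → ℝ) (φ : ℝ → ℝ) (q : ℝ) : ℝ≥0∞ :=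
  ∫⁻ y, ∫⁻ z, ENNReal.ofReal (ε * (y * w y z * DD q y z) * φ y * φ z) ∂nu ∂nu

lemma one_sub_exp_nn {t : ℝ} (ht : 0 ≤ t) : 0 ≤ 1 - exp (-t) := by
  have : exp (-t) ≤ 1 := exp_le_one_iff.2 (by linarith)
  linarith

lemma one_sub_exp_le (t : ℝ) : 1 - exp (-t) ≤ t := by
  have := add_one_le_exp (-t); linarith

section
variable {α ε : ℝ} {w : ℝ → ℝ → ℝ} {φ : ℝ → ℝ}

lemma Good.int1 (h : Good ε w φ) : Integrable (fun x => x * φ x) nu := by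
  have hm := h.meas
  refine ⟨(by fun_prop : Measurable (fun x => x * φ x)).aestronglyMeasurable, ?_⟩
  rw [hasFiniteIntegral_iff_ofReal]
  · rw [h.mass]; simp
  · filter_upwards [ae_nu_pos] with x hx
    exact mul_nonneg hx.le (h.nn x)

lemma Good.intu (h : Good ε w φ) {q : ℝ} (hq : 0 < q) :
    Integrable (fun x => (1 - exp (-(q * x))) * φ x) nu := by
  have hm := h.meas
  refine (h.int1.const_mul q).mono'
    (by fun_prop : Measurable (fun x => (1 - exp (-(q * x))) * φ x)).aestronglyMeasurable ?_
  filter_upwards [ae_nu_pos] with x hx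
  rw [Real.norm_of_nonneg (mul_nonneg (one_sub_exp_nn (by positivity)) (h.nn x)), ← mul_assoc]
  exact mul_le_mul_of_nonneg_right (one_sub_exp_le _) (h.nn x)

lemma Good.intv (h : Good ε w φ) {q : ℝ} (hq : 0 < q) :
    Integrable (fun x => x * exp (-(q * x)) * φ x) nu := by
  have hm := h.meas
  refine h.int1.mono'
    (by fun_prop : Measurable (fun x => x * exp (-(q * x)) * φ x)).aestronglyMeasurable ?_
  filter_upwards [ae_nu_pos] with x hx
  have := h.nn x
  rw [Real.norm_of_nonneg (by positivity)]
  have : exp (-(q * x)) ≤ 1 := by have := one_sub_exp_nn (t := q * x) (by positivity); linarith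
  calc _ ≤ x * 1 * φ x := by gcongr
    _ = _ := by ring

lemma Good.uv (hα : α ∈ Ioo (0:ℝ) 1) (hε : 0 < ε) (hw : GW α w) (h : Good ε w φ) {q : ℝ} (hq : 0 < q) :
    II ε w φ q ≠ ∞ ∧ uu φ q - q * vv φ q = uu φ q ^ 2 + (II ε w φ q).toReal := by
  have hm := h.meas
  have hwm := hw.meas
  have hDm : Measurable (fun p : ℝ × ℝ => DD q p.1 p.2) := by unfold DD; fun_prop
  have hfm : Measurable (fun x => ENNReal.ofReal (ff q x)) := by unfold ff; fun_prop
  have ht := h.test hw _ hfm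
  have hL : ∫⁻ x, ENNReal.ofReal (x ^ 2 * φ x) * ENNReal.ofReal (ff q x) ∂nu =
      ENNReal.ofReal (uu φ q - q * vv φ q) := by
    have hsub : Integrable (fun a => (1 - exp (-(q * a))) * φ a - q * (a * exp (-(q * a)) * φ a)) nu :=
      (h.intu hq).sub ((h.intv hq).const_mul q)
    unfold uu vv
    rw [← integral_const_mul, ← integral_sub (h.intu hq) ((h.intv hq).const_mul q),
      ofReal_integral_eq_lintegral_ofReal hsub]
    · apply lintegral_congr_ae
      filter_upwards [ae_nu_pos] with x hx
      rw [← ENNReal.ofReal_mul (mul_nonneg (by positivity) (h.nn x))]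
      congr 1
      unfold ff
      field_simp
      ring
    · filter_upwards [ae_nu_pos] with x hx
      have := (one_sub_bd (t := q * x) (by positivity)).1
      have := mul_nonneg this (h.nn x)
      show (0:ℝ) ≤ (1 - exp (-(q * x))) * φ x - q * (x * exp (-(q * x)) * φ x)
      linarith
  set P : ℝ → ℝ → ℝ≥0∞ := fun y z => ENNReal.ofReal (y * DD q y z * φ y * φ z) with hP
  have hPm : Measurable (fun p : ℝ × ℝ => P p.1 p.2) := by simp only [hP]; fun_prop
  have hPm1 : ∀ y, Measurable (fun z => P y z) := fun y => hPm.comp (by fun_prop : Measurable (fun z : ℝ => (y, z)))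
  have hPm2 : ∀ y, Measurable (fun z => P z y) := fun y => hPm.comp (by fun_prop : Measurable (fun z : ℝ => (z, y)))
  have hPi1 : Measurable (fun y => ∫⁻ z, P y z ∂nu) := hPm.lintegral_prod_right'
  have hR : ∫⁻ y, ∫⁻ z, GG ε w φ y z * (∫⁻ x in Ioo y (y + z), ENNReal.ofReal (ff q x)) ∂nu ∂nu =
      ENNReal.ofReal (uu φ q ^ 2) + II ε w φ q := by
    have h1 : ∀ᵐ y ∂nu, ∫⁻ z, GG ε w φ y z * (∫⁻ x in Ioo y (y + z), ENNReal.ofReal (ff q x)) ∂nu =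
        ∫⁻ z, P y z ∂nu + (∫⁻ z, P y z ∂nu + ∫⁻ z, ENNReal.ofReal (ε * (y * w y z * DD q y z) * φ y * φ z) ∂nu) := by
      filter_upwards [ae_nu_pos] with y hy
      rw [← lintegral_add_left (hPm1 y), ← lintegral_add_left (hPm1 y)]
      apply lintegral_congr_ae
      filter_upwards [ae_nu_pos] with z hz
      rw [lint_ff hq hy hz]
      have a1 := DD_nn hq hy hz
      have a2 := h.nn y
      have a3 := h.nn z
      have a4 := hw.nn y z
      unfold GG
      simp only [hP]
      rw [← ENNReal.ofReal_mul (by positivity), ← ENNReal.ofReal_add (by positivity) (by positivity),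
        ← ENNReal.ofReal_add (by positivity) (by positivity)]
      congr 1
      ring
    rw [lintegral_congr_ae h1, lintegral_add_left hPi1, lintegral_add_left hPi1, ← add_assoc]
    unfold II
    congr 1
    have h2 : ∫⁻ y, ∫⁻ z, P y z ∂nu ∂nu = ∫⁻ y, ∫⁻ z, P z y ∂nu ∂nu :=
      lintegral_lintegral_swap hPm.aemeasurable
    nth_rewrite 2 [h2]
    rw [← lintegral_add_left hPi1]
    have h3 : ∀ᵐ y ∂nu, ∫⁻ z, P y z ∂nu + ∫⁻ z, P z y ∂nu = ∫⁻ z, ENNReal.ofReal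
        (1 * (((1 - exp (-(q * y))) * φ y) * ((1 - exp (-(q * z))) * φ z))) ∂nu := by
      filter_upwards [ae_nu_pos] with y hy
      rw [← lintegral_add_left (hPm1 y)]
      apply lintegral_congr_ae
      filter_upwards [ae_nu_pos] with z hz
      have a1 := DD_nn hq hy hz
      have a1' := DD_nn hq hz hy
      have a2 := h.nn y
      have a3 := h.nn z
      simp only [hP]
      rw [← ENNReal.ofReal_add (by positivity) (by positivity)]
      congr 1
      have e1 : exp (-(q * (y + z))) = exp (-(q * y)) * exp (-(q * z)) := by
        rw [← exp_add]; congr 1; ring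
      have e2 : exp (-(q * (z + y))) = exp (-(q * y)) * exp (-(q * z)) := by
        rw [← exp_add]; congr 1; ring
      have e3 : y * DD q y z + z * DD q z y = (1 - exp (-(q * y))) * (1 - exp (-(q * z))) := by
        unfold DD
        rw [e1, e2, add_comm z y]
        field_simp
        ring
      linear_combination (φ y * φ z) * e3
    rw [lintegral_congr_ae h3, lint_prod (fun y => (1 - exp (-(q * y))) * φ y) (fun y => (1 - exp (-(q * y))) * φ y)
      (by fun_prop) (by fun_prop) 1 zero_le_one]
    · rw [← ofReal_integral_eq_lintegral_ofReal (h.intu hq)]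
      · change ENNReal.ofReal 1 * (ENNReal.ofReal (uu φ q) * ENNReal.ofReal (uu φ q)) = _
        have hu : 0 ≤ uu φ q := by
          apply integral_nonneg_of_ae
          filter_upwards [ae_nu_pos] with x hx
          exact mul_nonneg (one_sub_exp_nn (by positivity)) (h.nn x)
        rw [← ENNReal.ofReal_mul hu, ENNReal.ofReal_one, one_mul, sq]
      · filter_upwards [ae_nu_pos] with x hx
        exact mul_nonneg (one_sub_exp_nn (by positivity)) (h.nn x)
    · intro y hy
      exact mul_nonneg (one_sub_exp_nn (by positivity)) (h.nn y)
  rw [hL, hR] at ht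
  have hfin : II ε w φ q ≠ ∞ := by
    intro htop
    rw [htop, add_top] at ht
    exact ENNReal.ofReal_ne_top ht
  refine ⟨hfin, ?_⟩
  have hLn : 0 ≤ uu φ q - q * vv φ q := by
    unfold uu vv
    rw [← integral_const_mul, ← integral_sub (h.intu hq) ((h.intv hq).const_mul q)]
    apply integral_nonneg_of_ae
    filter_upwards [ae_nu_pos] with x hx
    have := (one_sub_bd (t := q * x) (by positivity)).1
    have := mul_nonneg this (h.nn x)
    show (0:ℝ) ≤ (1 - exp (-(q * x))) * φ x - q * (x * exp (-(q * x)) * φ x)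
    linarith
  have := congrArg ENNReal.toReal ht
  rwa [ENNReal.toReal_ofReal hLn, ENNReal.toReal_add ENNReal.ofReal_ne_top hfin,
    ENNReal.toReal_ofReal (sq_nonneg _)] at this

lemma Good.uu_nn (h : Good ε w φ) {q : ℝ} (hq : 0 < q) : 0 ≤ uu φ q := by
  apply integral_nonneg_of_ae
  filter_upwards [ae_nu_pos] with x hx
  exact mul_nonneg (one_sub_exp_nn (by positivity)) (h.nn x)

lemma Good.vv_nn (h : Good ε w φ) {q : ℝ} : 0 ≤ vv φ q := by
  apply integral_nonneg_of_ae
  filter_upwards [ae_nu_pos] with x hx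
  have := h.nn x
  show 0 ≤ x * exp (-(q * x)) * φ x
  positivity

lemma Good.uu_le_one (hα : α ∈ Ioo (0:ℝ) 1) (hε : 0 < ε) (hw : GW α w) (h : Good ε w φ)
    {q : ℝ} (hq : 0 < q) : uu φ q ≤ 1 ∧ q * vv φ q ≤ 1 / 4 := by
  have h1 := (h.uv hα hε hw hq).2
  have h2 := h.uu_nn hq
  have h3 : 0 ≤ q * vv φ q := mul_nonneg hq.le h.vv_nn
  have h4 : 0 ≤ (II ε w φ q).toReal := ENNReal.toReal_nonneg
  constructor
  · by_contra hc
    push Not at hc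
    nlinarith
  · nlinarith [sq_nonneg (uu φ q - 1 / 2)]

lemma Good.mom0 (hα : α ∈ Ioo (0:ℝ) 1) (hε : 0 < ε) (hw : GW α w) (h : Good ε w φ) :
    ∫⁻ x, ENNReal.ofReal (φ x) ∂nu ≤ 1 := by
  have hm := h.meas
  have hlim : Tendsto (fun n : ℕ => ∫⁻ x, ENNReal.ofReal ((1 - exp (-(((n:ℝ) + 1) * x))) * φ x) ∂nu)
      atTop (𝓝 (∫⁻ x, ENNReal.ofReal (φ x) ∂nu)) := by
    apply lintegral_tendsto_of_tendsto_of_monotone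
    · intro n
      exact (by fun_prop : Measurable _).aemeasurable
    · filter_upwards [ae_nu_pos] with x hx
      intro n m hnm
      apply ENNReal.ofReal_le_ofReal
      apply mul_le_mul_of_nonneg_right _ (h.nn x)
      have : (n:ℝ) ≤ m := by exact_mod_cast hnm
      have : exp (-(((m:ℝ) + 1) * x)) ≤ exp (-(((n:ℝ) + 1) * x)) := by
        apply exp_le_exp.2
        nlinarith
      linarith
    · filter_upwards [ae_nu_pos] with x hx
      apply (ENNReal.continuous_ofReal.tendsto _).comp
      have h1 : Tendsto (fun n : ℕ => -(((n:ℝ) + 1) * x)) atTop atBot := by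
        apply tendsto_neg_atTop_atBot.comp
        apply Tendsto.atTop_mul_const hx
        exact tendsto_atTop_add_const_right _ _ tendsto_natCast_atTop_atTop
      have h2 := (((tendsto_exp_atBot.comp h1).const_sub 1).mul_const (φ x))
      simpa using h2
  refine le_of_tendsto' hlim (fun n => ?_)
  have hq : (0:ℝ) < (n:ℝ) + 1 := by positivity
  rw [← ofReal_integral_eq_lintegral_ofReal (h.intu hq)]
  · rw [← ENNReal.ofReal_one]
    exact ENNReal.ofReal_le_ofReal (h.uu_le_one hα hε hw hq).1
  · filter_upwards [ae_nu_pos] with x hx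
    exact mul_nonneg (one_sub_exp_nn (by positivity)) (h.nn x)

/-- first moment on `(0,x)` -/
noncomputable def mm (φ : ℝ → ℝ) (x : ℝ) : ℝ := ∫ y in Ioo 0 x, y * φ y

lemma Good.mm_le (hα : α ∈ Ioo (0:ℝ) 1) (hε : 0 < ε) (hw : GW α w) (h : Good ε w φ)
    {x : ℝ} (hx : 0 < x) : mm φ x ≤ x := by
  have hq : 0 < 1 / x := by positivity
  have h1 := (h.uu_le_one hα hε hw hq).2
  have h2 : mm φ x ≤ exp 1 * vv φ (1 / x) := by
    unfold mm vv
    rw [← integral_const_mul]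
    calc ∫ y in Ioo 0 x, y * φ y ≤ ∫ y in Ioo 0 x, exp 1 * (y * exp (-(1 / x * y)) * φ y) := by
          apply setIntegral_mono_on
          · exact h.int1.mono_measure (Measure.restrict_mono Ioo_subset_Ioi_self le_rfl)
          · exact ((h.intv hq).const_mul _).mono_measure (Measure.restrict_mono Ioo_subset_Ioi_self le_rfl)
          · exact measurableSet_Ioo
          · intro y hy
            have e1 : 1 ≤ exp 1 * exp (-(1 / x * y)) := by
              rw [← exp_add]
              apply one_le_exp
              have : 1 / x * y ≤ 1 := by
                rw [div_mul_eq_mul_div, one_mul, div_le_one hx]; exact hy.2.le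
              linarith
            have := h.nn y
            have := hy.1
            calc y * φ y = 1 * (y * φ y) := by ring
              _ ≤ (exp 1 * exp (-(1 / x * y))) * (y * φ y) := by gcongr
              _ = _ := by ring
      _ ≤ _ := by
          apply setIntegral_mono_set
          · exact ((h.intv hq).const_mul _)
          · filter_upwards [ae_nu_pos] with y hy
            have := h.nn y
            show 0 ≤ exp 1 * (y * exp (-(1 / x * y)) * φ y)
            positivity
          · exact Ioo_subset_Ioi_self.eventuallyLE
  have h3 : vv φ (1 / x) ≤ x / 4 := by
    have : vv φ (1 / x) = x * (1 / x * vv φ (1 / x)) := by field_simp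
    rw [this]; nlinarith
  have h4 : exp 1 ≤ 4 := by have := exp_one_lt_d9; linarith
  have h5 : 0 ≤ vv φ (1 / x) := h.vv_nn
  nlinarith

end

open MeasureTheory Real Set Filter
open scoped ENNReal Topology

/-- moments -/
noncomputable def Mom (φ : ℝ → ℝ) (r : ℝ) : ℝ≥0∞ := ∫⁻ x, ENNReal.ofReal (x ^ r * φ x) ∂nu

section
variable {α ε : ℝ} {w : ℝ → ℝ → ℝ} {φ : ℝ → ℝ}

lemma Good.mom1 (h : Good ε w φ) : Mom φ 1 = 1 := by
  unfold Mom
  simp_rw [Real.rpow_one]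
  exact h.mass

lemma Good.mom_le (hα : α ∈ Ioo (0:ℝ) 1) (hε : 0 < ε) (hw : GW α w) (h : Good ε w φ)
    {r : ℝ} (h0 : 0 ≤ r) (h1 : r ≤ 1) : Mom φ r ≤ 2 := by
  have hm := h.meas
  calc Mom φ r ≤ ∫⁻ x, (ENNReal.ofReal (φ x) + ENNReal.ofReal (x * φ x)) ∂nu := by
        apply lintegral_mono_ae
        filter_upwards [ae_nu_pos] with x hx
        have := h.nn x
        rw [← ENNReal.ofReal_add (by positivity) (by positivity)]
        apply ENNReal.ofReal_le_ofReal
        have := mul_le_mul_of_nonneg_right (rpow_le_one_add hx.le h0 h1) (h.nn x)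
        linarith
    _ ≤ 1 + 1 := by
        rw [lintegral_add_left (by fun_prop), h.mass]
        gcongr
        exact h.mom0 hα hε hw
    _ = 2 := by norm_num

lemma Good.II_le (hα : α ∈ Ioo (0:ℝ) 1) (hε : 0 < ε) (hw : GW α w) (h : Good ε w φ)
    {q : ℝ} (hq : 0 < q) : (II ε w φ q).toReal ≤ 4 * ε * q ^ (2 - α) := by
  have hm := h.meas
  have hqa := Real.rpow_pos_of_pos hq (2 - α)
  apply ENNReal.toReal_le_of_le_ofReal (by positivity)
  unfold II
  set c := ε * q ^ (2 - α) with hc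
  have hcn : 0 ≤ c := by positivity
  have hle : ∫⁻ y, ∫⁻ z, ENNReal.ofReal (ε * (y * w y z * DD q y z) * φ y * φ z) ∂nu ∂nu ≤
      ∫⁻ y, (∫⁻ z, ENNReal.ofReal (c * ((y ^ (1 - α) * φ y) * (z * φ z))) ∂nu +
        ∫⁻ z, ENNReal.ofReal (c * ((y * φ y) * (z ^ (1 - α) * φ z))) ∂nu) ∂nu := by
    apply lintegral_mono_ae
    filter_upwards [ae_nu_pos] with y hy
    rw [← lintegral_add_left (by fun_prop)]
    apply lintegral_mono_ae
    filter_upwards [ae_nu_pos] with z hz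
    have a2 := h.nn y
    have a3 := h.nn z
    rw [← ENNReal.ofReal_add (by positivity) (by positivity)]
    apply ENNReal.ofReal_le_ofReal
    have := wDD_le hw hα hq hy hz
    calc ε * (y * w y z * DD q y z) * φ y * φ z = (ε * (φ y * φ z)) * (y * w y z * DD q y z) := by ring
      _ ≤ (ε * (φ y * φ z)) * (q ^ (2 - α) * (y ^ (1 - α) * z + y * z ^ (1 - α))) := by gcongr
      _ = _ := by rw [hc]; ring
  refine hle.trans ?_
  rw [lintegral_add_left, lint_prod (fun y => y ^ (1 - α) * φ y) (fun z => z * φ z) (by fun_prop) (by fun_prop) c hcn,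
    lint_prod (fun z => z * φ z) (fun y => y ^ (1 - α) * φ y) (by fun_prop) (by fun_prop) c hcn, h.mass]
  · have := h.mom_le hα hε hw (r := 1 - α) (by linarith [hα.2]) (by linarith [hα.1])
    unfold Mom at this
    calc _ ≤ ENNReal.ofReal c * (2 * 1) + ENNReal.ofReal c * (1 * 2) := by gcongr
      _ = ENNReal.ofReal c * 4 := by rw [← mul_add]; norm_num
      _ = ENNReal.ofReal (c * 4) := by
          rw [ENNReal.ofReal_mul hcn]; norm_num
      _ = _ := by rw [hc]; congr 1; ring
  · intro y hy; exact mul_nonneg hy.le (h.nn y)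
  · intro y hy; exact mul_nonneg (by positivity) (h.nn y)
  · apply Measurable.lintegral_prod_right'
      (f := fun p : ℝ × ℝ => ENNReal.ofReal (c * ((p.1 ^ (1 - α) * φ p.1) * (p.2 * φ p.2))))
    fun_prop

lemma Good.uu_deriv (h : Good ε w φ) {q : ℝ} (hq : 0 < q) : HasDerivAt (uu φ) (vv φ q) q := by
  have hm := h.meas
  have := hasDerivAt_integral_of_dominated_loc_of_deriv_le (μ := nu)
    (F := fun q x => (1 - exp (-(q * x))) * φ x) (F' := fun q x => x * exp (-(q * x)) * φ x)
    (x₀ := q) (s := Ioi 0) (bound := fun x => x * φ x) (Ioi_mem_nhds hq) ?_ (h.intu hq) ?_ ?_ h.int1 ?_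
  · exact this.2
  · exact Eventually.of_forall (fun q =>
      (by fun_prop : Measurable (fun x => (1 - exp (-(q * x))) * φ x)).aestronglyMeasurable)
  · exact (by fun_prop : Measurable (fun x => x * exp (-(q * x)) * φ x)).aestronglyMeasurable
  · filter_upwards [ae_nu_pos] with x hx q hq
    have hq : 0 < q := hq
    have := h.nn x
    rw [Real.norm_of_nonneg (by positivity)]
    have : exp (-(q * x)) ≤ 1 := by have := one_sub_exp_nn (t := q * x) (by positivity); linarith
    calc _ ≤ x * 1 * φ x := by gcongr
      _ = _ := by ring
  · filter_upwards [ae_nu_pos] with x hx q hq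
    have h1 : HasDerivAt (fun q : ℝ => exp (-(q * x))) (exp (-(q * x)) * (-(1 * x))) q :=
      (((hasDerivAt_id q).mul_const x).neg).exp
    refine HasDerivAt.congr_deriv ((h1.const_sub 1).mul_const (φ x)) ?_
    ring

lemma Good.uu_lim (h : Good ε w φ) : Tendsto (fun q => uu φ q / q) (𝓝[>] 0) (𝓝 1) := by
  have hm := h.meas
  have h1 : ∫ x, x * φ x ∂nu = 1 := by
    rw [integral_eq_lintegral_of_nonneg_ae, h.mass]
    · simp
    · filter_upwards [ae_nu_pos] with x hx
      exact mul_nonneg hx.le (h.nn x)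
    · exact h.int1.aestronglyMeasurable
  rw [← h1]
  have h2 : ∀ q, uu φ q / q = ∫ x, (1 - exp (-(q * x))) * φ x / q ∂nu := by
    intro q; unfold uu; rw [integral_div]
  simp_rw [h2]
  apply tendsto_integral_filter_of_dominated_convergence (fun x => x * φ x)
  · exact Eventually.of_forall (fun q =>
      (by fun_prop : Measurable (fun x => (1 - exp (-(q * x))) * φ x / q)).aestronglyMeasurable)
  · filter_upwards [self_mem_nhdsWithin] with q hq
    have hq : 0 < q := hq
    filter_upwards [ae_nu_pos] with x hx
    have h3 := one_sub_exp_nn (t := q * x) (by positivity)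
    have h4 := h.nn x
    rw [Real.norm_of_nonneg (by positivity), div_le_iff₀ hq]
    calc _ ≤ (q * x) * φ x := by gcongr; exact one_sub_exp_le _
      _ = _ := by ring
  · exact h.int1
  · filter_upwards [ae_nu_pos] with x hx
    have h1 : HasDerivAt (fun q : ℝ => (1 - exp (-(q * x))) * φ x)
        (-(exp (-((0:ℝ) * x)) * (-(1 * x))) * φ x) 0 :=
      (((((hasDerivAt_id (0:ℝ)).mul_const x).neg).exp).const_sub 1).mul_const (φ x)
    have h3 := (hasDerivAt_iff_tendsto_slope.1 h1).mono_left
      (nhdsWithin_mono (0:ℝ) (fun q (hq : 0 < q) => hq.ne'))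
    have e : -(exp (-((0:ℝ) * x)) * (-(1 * x))) * φ x = x * φ x := by simp
    rw [e] at h3
    refine h3.congr (fun q => ?_)
    simp [slope_def_field]

lemma Good.uu_lower (hα : α ∈ Ioo (0:ℝ) 1) (hε : 0 < ε) (hw : GW α w) (h : Good ε w φ)
    {q : ℝ} (hq : 0 < q) :
    q / (1 + q) - 4 / (1 - α) * ε * q ^ (2 - α) ≤ uu φ q := by
  have h1a : 0 < 1 - α := by linarith [hα.2]
  set C := 4 / (1 - α) * ε with hC
  have hCn : 0 ≤ C := by positivity
  have key := ode_nonneg (fun q => uu φ q / q - (1 + q)⁻¹ + C * q ^ (1 - α))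
    (fun q => (vv φ q * q - uu φ q * 1) / q ^ 2 - (-1 / (1 + q) ^ 2) + C * ((1 - α) * q ^ (1 - α - 1))) ?_ ?_ ?_ q hq
  · have e : q ^ (2 - α) = q ^ (1 - α) * q := by
      rw [show 2 - α = (1 - α) + 1 by ring, Real.rpow_add hq, Real.rpow_one]
    have := mul_nonneg key hq.le
    have e2 : (uu φ q / q - (1 + q)⁻¹ + C * q ^ (1 - α)) * q = uu φ q - q / (1 + q) + C * q ^ (2 - α) := by
      rw [e]; field_simp
    rw [e2] at this
    linarith
  · intro q hq
    have d1 := (h.uu_deriv hq).div (hasDerivAt_id q) hq.ne'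
    have d2 : HasDerivAt (fun q : ℝ => (1 + q)⁻¹) (-1 / (1 + q) ^ 2) q :=
      ((hasDerivAt_id q).const_add 1).inv (by simp only [id]; positivity)
    have d3 : HasDerivAt (fun q : ℝ => C * q ^ (1 - α)) (C * ((1 - α) * q ^ (1 - α - 1))) q :=
      (Real.hasDerivAt_rpow_const (Or.inl hq.ne')).const_mul C
    exact (d1.sub d2).add d3
  · intro q hq hneg
    have huv := (h.uv hα hε hw hq).2
    have hI := h.II_le hα hε hw hq
    have hu := h.uu_nn hq
    have e1 : q ^ (2 - α) = q ^ (1 - α - 1) * q ^ 2 := by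
      rw [show (2:ℝ) - α = (1 - α - 1) + 2 by ring, Real.rpow_add hq]; norm_num
    have hg : uu φ q / q < (1 + q)⁻¹ := by
      have : 0 ≤ C * q ^ (1 - α) := by positivity
      linarith
    have hg0 : 0 ≤ uu φ q / q := by positivity
    have hsq : (uu φ q / q) ^ 2 ≤ ((1 + q)⁻¹) ^ 2 := by gcongr
    have e2 : (vv φ q * q - uu φ q * 1) / q ^ 2 = -(uu φ q / q) ^ 2 - (II ε w φ q).toReal / q ^ 2 := by
      field_simp
      linarith
    have e3 : (II ε w φ q).toReal / q ^ 2 ≤ 4 * ε * q ^ (1 - α - 1) := by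
      rw [div_le_iff₀ (by positivity)]
      rw [e1] at hI; linarith
    have e4 : C * ((1 - α) * q ^ (1 - α - 1)) = 4 * ε * q ^ (1 - α - 1) := by
      rw [hC]; field_simp
    have e5 : -1 / (1 + q) ^ 2 = -((1 + q)⁻¹) ^ 2 := by
      rw [inv_pow, neg_div, one_div]
    show 0 ≤ _
    rw [e2, e4, e5]
    linarith
  · intro c hc
    have t1 : Tendsto (fun q : ℝ => (1 + q)⁻¹) (𝓝[>] 0) (𝓝 1) := by
      have : ContinuousAt (fun q : ℝ => (1 + q)⁻¹) 0 := by
        apply ContinuousAt.inv₀ (by fun_prop) (by norm_num)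
      have := this.tendsto.mono_left (nhdsWithin_le_nhds (s := Ioi 0))
      simpa using this
    have t3 := h.uu_lim.sub t1
    rw [sub_self] at t3
    filter_upwards [t3.eventually (lt_mem_nhds hc), self_mem_nhdsWithin] with q hq1 hq0
    have hq0 : 0 < q := hq0
    have : 0 ≤ C * q ^ (1 - α) := by positivity
    linarith

end

lemma lower_mass {α : ℝ} (hα : α ∈ Ioo (0:ℝ) 1) {η : ℝ} (hη : 0 < η) :
    ∃ ε0 > (0:ℝ), ∃ x0 > (0:ℝ), x0 ≤ 1 ∧ ∀ ε, 0 < ε → ε < ε0 → ∀ w φ, GW α w → Good ε w φ →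
      ENNReal.ofReal (1 - η) ≤ ∫⁻ z in Ioi x0, ENNReal.ofReal (φ z) ∂nu := by
  have h1a : 0 < 1 - α := by linarith [hα.2]
  set Q := 3 / η with hQ
  have hQ0 : 0 < Q := by positivity
  refine ⟨η / 3 / (4 / (1 - α) * Q ^ (2 - α)), by positivity, min 1 (η / 3 / Q), by positivity,
    min_le_left _ _, ?_⟩
  set x0 := min 1 (η / 3 / Q) with hx0
  have hx0p : 0 < x0 := by positivity
  intro ε hε hε0 w φ hw h
  have hm := h.meas
  have h1 := h.uu_lower hα hε hw hQ0
  have h2 : 1 - η / 3 ≤ Q / (1 + Q) := by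
    rw [le_div_iff₀ (by positivity), hQ]
    have : (1 - η / 3) * (1 + 3 / η) = 3 / η - η / 3 := by field_simp; ring
    rw [this]; linarith
  have h3 : 4 / (1 - α) * ε * Q ^ (2 - α) ≤ η / 3 := by
    rw [lt_div_iff₀ (by positivity)] at hε0
    linarith
  have h4 := h.mm_le hα hε hw hx0p
  have h5 : Q * x0 ≤ η / 3 := by
    have : x0 ≤ η / 3 / Q := min_le_right _ _
    rw [le_div_iff₀ hQ0] at this; linarith
  have h6 : ENNReal.ofReal (uu φ Q) ≤ ENNReal.ofReal (Q * mm φ x0) +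
      ∫⁻ z in Ioi x0, ENNReal.ofReal (φ z) ∂nu := by
    unfold uu mm
    rw [ofReal_integral_eq_lintegral_ofReal (h.intu hQ0)]
    · have hmmint : IntegrableOn (fun y => y * φ y) (Ioo 0 x0) :=
        h.int1.mono_measure (Measure.restrict_mono Ioo_subset_Ioi_self le_rfl)
      rw [← integral_const_mul, ofReal_integral_eq_lintegral_ofReal (hmmint.const_mul Q)]
      · have hsp : nu.restrict (Iio x0) = volume.restrict (Ioo 0 x0) := by
          rw [nu, Measure.restrict_restrict measurableSet_Iio]
          congr 1
          ext t; simp only [mem_inter_iff, mem_Iio, mem_Ioi, mem_Ioo]; tauto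
        have hIci : nu.restrict (Ioi x0) = nu.restrict (Ici x0) :=
          restrict_Ioi_eq_restrict_Ici
        rw [← lintegral_add_compl _ (measurableSet_Iio (a := x0)), compl_Iio, ← hsp, hIci]
        apply add_le_add
        · apply lintegral_mono_ae
          filter_upwards [ae_restrict_of_ae ae_nu_pos] with x hx
          apply ENNReal.ofReal_le_ofReal
          rw [← mul_assoc]
          exact mul_le_mul_of_nonneg_right (one_sub_exp_le _) (h.nn x)
        · apply lintegral_mono
          intro x
          apply ENNReal.ofReal_le_ofReal
          have := exp_pos (-(Q * x))
          have := h.nn x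
          nlinarith
      · filter_upwards [ae_restrict_mem measurableSet_Ioo] with x hx
        have := h.nn x
        have := hx.1
        show 0 ≤ Q * (x * φ x)
        positivity
    · filter_upwards [ae_nu_pos] with x hx
      exact mul_nonneg (one_sub_exp_nn (by positivity)) (h.nn x)
  have h7 : Q * mm φ x0 ≤ η / 3 := by nlinarith
  have h8 : ENNReal.ofReal (uu φ Q) - ENNReal.ofReal (Q * mm φ x0) ≤
      ∫⁻ z in Ioi x0, ENNReal.ofReal (φ z) ∂nu := tsub_le_iff_left.2 h6
  refine le_trans ?_ h8
  have hmmn : 0 ≤ mm φ x0 := by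
    apply setIntegral_nonneg measurableSet_Ioo
    intro y hy; exact mul_nonneg hy.1.le (h.nn y)
  rw [← ENNReal.ofReal_sub _ (by positivity)]
  apply ENNReal.ofReal_le_ofReal
  linarith

open MeasureTheory Real Set Filter
open scoped ENNReal Topology

lemma lint_rpow {p a : ℝ} (hp : -1 < p) (ha : 0 < a) :
    ∫⁻ x in Ioo 0 a, ENNReal.ofReal (x ^ p) = ENNReal.ofReal (a ^ (p + 1) / (p + 1)) := by
  have hi : IntegrableOn (fun x : ℝ => x ^ p) (Ioc 0 a) :=
    (intervalIntegrable_iff_integrableOn_Ioc_of_le ha.le).1 (intervalIntegral.intervalIntegrable_rpow' hp)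
  have h1 : ∫ x in (0:ℝ)..a, x ^ p = a ^ (p + 1) / (p + 1) := by
    rw [integral_rpow (Or.inl hp), Real.zero_rpow (by linarith)]; simp
  rw [← h1, intervalIntegral.integral_of_le ha.le, ofReal_integral_eq_lintegral_ofReal hi]
  · rw [restrict_Ioo_eq_restrict_Ioc]
  · filter_upwards [ae_restrict_mem measurableSet_Ioc] with x hx
    exact Real.rpow_nonneg hx.1.le _

section
variable {α ε : ℝ} {w : ℝ → ℝ → ℝ} {φ : ℝ → ℝ}

lemma lintD_le {b y z : ℝ} (hb1 : 1 < b) (hb2 : b < 2) (hy : 0 < y) (hz : 0 < z) :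
    ∫⁻ x in Ioo y (y + z), ENNReal.ofReal (x ^ (b - 2)) ≤
      ENNReal.ofReal (2 / (b - 1) * (if z ≤ y then z * y ^ (b - 2) else z ^ (b - 1))) := by
  have hb : 0 < b - 1 := by linarith
  split_ifs with hzy
  · have : ∫⁻ x in Ioo y (y + z), ENNReal.ofReal (x ^ (b - 2)) ≤
        ∫⁻ x in Ioo y (y + z), ENNReal.ofReal (y ^ (b - 2)) := by
      apply setLIntegral_mono measurable_const
      intro x hx
      apply ENNReal.ofReal_le_ofReal
      exact Real.rpow_le_rpow_of_nonpos hy hx.1.le (by linarith)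
    refine this.trans ?_
    rw [setLIntegral_const, Real.volume_Ioo, ← ENNReal.ofReal_mul (by positivity)]
    apply ENNReal.ofReal_le_ofReal
    have h2 : 1 ≤ 2 / (b - 1) := by rw [le_div_iff₀ hb]; linarith
    have h3 : 0 < z * y ^ (b - 2) := by positivity
    nlinarith
  · push Not at hzy
    have : ∫⁻ x in Ioo y (y + z), ENNReal.ofReal (x ^ (b - 2)) ≤
        ∫⁻ x in Ioo 0 (2 * z), ENNReal.ofReal (x ^ (b - 2)) := by
      apply lintegral_mono_set
      intro x hx
      exact ⟨hy.trans hx.1, by linarith [hx.2]⟩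
    refine this.trans ?_
    rw [lint_rpow (by linarith) (by positivity)]
    apply ENNReal.ofReal_le_ofReal
    rw [show b - 2 + 1 = b - 1 by ring, Real.mul_rpow (by norm_num) hz.le]
    have : (2:ℝ) ^ (b - 1) ≤ 2 := by
      calc (2:ℝ) ^ (b - 1) ≤ 2 ^ (1:ℝ) := Real.rpow_le_rpow_of_exponent_le (by norm_num) (by linarith)
        _ = 2 := by norm_num
    rw [div_mul_eq_mul_div]
    gcongr

lemma kerE_le {b y z : ℝ} (hα : α ∈ Ioo (0:ℝ) 1) (hε : 0 < ε) (hw : GW α w) (hy : 0 < y) (hz : 0 < z) :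
    y * (2 + ε * w y z) * (if z ≤ y then z * y ^ (b - 2) else z ^ (b - 1)) ≤
      (2 + 2 * ε) * (y ^ (b - 1) * z ^ (1:ℝ) + y ^ (1:ℝ) * z ^ (b - 1) + y ^ (1 - α) * z ^ (b - 1 + α)
        + y ^ (b - 1 + α) * z ^ (1 - α)) := by
  have hle := hw.le y z hy hz
  have hwn := hw.nn y z
  set T1 := y ^ (b - 1) * z ^ (1:ℝ) with hT1
  set T2 := y ^ (1:ℝ) * z ^ (b - 1) with hT2
  set T3 := y ^ (1 - α) * z ^ (b - 1 + α) with hT3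
  set T4 := y ^ (b - 1 + α) * z ^ (1 - α) with hT4
  have p1 : 0 < T1 := by positivity
  have p2 : 0 < T2 := by positivity
  have p3 : 0 < T3 := by positivity
  have p4 : 0 < T4 := by positivity
  split_ifs with h
  · have e1 : y * (z * y ^ (b - 2)) = T1 := by
      rw [hT1, show b - 1 = (b - 2) + 1 by ring, Real.rpow_add hy, Real.rpow_one, Real.rpow_one]; ring
    have e4 : T1 * (y / z) ^ α = T4 := by
      rw [hT1, hT4, Real.div_rpow hy.le hz.le, Real.rpow_add hy, Real.rpow_sub hz]
      field_simp
    have hl : (z / y) ^ α ≤ 1 := Real.rpow_le_one (by positivity) (by rw [div_le_one hy]; exact h) hα.1.le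
    have : T1 * w y z ≤ T4 + T1 := by
      calc T1 * w y z ≤ T1 * ((y / z) ^ α + 1) := by gcongr; linarith
        _ = _ := by rw [mul_add, e4, mul_one]
    calc y * (2 + ε * w y z) * (z * y ^ (b - 2)) = 2 * T1 + ε * (T1 * w y z) := by rw [← e1]; ring
      _ ≤ 2 * T1 + ε * (T4 + T1) := by gcongr
      _ ≤ _ := by nlinarith [mul_pos hε p1, mul_pos hε p2, mul_pos hε p3, mul_pos hε p4]
  · push Not at h
    have e1 : y * (z ^ (b - 1)) = T2 := by
      rw [hT2, Real.rpow_one]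
    have e4 : T2 * (z / y) ^ α = T3 := by
      rw [hT2, hT3, Real.div_rpow hz.le hy.le, Real.rpow_add hz, Real.rpow_sub hy]
      field_simp
    have hl : (y / z) ^ α ≤ 1 := Real.rpow_le_one (by positivity) (by rw [div_le_one hz]; exact h.le) hα.1.le
    have : T2 * w y z ≤ T3 + T2 := by
      calc T2 * w y z ≤ T2 * ((z / y) ^ α + 1) := by gcongr; linarith
        _ = _ := by rw [mul_add, e4, mul_one]
    calc y * (2 + ε * w y z) * (z ^ (b - 1)) = 2 * T2 + ε * (T2 * w y z) := by rw [← e1]; ring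
      _ ≤ 2 * T2 + ε * (T3 + T2) := by gcongr
      _ ≤ _ := by nlinarith [mul_pos hε p1, mul_pos hε p2, mul_pos hε p3, mul_pos hε p4]

lemma Good.mom_step (hα : α ∈ Ioo (0:ℝ) 1) (hε : 0 < ε) (hw : GW α w) (h : Good ε w φ)
    {b : ℝ} (hb1 : 1 < b) (hb2 : b < 2) (hfin : Mom φ (b - 1 + α) ≠ ⊤) : Mom φ b ≠ ⊤ := by
  have hm := h.meas
  have h1 : Mom φ b = ∫⁻ x, ENNReal.ofReal (x ^ 2 * φ x) * ENNReal.ofReal (x ^ (b - 2)) ∂nu := by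
    apply lintegral_congr_ae
    filter_upwards [ae_nu_pos] with x hx
    have := h.nn x
    rw [← ENNReal.ofReal_mul (by positivity)]
    congr 1
    rw [show b = (b - 2) + 2 by ring, Real.rpow_add hx, show (b - 2) + 2 - 2 = b - 2 by ring]
    norm_num
    ring
  rw [h1, h.test hw (fun x => ENNReal.ofReal (x ^ (b - 2))) (by fun_prop)]
  set C := 2 / (b - 1) * (2 + 2 * ε) with hC
  have hb : 0 < b - 1 := by linarith
  have hCn : 0 ≤ C := by positivity
  let F : ℝ → ℝ → ℝ → ℝ → ℝ≥0∞ := fun r s y z => ENNReal.ofReal (C * ((y ^ r * φ y) * (z ^ s * φ z)))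
  have hFm : ∀ r s, Measurable (fun p : ℝ × ℝ => F r s p.1 p.2) := by
    intro r s; simp only [F]; fun_prop
  have hFm1 : ∀ r s y, Measurable (fun z : ℝ => F r s y z) := by
    intro r s y; simp only [F]; fun_prop
  have hFm2 : ∀ r s, Measurable (fun y : ℝ => ∫⁻ z, F r s y z ∂nu) := by
    intro r s
    exact Measurable.lintegral_prod_right' (f := fun p : ℝ × ℝ => F r s p.1 p.2) (hFm r s)
  have hFi : ∀ r s, ∫⁻ y, ∫⁻ z, F r s y z ∂nu ∂nu = ENNReal.ofReal C * (Mom φ r * Mom φ s) := by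
    intro r s
    simp only [F]
    rw [lint_prod (fun y => y ^ r * φ y) (fun z => z ^ s * φ z) (by fun_prop) (by fun_prop) C hCn]
    · rfl
    · intro y hy; exact mul_nonneg (by positivity) (h.nn y)
  have hle : ∫⁻ y, ∫⁻ z, GG ε w φ y z * (∫⁻ x in Ioo y (y + z), ENNReal.ofReal (x ^ (b - 2))) ∂nu ∂nu ≤
      ∫⁻ y, (∫⁻ z, F (b - 1) 1 y z ∂nu + ∫⁻ z, F 1 (b - 1) y z ∂nu + ∫⁻ z, F (1 - α) (b - 1 + α) y z ∂nu
        + ∫⁻ z, F (b - 1 + α) (1 - α) y z ∂nu) ∂nu := by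
    apply lintegral_mono_ae
    filter_upwards [ae_nu_pos] with y hy
    rw [← lintegral_add_right _ (hFm1 1 (b - 1) y), ← lintegral_add_right _ (hFm1 (1 - α) (b - 1 + α) y),
      ← lintegral_add_right _ (hFm1 (b - 1 + α) (1 - α) y)]
    apply lintegral_mono_ae
    filter_upwards [ae_nu_pos] with z hz
    have a2 := h.nn y
    have a3 := h.nn z
    have hwn := hw.nn y z
    have k1 := lintD_le hb1 hb2 hy hz
    have k2 := kerE_le (b := b) hα hε hw hy hz
    simp only [F, Pi.add_apply]
    rw [← ENNReal.ofReal_add (by positivity) (by positivity), ← ENNReal.ofReal_add (by positivity) (by positivity),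
      ← ENNReal.ofReal_add (by positivity) (by positivity)]
    calc _ ≤ GG ε w φ y z * ENNReal.ofReal (2 / (b - 1) * (if z ≤ y then z * y ^ (b - 2) else z ^ (b - 1))) := by
          gcongr
      _ = ENNReal.ofReal ((2 / (b - 1) * (φ y * φ z)) * (y * (2 + ε * w y z) * (if z ≤ y then z * y ^ (b - 2) else z ^ (b - 1)))) := by
          unfold GG
          rw [← ENNReal.ofReal_mul (by positivity)]
          congr 1; ring
      _ ≤ ENNReal.ofReal ((2 / (b - 1) * (φ y * φ z)) * _) := by
          apply ENNReal.ofReal_le_ofReal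
          exact mul_le_mul_of_nonneg_left k2 (by positivity)
      _ = _ := by
          congr 1; rw [hC]; ring
  refine ne_top_of_le_ne_top ?_ hle
  rw [lintegral_add_right _ (hFm2 (b - 1 + α) (1 - α)), lintegral_add_right _ (hFm2 (1 - α) (b - 1 + α)),
    lintegral_add_right _ (hFm2 1 (b - 1)), hFi, hFi, hFi, hFi]
  have m1 : Mom φ 1 ≠ ⊤ := by rw [h.mom1]; simp
  have m2 : Mom φ (b - 1) ≠ ⊤ := ne_top_of_le_ne_top (by simp) (h.mom_le hα hε hw hb.le (by linarith))
  have m3 : Mom φ (1 - α) ≠ ⊤ := ne_top_of_le_ne_top (by simp) (h.mom_le hα hε hw (by linarith [hα.2]) (by linarith [hα.1]))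
  have q : ∀ a b : ℝ≥0∞, a ≠ ⊤ → b ≠ ⊤ → ENNReal.ofReal C * (a * b) ≠ ⊤ := fun a b ha hb =>
    ENNReal.mul_ne_top ENNReal.ofReal_ne_top (ENNReal.mul_ne_top ha hb)
  exact ENNReal.add_ne_top.2 ⟨ENNReal.add_ne_top.2 ⟨ENNReal.add_ne_top.2 ⟨q _ _ m2 m1, q _ _ m1 m2⟩, q _ _ m3 hfin⟩, q _ _ hfin m3⟩

lemma Good.mom_fin (hα : α ∈ Ioo (0:ℝ) 1) (hε : 0 < ε) (hw : GW α w) (h : Good ε w φ)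
    {b : ℝ} (hb1 : 0 ≤ b) (hb2 : b < 2) : Mom φ b ≠ ⊤ := by
  have key : ∀ n : ℕ, ∀ b : ℝ, 0 ≤ b → b < 2 → b ≤ 1 + n * (1 - α) → Mom φ b ≠ ⊤ := by
    intro n
    induction n with
    | zero =>
      intro b hb1 _ hb
      refine ne_top_of_le_ne_top (by simp) (h.mom_le hα hε hw hb1 (by simpa using hb))
    | succ n ih =>
      intro b hb1 hb2 hb
      by_cases hb3 : b ≤ 1
      · exact ne_top_of_le_ne_top (by simp) (h.mom_le hα hε hw hb1 hb3)
      · push Not at hb3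
        apply h.mom_step hα hε hw hb3 hb2
        apply ih
        · linarith [hα.1]
        · linarith [hα.2]
        · push_cast at hb; linarith
  have h1a : 0 < 1 - α := by linarith [hα.2]
  obtain ⟨n, hn⟩ := exists_nat_ge (1 / (1 - α))
  apply key n b hb1 hb2
  rw [div_le_iff₀ h1a] at hn
  linarith
end

open MeasureTheory Real Set Filter
open scoped ENNReal Topology

/-- comparison principle for the primitive of `g` against a power -/
lemma compare (g : ℝ → ℝ) {x0 p C : ℝ} (hx0 : 0 < x0) (hp : 0 < p)
    (hg : IntervalIntegrable g volume 0 x0)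
    (hend : ∫ y in (0:ℝ)..x0, g y ≤ C * x0 ^ p)
    (hstep : ∀ᵐ x ∂nu, x < x0 → C * x ^ p < ∫ y in (0:ℝ)..x, g y → p * C * x ^ (p - 1) ≤ g x) :
    ∀ x, 0 < x → x ≤ x0 → ∫ y in (0:ℝ)..x, g y ≤ C * x ^ p := by
  intro x1 hx1 hx10
  by_contra hcon
  push Not at hcon
  set H : ℝ → ℝ := fun x => C * x ^ p - ∫ y in (0:ℝ)..x, g y with hH
  have hcont : ContinuousOn H (Icc 0 x0) := by
    apply ContinuousOn.sub
    · exact (continuousOn_const.mul (fun x _ => (Real.continuousAt_rpow_const x p (Or.inr hp.le)).continuousWithinAt))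
    · have := intervalIntegral.continuousOn_primitive_interval (μ := volume) (f := g) (a := 0) (b := x0) ?_
      · rwa [uIcc_of_le hx0.le] at this
      · rw [uIcc_of_le hx0.le, integrableOn_Icc_iff_integrableOn_Ioc]
        exact (intervalIntegrable_iff_integrableOn_Ioc_of_le hx0.le).1 hg
  have hcont1 : ContinuousOn H (Icc x1 x0) := hcont.mono (Icc_subset_Icc_left hx1.le)
  set S := Icc x1 x0 ∩ H ⁻¹' (Ici 0) with hS
  have hSc : IsClosed S := hcont1.preimage_isClosed_of_isClosed isClosed_Icc isClosed_Ici
  have hSne : S.Nonempty := ⟨x0, ⟨hx10, le_rfl⟩, by simp only [mem_preimage, mem_Ici, hH]; linarith⟩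
  have hSb : BddBelow S := ⟨x1, fun x hx => hx.1.1⟩
  set x2 := sInf S with hx2
  have h2 : x2 ∈ S := hSc.csInf_mem hSne hSb
  have hH1 : H x1 < 0 := by simp only [hH]; linarith
  have h12 : x1 < x2 := by
    rcases h2.1.1.lt_or_eq with h | h
    · exact h
    · exfalso
      have := h2.2
      rw [← h] at this
      simp only [mem_preimage, mem_Ici] at this
      linarith
  have hlt : ∀ x, x1 ≤ x → x < x2 → H x < 0 := by
    intro x ha hb
    by_contra hc
    push Not at hc
    have : x2 ≤ x := csInf_le hSb ⟨⟨ha, hb.le.trans h2.1.2⟩, hc⟩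
    linarith
  have i1 : IntervalIntegrable g volume 0 x1 := by
    apply hg.mono_set
    rw [uIcc_of_le hx1.le, uIcc_of_le hx0.le]; exact Icc_subset_Icc_right hx10
  have i2 : IntervalIntegrable g volume 0 x2 := by
    apply hg.mono_set
    rw [uIcc_of_le (hx1.trans h12).le, uIcc_of_le hx0.le]; exact Icc_subset_Icc_right h2.1.2
  have i12 : IntervalIntegrable g volume x1 x2 := i1.symm.trans i2
  have hadd := intervalIntegral.integral_add_adjacent_intervals i1 i12
  have hmain : C * x2 ^ p - C * x1 ^ p ≤ ∫ y in x1..x2, g y := by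
    have e : ∫ y in x1..x2, p * C * y ^ (p - 1) = C * x2 ^ p - C * x1 ^ p := by
      rw [intervalIntegral.integral_const_mul, integral_rpow]
      · rw [show p - 1 + 1 = p by ring]; field_simp
      · left; linarith
    rw [← e]
    apply intervalIntegral.integral_mono_ae_restrict h12.le
    · apply IntervalIntegrable.const_mul
      exact intervalIntegral.intervalIntegrable_rpow' (by linarith)
    · exact i12
    · rw [← restrict_Ioo_eq_restrict_Icc]
      have : ∀ᵐ x ∂(volume.restrict (Ioo x1 x2)), x < x0 → C * x ^ p < ∫ y in (0:ℝ)..x, g y → p * C * x ^ (p - 1) ≤ g x := by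
        apply ae_mono (Measure.restrict_mono (fun x hx => hx1.trans hx.1) le_rfl) hstep
      filter_upwards [this, ae_restrict_mem measurableSet_Ioo] with x hx hxm
      apply hx (hxm.2.trans_le h2.1.2)
      have := hlt x hxm.1.le hxm.2
      simp only [hH] at this
      linarith
  have h22 := h2.2
  simp only [mem_preimage, mem_Ici, hH] at h22
  simp only [hH] at hH1
  linarith

section
variable {α ε : ℝ} {w : ℝ → ℝ → ℝ} {φ : ℝ → ℝ}

lemma nu_Iio (x : ℝ) : nu.restrict (Iio x) = volume.restrict (Ioo 0 x) := by
  rw [nu, Measure.restrict_restrict measurableSet_Iio]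
  congr 1
  ext t; simp only [mem_inter_iff, mem_Iio, mem_Ioi, mem_Ioo]; tauto

lemma mm_eq_interval {x : ℝ} (hx : 0 < x) : mm φ x = ∫ y in (0:ℝ)..x, y * φ y := by
  rw [intervalIntegral.integral_of_le hx.le, mm, restrict_Ioo_eq_restrict_Ioc]

lemma Good.mm_nn (h : Good ε w φ) (x : ℝ) : 0 ≤ mm φ x := by
  apply setIntegral_nonneg measurableSet_Ioo
  intro y hy; exact mul_nonneg hy.1.le (h.nn y)

lemma Good.ofReal_mm (h : Good ε w φ) (x : ℝ) :
    ENNReal.ofReal (mm φ x) = ∫⁻ y in Iio x, ENNReal.ofReal (y * φ y) ∂nu := by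
  have hmmint : IntegrableOn (fun y => y * φ y) (Ioo 0 x) :=
    h.int1.mono_measure (Measure.restrict_mono Ioo_subset_Ioi_self le_rfl)
  rw [mm, ofReal_integral_eq_lintegral_ofReal hmmint, nu_Iio]
  filter_upwards [ae_restrict_mem measurableSet_Ioo] with y hy
  exact mul_nonneg hy.1.le (h.nn y)

lemma Good.flux_lower (hε : 0 < ε) (hw : GW α w) (h : Good ε w φ) {x0 : ℝ} (k : ℝ → ℝ) (hk : Measurable k)
    (hkn : ∀ y, 0 < y → 0 ≤ k y)
    (hkl : ∀ y z, 0 < y → x0 < z → k y ≤ y * (2 + ε * w y z)) :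
    ∀ᵐ x ∂nu, x ≤ x0 → (∫⁻ y in Iio x, ENNReal.ofReal (k y * φ y) ∂nu) *
      (∫⁻ z in Ioi x0, ENNReal.ofReal (φ z) ∂nu) ≤ ENNReal.ofReal (x ^ 2 * φ x) := by
  have hm := h.meas
  filter_upwards [h.eqn, ae_nu_pos] with x hx hxp hxx
  rw [hx, ← lintegral_mul_const _ (by fun_prop)]
  apply lintegral_mono_ae
  filter_upwards [ae_restrict_of_ae ae_nu_pos] with y hy
  rw [← lintegral_const_mul _ (by fun_prop)]
  calc _ ≤ ∫⁻ z in Ioi x0, GG ε w φ y z ∂nu := by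
        apply lintegral_mono_ae
        filter_upwards [ae_restrict_mem measurableSet_Ioi] with z hz
        have a1 := h.nn y
        have a2 := h.nn z
        have a3 := hkn y hy
        unfold GG
        rw [← ENNReal.ofReal_mul (by positivity)]
        apply ENNReal.ofReal_le_ofReal
        have := hkl y z hy hz
        gcongr
    _ ≤ _ := by
        apply lintegral_mono_set
        apply Ioi_subset_Ioi
        linarith

lemma Good.near_zero (hα : α ∈ Ioo (0:ℝ) 1) (hε : 0 < ε) (hw : GW α w) (h : Good ε w φ)
    {x0 η : ℝ} (hx0 : 0 < x0) (hη : η ∈ Ioo (0:ℝ) 1)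
    (hl : ENNReal.ofReal (1 - η / 2) ≤ ∫⁻ z in Ioi x0, ENNReal.ofReal (φ z) ∂nu) :
    ∀ x, 0 < x → x ≤ x0 → mm φ x ≤ x0 ^ (η - 1) * x ^ (2 - η) := by
  intro x hx hxx
  rw [mm_eq_interval hx]
  refine compare (fun y => y * φ y) hx0 (by linarith [hη.2]) ?_ ?_ ?_ x hx hxx
  · rw [intervalIntegrable_iff_integrableOn_Ioc_of_le hx0.le]
    exact h.int1.mono_measure (Measure.restrict_mono Ioc_subset_Ioi_self le_rfl)
  · rw [← mm_eq_interval hx0, ← Real.rpow_add hx0]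
    have := h.mm_le hα hε hw hx0
    convert this using 1
    rw [show η - 1 + (2 - η) = 1 by ring, Real.rpow_one]
  · filter_upwards [h.flux_lower hε hw (x0 := x0) (fun y => 2 * y) (by fun_prop) (fun y hy => by positivity)
      (fun y z hy hz => by nlinarith [mul_nonneg hε.le (hw.nn y z)]), ae_nu_pos] with x hx hxp hxx hlt
    rw [← mm_eq_interval hxp] at hlt
    have h1 := hx hxx.le
    have h2 : ENNReal.ofReal (2 * mm φ x * (1 - η / 2)) ≤ ENNReal.ofReal (x ^ 2 * φ x) := by
      refine le_trans ?_ h1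
      rw [ENNReal.ofReal_mul (by linarith [h.mm_nn x]), ENNReal.ofReal_mul (by norm_num), h.ofReal_mm]
      gcongr
      have hm := h.meas
      rw [← lintegral_const_mul _ (by fun_prop)]
      apply lintegral_mono
      intro y
      simp only
      rw [← ENNReal.ofReal_mul (by norm_num), mul_assoc]
    rw [ENNReal.ofReal_le_ofReal_iff (mul_nonneg (by positivity) (h.nn x))] at h2
    have e : x ^ (2 - η) = x * x ^ (2 - η - 1) := by
      rw [show 2 - η = 1 + (2 - η - 1) by ring, Real.rpow_add hxp, Real.rpow_one]
      congr 2; ring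
    rw [e] at hlt
    have h3 : (2 - η) * mm φ x ≤ x ^ 2 * φ x := by linarith
    have h4 : x * ((2 - η) * x0 ^ (η - 1) * x ^ (2 - η - 1)) ≤ x * (x * φ x) := by
      have := mul_le_mul_of_nonneg_left hlt.le (show 0 ≤ 2 - η by linarith [hη.2])
      nlinarith
    exact le_of_mul_le_mul_left h4 hxp

lemma rpow_split {r x y : ℝ} (hr : 0 < r) (hy : 0 < y) (hyx : y < x) :
    ENNReal.ofReal (y ^ (-r)) = ENNReal.ofReal (x ^ (-r)) + ∫⁻ t in Ioo y x, ENNReal.ofReal (r * t ^ (-r - 1)) := by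
  have hx := hy.trans hyx
  have h0 : (0:ℝ) ∉ uIcc y x := by
    rw [uIcc_of_le hyx.le]; intro h; linarith [h.1]
  have e : ∫ t in y..x, r * t ^ (-r - 1) = y ^ (-r) - x ^ (-r) := by
    rw [intervalIntegral.integral_const_mul, integral_rpow (Or.inr ⟨by linarith, h0⟩)]
    rw [show -r - 1 + 1 = -r by ring]; field_simp; ring
  have hi : IntegrableOn (fun t => r * t ^ (-r - 1)) (Ioc y x) :=
    (intervalIntegrable_iff_integrableOn_Ioc_of_le hyx.le).1
      ((intervalIntegral.intervalIntegrable_rpow (Or.inr h0)).const_mul r)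
  rw [intervalIntegral.integral_of_le hyx.le] at e
  rw [restrict_Ioo_eq_restrict_Ioc, ← ofReal_integral_eq_lintegral_ofReal hi, e,
    ← ENNReal.ofReal_add (by positivity)]
  · congr 1; ring
  · have := Real.rpow_le_rpow_of_nonpos hy hyx.le (show -r ≤ 0 by linarith)
    linarith
  · filter_upwards [ae_restrict_mem measurableSet_Ioc] with t ht
    have := hy.trans ht.1
    show 0 ≤ r * t ^ (-r - 1)
    positivity

lemma layer (F : ℝ → ℝ) (hF : Measurable F) (hFn : ∀ y, 0 < y → 0 ≤ F y) {x s r C0 : ℝ}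
    (hx : 0 < x) (hr : 0 < r) (hrs : r < s) (hC : 0 ≤ C0)
    (hb : ∀ t, 0 < t → t ≤ x → ∫⁻ y in Iio t, ENNReal.ofReal (F y) ∂nu ≤ ENNReal.ofReal (C0 * t ^ s)) :
    ∫⁻ y in Iio x, ENNReal.ofReal (y ^ (-r) * F y) ∂nu ≤
      ENNReal.ofReal (C0 * (1 + r / (s - r)) * x ^ (s - r)) := by
  have hsr : 0 < s - r := by linarith
  have h1 : ∫⁻ y in Iio x, ENNReal.ofReal (y ^ (-r) * F y) ∂nu =
      ∫⁻ y in Iio x, (ENNReal.ofReal (x ^ (-r)) * ENNReal.ofReal (F y) +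
        ∫⁻ t in Iio x, {p : ℝ × ℝ | p.1 < p.2}.indicator
          (fun p => ENNReal.ofReal (r * p.2 ^ (-r - 1)) * ENNReal.ofReal (F p.1)) (y, t) ∂nu) ∂nu := by
    apply lintegral_congr_ae
    filter_upwards [ae_restrict_of_ae ae_nu_pos, ae_restrict_mem measurableSet_Iio] with y hy hyx
    rw [ENNReal.ofReal_mul (by positivity), rpow_split hr hy hyx, add_mul]
    congr 1
    rw [← lintegral_mul_const _ (by fun_prop), nu_Iio, ← lintegral_indicator measurableSet_Ioo,
      ← lintegral_indicator measurableSet_Ioo]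
    apply lintegral_congr
    intro t
    by_cases h : t ∈ Ioo y x
    · rw [indicator_of_mem h, indicator_of_mem (by exact ⟨hy.trans h.1, h.2⟩), indicator_of_mem (by exact h.1)]
    · rw [indicator_of_notMem h]
      by_cases h' : t ∈ Ioo 0 x
      · rw [indicator_of_mem h', indicator_of_notMem]
        intro hh2; exact h ⟨hh2, h'.2⟩
      · rw [indicator_of_notMem h']
  have hmeas : Measurable ({p : ℝ × ℝ | p.1 < p.2}.indicator
          (fun p => ENNReal.ofReal (r * p.2 ^ (-r - 1)) * ENNReal.ofReal (F p.1))) :=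
    (by fun_prop : Measurable (fun p : ℝ × ℝ => ENNReal.ofReal (r * p.2 ^ (-r - 1)) * ENNReal.ofReal (F p.1))).indicator
      (measurableSet_lt measurable_fst measurable_snd)
  rw [h1, lintegral_add_left (by fun_prop), lintegral_const_mul _ (by fun_prop)]
  rw [lintegral_lintegral_swap (f := fun y t => {p : ℝ × ℝ | p.1 < p.2}.indicator
          (fun p => ENNReal.ofReal (r * p.2 ^ (-r - 1)) * ENNReal.ofReal (F p.1)) (y, t)) hmeas.aemeasurable]
  have h2 : ∫⁻ t in Iio x, ∫⁻ y in Iio x, {p : ℝ × ℝ | p.1 < p.2}.indicator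
          (fun p => ENNReal.ofReal (r * p.2 ^ (-r - 1)) * ENNReal.ofReal (F p.1)) (y, t) ∂nu ∂nu ≤
      ∫⁻ t in Iio x, ENNReal.ofReal (r * C0) * ENNReal.ofReal (t ^ (s - r - 1)) ∂nu := by
    apply lintegral_mono_ae
    filter_upwards [ae_restrict_of_ae ae_nu_pos, ae_restrict_mem measurableSet_Iio] with t ht htx
    calc _ ≤ ∫⁻ y, (Iio t).indicator (fun y => ENNReal.ofReal (r * t ^ (-r - 1)) * ENNReal.ofReal (F y)) y ∂nu := by
          apply setLIntegral_le_lintegral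
      _ = ENNReal.ofReal (r * t ^ (-r - 1)) * ∫⁻ y in Iio t, ENNReal.ofReal (F y) ∂nu := by
          rw [lintegral_indicator measurableSet_Iio, lintegral_const_mul _ (by fun_prop)]
      _ ≤ ENNReal.ofReal (r * t ^ (-r - 1)) * ENNReal.ofReal (C0 * t ^ s) := by
          gcongr; exact hb t ht (le_of_lt htx)
      _ = _ := by
          rw [← ENNReal.ofReal_mul (by positivity), ← ENNReal.ofReal_mul (by positivity),
            show s - r - 1 = (-r - 1) + s by ring, Real.rpow_add ht]
          congr 1; ring
  calc _ ≤ ENNReal.ofReal (x ^ (-r)) * ENNReal.ofReal (C0 * x ^ s) +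
        ∫⁻ t in Iio x, ENNReal.ofReal (r * C0) * ENNReal.ofReal (t ^ (s - r - 1)) ∂nu := by
        gcongr
        exact hb x hx le_rfl
    _ = ENNReal.ofReal (x ^ (-r)) * ENNReal.ofReal (C0 * x ^ s) +
        ENNReal.ofReal (r * C0) * ENNReal.ofReal (x ^ (s - r) / (s - r)) := by
        rw [lintegral_const_mul _ (by fun_prop), nu_Iio, lint_rpow (by linarith) hx,
          show s - r - 1 + 1 = s - r by ring]
    _ = _ := by
        rw [← ENNReal.ofReal_mul (by positivity), ← ENNReal.ofReal_mul (by positivity),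
          ← ENNReal.ofReal_add (by positivity) (by positivity)]
        congr 1
        rw [show s - r = (-r) + s by ring, Real.rpow_add hx]
        field_simp

lemma Good.weighted (hα : α ∈ Ioo (0:ℝ) 1) (hε : 0 < ε) (hw : GW α w) (h : Good ε w φ)
    {x0 η r x : ℝ} (hx0 : 0 < x0) (hη : η ∈ Ioo (0:ℝ) 1)
    (hl : ENNReal.ofReal (1 - η / 2) ≤ ∫⁻ z in Ioi x0, ENNReal.ofReal (φ z) ∂nu)
    (hr : 0 < r) (hrs : r < 2 - η) (hx : 0 < x) (hxx : x ≤ x0) :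
    ∫⁻ y in Iio x, ENNReal.ofReal (y ^ (1 - r) * φ y) ∂nu ≤
      ENNReal.ofReal (x0 ^ (η - 1) * (1 + r / (2 - η - r)) * x ^ (2 - η - r)) := by
  have hm := h.meas
  have := layer (fun y => y * φ y) (by fun_prop) (fun y hy => mul_nonneg hy.le (h.nn y)) hx hr hrs
    (C0 := x0 ^ (η - 1)) (by positivity) ?_
  · refine le_trans (le_of_eq ?_) this
    apply lintegral_congr_ae
    filter_upwards [ae_restrict_of_ae ae_nu_pos] with y hy
    rw [show 1 - r = -r + 1 by ring, Real.rpow_add hy, Real.rpow_one, mul_assoc]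
  · intro t ht htx
    rw [← h.ofReal_mm]
    exact ENNReal.ofReal_le_ofReal (h.near_zero hα hε hw hx0 hη hl t ht (htx.trans hxx))

lemma Good.mom_neg (hα : α ∈ Ioo (0:ℝ) 1) (hε : 0 < ε) (hw : GW α w) (h : Good ε w φ)
    {x0 η : ℝ} (hx0 : 0 < x0) (hη : η ∈ Ioo (0:ℝ) 1)
    (hl : ENNReal.ofReal (1 - η / 2) ≤ ∫⁻ z in Ioi x0, ENNReal.ofReal (φ z) ∂nu)
    (hrs : 1 + α < 2 - η) :
    Mom φ (-α) ≤ ENNReal.ofReal (x0 ^ (η - 1) * (1 + (1 + α) / (2 - η - (1 + α))) * x0 ^ (2 - η - (1 + α)) + x0 ^ (-α)) := by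
  have hm := h.meas
  have h1 := h.weighted hα hε hw hx0 hη hl (r := 1 + α) (by linarith [hα.1]) hrs hx0 le_rfl
  have hsr : 0 < 2 - η - (1 + α) := by linarith
  have hα0 := hα.1
  rw [ENNReal.ofReal_add (by positivity) (by positivity)]
  unfold Mom
  rw [← lintegral_add_compl _ (measurableSet_Iio (a := x0))]
  gcongr
  · rw [show 1 - (1 + α) = -α by ring] at h1
    exact h1
  · calc _ ≤ ∫⁻ x in (Iio x0)ᶜ, ENNReal.ofReal (x0 ^ (-α)) * ENNReal.ofReal (φ x) ∂nu := by
          apply lintegral_mono_ae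
          filter_upwards [ae_restrict_of_ae ae_nu_pos, ae_restrict_mem measurableSet_Iio.compl] with y hy hyx
          rw [← ENNReal.ofReal_mul (by positivity)]
          apply ENNReal.ofReal_le_ofReal
          have := h.nn y
          simp only [mem_compl_iff, mem_Iio, not_lt] at hyx
          have := Real.rpow_le_rpow_of_nonpos hx0 hyx (show -α ≤ 0 by linarith)
          gcongr
      _ ≤ ∫⁻ x, ENNReal.ofReal (x0 ^ (-α)) * ENNReal.ofReal (φ x) ∂nu := setLIntegral_le_lintegral _ _
      _ ≤ ENNReal.ofReal (x0 ^ (-α)) * 1 := by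
          rw [lintegral_const_mul _ (by fun_prop)]
          gcongr
          exact h.mom0 hα hε hw
      _ = _ := by rw [mul_one]

/-- the bound on `ε Q(x)` from the lower bound on `W` -/
lemma Good.Q_le (hα : α ∈ Ioo (0:ℝ) 1) (hε : 0 < ε) (hw : GW α w) (h : Good ε w φ)
    {x0 η c x : ℝ} (hx0 : 0 < x0) (hη : η ∈ Ioo (0:ℝ) 1)
    (hl : ENNReal.ofReal (1 - η / 2) ≤ ∫⁻ z in Ioi x0, ENNReal.ofReal (φ z) ∂nu)
    (hc : 0 < c) (hlow : ∀ y z, 0 < y → 0 < z → c * ((y / z) ^ α + (z / y) ^ α) ≤ w y z)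
    (hx : 0 < x) (hxx : 2 * x ≤ x0) :
    ENNReal.ofReal ε * ∫⁻ y in Iio x, ENNReal.ofReal (y ^ (1 - α) * φ y) ∂nu ≤
      ENNReal.ofReal (16 * x0 ^ (η - 1) / (c * x0 ^ α) * x ^ (2 - η)) := by
  have hm := h.meas
  set Q := ∫⁻ y in Iio x, ENNReal.ofReal (y ^ (1 - α) * φ y) ∂nu with hQ
  set d := ε * c * x0 ^ α with hd
  have hdp : 0 < d := by positivity
  have hη1 := hη.1
  have hη2 := hη.2
  have hfl := h.flux_lower hε hw (x0 := x0) (fun y => d * y ^ (1 - α)) (by fun_prop) (fun y hy => by positivity)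
      (fun y z hy hz => by
        have hz0 := hx0.trans hz
        have h1 := hlow y z hy hz0
        have h2 : (z / y) ^ α = z ^ α / y ^ α := Real.div_rpow hz0.le hy.le _
        have h3 : x0 ^ α ≤ z ^ α := Real.rpow_le_rpow hx0.le hz.le hα.1.le
        have h4 : 0 ≤ (y / z) ^ α := by positivity
        have h5 : y ^ (1 - α) = y / y ^ α := by rw [Real.rpow_sub hy, Real.rpow_one]
        calc d * y ^ (1 - α) = y * (ε * (c * (x0 ^ α / y ^ α))) := by rw [h5, hd]; ring
          _ ≤ y * (ε * (c * (z ^ α / y ^ α))) := by gcongr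
          _ ≤ y * (ε * (c * ((y / z) ^ α + (z / y) ^ α))) := by rw [h2]; gcongr; linarith
          _ ≤ y * (ε * w y z) := by gcongr
          _ ≤ _ := by gcongr; linarith)
  have h1 : ∫⁻ s in Ioo x (2 * x), ENNReal.ofReal d * Q * ENNReal.ofReal (1 - η / 2) ∂nu ≤
      ∫⁻ s in Ioo x (2 * x), ENNReal.ofReal (2 * x) * ENNReal.ofReal (s * φ s) ∂nu := by
    apply lintegral_mono_ae
    filter_upwards [ae_restrict_of_ae hfl, ae_restrict_mem measurableSet_Ioo] with s hs hsm
    have hs0 := hx.trans hsm.1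
    calc _ ≤ _ := ?_
      _ ≤ _ := hs (by linarith [hsm.2])
      _ ≤ _ := ?_
    · gcongr
      rw [hQ, ← lintegral_const_mul _ (by fun_prop)]
      calc _ ≤ ∫⁻ y in Iio s, ENNReal.ofReal d * ENNReal.ofReal (y ^ (1 - α) * φ y) ∂nu :=
            lintegral_mono_set (Iio_subset_Iio hsm.1.le)
        _ = _ := by
            apply lintegral_congr
            intro y
            rw [← ENNReal.ofReal_mul hdp.le]
            congr 1; ring
    · have := h.nn s
      rw [← ENNReal.ofReal_mul (by positivity)]
      apply ENNReal.ofReal_le_ofReal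
      have : s * (s * φ s) ≤ 2 * x * (s * φ s) := by
        gcongr; exact hsm.2.le
      nlinarith
  have h2 : ∫⁻ s in Ioo x (2 * x), ENNReal.ofReal (2 * x) * ENNReal.ofReal (s * φ s) ∂nu ≤
      ENNReal.ofReal (2 * x) * ENNReal.ofReal (x0 ^ (η - 1) * (2 * x) ^ (2 - η)) := by
    rw [lintegral_const_mul _ (by fun_prop)]
    gcongr
    calc _ ≤ ∫⁻ s in Iio (2 * x), ENNReal.ofReal (s * φ s) ∂nu := lintegral_mono_set (fun s hs => hs.2)
      _ = ENNReal.ofReal (mm φ (2 * x)) := (h.ofReal_mm _).symm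
      _ ≤ _ := ENNReal.ofReal_le_ofReal (h.near_zero hα hε hw hx0 hη hl (2 * x) (by positivity) hxx)
  have h3 : nu (Ioo x (2 * x)) = ENNReal.ofReal x := by
    rw [nu, Measure.restrict_apply measurableSet_Ioo, inter_eq_left.2, Real.volume_Ioo]
    · congr 1; ring
    · intro s hs; exact hx.trans hs.1
  have h4 := h1.trans h2
  rw [setLIntegral_const, h3] at h4
  have hQt : Q ≠ ⊤ := by
    have := h.mom_le hα hε hw (r := 1 - α) (by linarith [hα.2]) (by linarith [hα.1])
    exact ne_top_of_le_ne_top (by simp) ((setLIntegral_le_lintegral _ _).trans this)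
  rw [← ENNReal.ofReal_toReal hQt] at h4 ⊢
  set q := Q.toReal
  have hqn : 0 ≤ q := ENNReal.toReal_nonneg
  rw [← ENNReal.ofReal_mul (by positivity), ← ENNReal.ofReal_mul (by positivity), ← ENNReal.ofReal_mul (mul_nonneg (by positivity) (by linarith)),
    ← ENNReal.ofReal_mul (by positivity), ENNReal.ofReal_le_ofReal_iff (by positivity)] at h4
  rw [← ENNReal.ofReal_mul hε.le]
  apply ENNReal.ofReal_le_ofReal
  have h5 : (2 * x) ^ (2 - η) ≤ 4 * x ^ (2 - η) := by
    rw [Real.mul_rpow (by norm_num) hx.le]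
    gcongr
    calc (2:ℝ) ^ (2 - η) ≤ 2 ^ (2:ℝ) := Real.rpow_le_rpow_of_exponent_le (by norm_num) (by linarith)
      _ = 4 := by norm_num
  have h6 : d * q * (1 - η / 2) ≤ 2 * (x0 ^ (η - 1) * (4 * x ^ (2 - η))) := by
    have : d * q * (1 - η / 2) * x ≤ 2 * (x0 ^ (η - 1) * (4 * x ^ (2 - η))) * x := by
      refine h4.trans ?_
      have : x0 ^ (η - 1) * (2 * x) ^ (2 - η) ≤ x0 ^ (η - 1) * (4 * x ^ (2 - η)) := by gcongr
      nlinarith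
    exact le_of_mul_le_mul_right this hx
  have h7 : d * q * (1 / 2) ≤ d * q * (1 - η / 2) := by gcongr; linarith
  rw [div_mul_eq_mul_div, le_div_iff₀ (by positivity)]
  have e : ε * q * (c * x0 ^ α) = d * q := by rw [hd]; ring
  rw [e]
  linarith
end

open MeasureTheory Real Set Filter
open scoped ENNReal Topology

structure Nice (α : ℝ) (f : ℝ → ℝ) : Prop where
  meas : Measurable f
  int : ∀ r, -α ≤ r → r ≤ 1 + α → Integrable (fun x => x ^ r * f x) nu

lemma Nice.sub {α : ℝ} {f g : ℝ → ℝ} (hf : Nice α f) (hg : Nice α g) : Nice α (fun x => f x - g x) := by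
  refine ⟨hf.meas.sub hg.meas, fun r h1 h2 => ?_⟩
  refine ((hf.int r h1 h2).sub (hg.int r h1 h2)).congr ?_
  filter_upwards with x
  simp only [Pi.sub_apply]; ring

lemma rpow_le_two {x a r b : ℝ} (hx : 0 < x) (h1 : a ≤ r) (h2 : r ≤ b) : x ^ r ≤ x ^ a + x ^ b := by
  have p1 : 0 < x ^ a := by positivity
  have p2 : 0 < x ^ b := by positivity
  rcases le_total x 1 with h | h
  · have := Real.rpow_le_rpow_of_exponent_ge hx h h1
    linarith
  · have := Real.rpow_le_rpow_of_exponent_le h h2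
    linarith

section
variable {α ε : ℝ} {w : ℝ → ℝ → ℝ} {φ : ℝ → ℝ}

lemma Good.int_of_mom (h : Good ε w φ) {r : ℝ} (hr : Mom φ r ≠ ⊤) : Integrable (fun x => x ^ r * φ x) nu := by
  have hm := h.meas
  refine ⟨(by fun_prop : Measurable (fun x => x ^ r * φ x)).aestronglyMeasurable, ?_⟩
  rw [hasFiniteIntegral_iff_ofReal]
  · exact lt_top_iff_ne_top.2 hr
  · filter_upwards [ae_nu_pos] with x hx
    exact mul_nonneg (by positivity) (h.nn x)

lemma Good.int_range (h : Good ε w φ) {a b r : ℝ} (ha : Mom φ a ≠ ⊤) (hb : Mom φ b ≠ ⊤) (h1 : a ≤ r) (h2 : r ≤ b) :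
    Integrable (fun x => x ^ r * φ x) nu := by
  have hm := h.meas
  refine ((h.int_of_mom ha).add (h.int_of_mom hb)).mono' (by fun_prop) ?_
  filter_upwards [ae_nu_pos] with x hx
  have := h.nn x
  rw [norm_of_nonneg (by positivity)]
  simp only [Pi.add_apply]
  rw [← add_mul]
  gcongr
  exact rpow_le_two hx h1 h2

noncomputable def FF (ε : ℝ) (w : ℝ → ℝ → ℝ) (f g : ℝ → ℝ) (p : ℝ × ℝ) : ℝ :=
  p.1 * (2 + ε * w p.1 p.2) * f p.1 * g p.2

lemma ae_prod_pos : ∀ᵐ p ∂(nu.prod nu), 0 < p.1 ∧ 0 < p.2 := by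
  rw [nu, Measure.prod_restrict]
  filter_upwards [ae_restrict_mem (measurableSet_Ioi.prod measurableSet_Ioi)] with p hp
  exact ⟨hp.1, hp.2⟩

lemma ker_le (hε : 0 < ε) (hε1 : ε ≤ 1) (hw : GW α w) {y z : ℝ} (hy : 0 < y) (hz : 0 < z) :
    y * (2 + ε * w y z) ≤ 2 * y + (y ^ (1 + α) * z ^ (-α) + y ^ (1 - α) * z ^ α) := by
  have h1 := hw.le y z hy hz
  have h0 := hw.nn y z
  have e1 : y * (y / z) ^ α = y ^ (1 + α) * z ^ (-α) := by
    rw [Real.div_rpow hy.le hz.le, Real.rpow_add hy, Real.rpow_neg hz.le, Real.rpow_one]; field_simp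
  have e2 : y * (z / y) ^ α = y ^ (1 - α) * z ^ α := by
    rw [Real.div_rpow hz.le hy.le, Real.rpow_sub hy, Real.rpow_one]; field_simp
  calc y * (2 + ε * w y z) ≤ y * (2 + 1 * ((y / z) ^ α + (z / y) ^ α)) := by gcongr
    _ = _ := by rw [← e1, ← e2]; ring

lemma FF_meas (hw : GW α w) {f g : ℝ → ℝ} (hf : Measurable f) (hg : Measurable g) : Measurable (FF ε w f g) := by
  unfold FF
  have := hw.meas
  fun_prop

lemma FF_int (hα : α ∈ Ioo (0:ℝ) 1) (hε : 0 < ε) (hε1 : ε ≤ 1) (hw : GW α w) {f g : ℝ → ℝ}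
    (hf : Nice α f) (hg : Nice α g) : Integrable (FF ε w f g) (nu.prod nu) := by
  have hα0 := hα.1
  have hα1 := hα.2
  have i1 := (hf.int 1 (by linarith) (by linarith)).mul_prod (hg.int 0 (by linarith) (by linarith))
  have i2 := (hf.int (1 + α) (by linarith) (by linarith)).mul_prod (hg.int (-α) (by linarith) (by linarith))
  have i3 := (hf.int (1 - α) (by linarith) (by linarith)).mul_prod (hg.int α (by linarith) (by linarith))
  refine (((i1.norm.const_mul 2).add i2.norm).add i3.norm).mono' (FF_meas hw hf.meas hg.meas).aestronglyMeasurable ?_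
  filter_upwards [ae_prod_pos] with p hp
  obtain ⟨hy, hz⟩ := hp
  have hk := ker_le hε hε1 hw hy hz
  have h0 := hw.nn p.1 p.2
  simp only [Pi.add_apply, norm_mul, Real.norm_eq_abs, FF]
  rw [Real.rpow_one, Real.rpow_zero, abs_of_pos hy, abs_of_pos (show 0 < 2 + ε * w p.1 p.2 by positivity),
    abs_of_pos (Real.rpow_pos_of_pos hy _), abs_of_pos (Real.rpow_pos_of_pos hy _),
    abs_of_pos (Real.rpow_pos_of_pos hz _), abs_of_pos (Real.rpow_pos_of_pos hz _), abs_one]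
  calc p.1 * (2 + ε * w p.1 p.2) * |f p.1| * |g p.2| = (|f p.1| * |g p.2|) * (p.1 * (2 + ε * w p.1 p.2)) := by ring
    _ ≤ (|f p.1| * |g p.2|) * (2 * p.1 + (p.1 ^ (1 + α) * p.2 ^ (-α) + p.1 ^ (1 - α) * p.2 ^ α)) := by gcongr
    _ = _ := by ring

def SS (x : ℝ) : Set (ℝ × ℝ) := {p | p.1 < x ∧ x - p.1 < p.2}

lemma SS_meas (x : ℝ) : MeasurableSet (SS x) :=
  (measurableSet_lt measurable_fst measurable_const).inter
    (measurableSet_lt (measurable_const.sub measurable_fst) measurable_snd)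

lemma Good.eqn_real (hα : α ∈ Ioo (0:ℝ) 1) (hε : 0 < ε) (hε1 : ε ≤ 1) (hw : GW α w) (h : Good ε w φ) (hn : Nice α φ) :
    ∀ᵐ x ∂nu, x ^ 2 * φ x = ∫ p in SS x, FF ε w φ φ p ∂(nu.prod nu) := by
  have hm := h.meas
  filter_upwards [h.eqn] with x hx
  have hi := (FF_int hα hε hε1 hw hn hn).restrict (s := SS x)
  have hnn : ∀ᵐ p ∂((nu.prod nu).restrict (SS x)), 0 ≤ FF ε w φ φ p := by
    filter_upwards [ae_restrict_of_ae ae_prod_pos] with p hp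
    have := hw.nn p.1 p.2
    have := h.nn p.1
    have := h.nn p.2
    have := hp.1
    unfold FF
    positivity
  have h1 := ofReal_integral_eq_lintegral_ofReal hi hnn
  have h2 : ∫⁻ p in SS x, ENNReal.ofReal (FF ε w φ φ p) ∂(nu.prod nu) =
      ∫⁻ y in Iio x, ∫⁻ z in Ioi (x - y), GG ε w φ y z ∂nu ∂nu := by
    rw [← lintegral_indicator (SS_meas x), lintegral_prod]
    · rw [← lintegral_indicator (μ := nu) measurableSet_Iio]
      apply lintegral_congr
      intro y
      by_cases hy : y < x
      · rw [indicator_of_mem (by exact hy), ← lintegral_indicator (μ := nu) measurableSet_Ioi]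
        apply lintegral_congr
        intro z
        by_cases hz : x - y < z
        · rw [indicator_of_mem (by exact ⟨hy, hz⟩), indicator_of_mem (by exact hz)]
          rfl
        · rw [indicator_of_notMem (fun h => hz h.2), indicator_of_notMem (by exact hz)]
      · rw [indicator_of_notMem (s := Iio x) (by exact hy)]
        have : ∀ z, (SS x).indicator (fun p => ENNReal.ofReal (FF ε w φ φ p)) (y, z) = 0 :=
          fun z => indicator_of_notMem (fun h => hy h.1) _
        simp [this]
    · exact ((FF_meas hw hm hm).ennreal_ofReal.indicator (SS_meas x)).aemeasurable
  rw [h2, ← hx] at h1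
  have h3 : 0 ≤ ∫ p in SS x, FF ε w φ φ p ∂(nu.prod nu) := integral_nonneg_of_ae hnn
  exact ((ENNReal.ofReal_eq_ofReal_iff h3 (mul_nonneg (by positivity) (h.nn x))).1 h1).symm

noncomputable def AA (ε : ℝ) (w : ℝ → ℝ → ℝ) (φ : ℝ → ℝ) (y : ℝ) : ℝ := ∫ z, (2 + ε * w y z) * φ z ∂nu

lemma Good.AA_ge (hα : α ∈ Ioo (0:ℝ) 1) (hε : 0 < ε) (hε1 : ε ≤ 1) (hw : GW α w) (h : Good ε w φ) (hn : Nice α φ)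
    {x0 η y : ℝ} (hy : 0 < y) (hη : η ∈ Ioo (0:ℝ) 1)
    (hl : ENNReal.ofReal (1 - η / 2) ≤ ∫⁻ z in Ioi x0, ENNReal.ofReal (φ z) ∂nu) : 2 - η ≤ AA ε w φ y := by
  have hm := h.meas
  have hα0 := hα.1
  have hα1 := hα.2
  have i0 : Integrable φ nu := by
    have := hn.int 0 (by linarith) (by linarith)
    simpa using this
  have i1 := hn.int (-α) (by linarith) (by linarith)
  have i2 := hn.int α (by linarith) (by linarith)
  have hitg : Integrable (fun z => (2 + ε * w y z) * φ z) nu := by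
    have hwm : Measurable (fun z => w y z) := hw.meas.comp (by fun_prop : Measurable (fun z : ℝ => (y, z)))
    refine (((i0.const_mul 2).add (i1.const_mul (y ^ α))).add (i2.const_mul (y ^ (-α)))).mono' (by fun_prop) ?_
    filter_upwards [ae_nu_pos] with z hz
    have h0 := hw.nn y z
    have h1 := h.nn z
    rw [norm_of_nonneg (by positivity)]
    have hk := ker_le hε hε1 hw hy hz
    have e : 2 * y + (y ^ (1 + α) * z ^ (-α) + y ^ (1 - α) * z ^ α) = y * (2 + y ^ α * z ^ (-α) + y ^ (-α) * z ^ α) := by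
      rw [show 1 - α = 1 + -α by ring, Real.rpow_add hy, Real.rpow_add hy, Real.rpow_one]; ring
    rw [e] at hk
    have := le_of_mul_le_mul_left hk hy
    simp only [Pi.add_apply]
    calc _ ≤ (2 + y ^ α * z ^ (-α) + y ^ (-α) * z ^ α) * φ z := by gcongr
      _ = _ := by ring
  have h1 : 1 - η / 2 ≤ ∫ z, φ z ∂nu := by
    have h2 : ENNReal.ofReal (1 - η / 2) ≤ ENNReal.ofReal (∫ z, φ z ∂nu) := by
      rw [ofReal_integral_eq_lintegral_ofReal i0 (Eventually.of_forall h.nn)]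
      exact hl.trans (setLIntegral_le_lintegral _ _)
    exact (ENNReal.ofReal_le_ofReal_iff (integral_nonneg h.nn)).1 h2
  have h3 : ∫ z, 2 * φ z ∂nu ≤ AA ε w φ y := by
    apply integral_mono (i0.const_mul 2) hitg
    intro z
    have h0 := hw.nn y z
    have h1 := h.nn z
    show 2 * φ z ≤ (2 + ε * w y z) * φ z
    gcongr
    nlinarith [mul_nonneg hε.le h0]
  rw [integral_const_mul] at h3
  linarith

def TT (x : ℝ) : Set (ℝ × ℝ) := {p | p.1 < x ∧ p.2 ≤ x - p.1}

lemma TT_meas (x : ℝ) : MeasurableSet (TT x) :=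
  (measurableSet_lt measurable_fst measurable_const).inter
    (measurableSet_le measurable_snd (measurable_const.sub measurable_fst))

/-- weighted mass -/
noncomputable def wN (α β : ℝ) (ψ : ℝ → ℝ) : ℝ := ∫ x, |ψ x| * weight (-α) β x ∂nu

lemma weight_ge {β r x : ℝ} (hα : 0 < α) (hx : 0 < x) (h1 : -α ≤ r) (h2 : r ≤ β) : x ^ r ≤ weight (-α) β x := by
  unfold weight
  split_ifs with h
  · exact Real.rpow_le_rpow_of_exponent_ge hx h h1
  · exact Real.rpow_le_rpow_of_exponent_le (not_le.1 h).le h2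

lemma termT_le {β x : ℝ} {ψ : ℝ → ℝ} (hα : α ∈ Ioo (0:ℝ) 1) (hβ : 0 ≤ β) (hε : 0 < ε) (hε1 : ε ≤ 1) (hw : GW α w) (h : Good ε w φ)
    (hn : Nice α φ) (hψ : Nice α ψ) (hN : Integrable (fun x => |ψ x| * weight (-α) β x) nu)
    (hx : 0 < x) (_hx1 : x ≤ 1) :
    |∫ p in TT x, FF ε w ψ φ p ∂(nu.prod nu)| ≤ 4 * x ^ (1 + 2 * α) * (∫ z, z ^ (-α) * φ z ∂nu) * wN α β ψ := by
  have hα0 := hα.1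
  have hα1 := hα.2
  have i1 := (hψ.int (-α) (by linarith) (by linarith)).norm
  have i2 := hn.int (-α) (by linarith) (by linarith)
  have ii := (i1.mul_prod i2).const_mul (4 * x ^ (1 + 2 * α))
  have hM : 0 ≤ ∫ z, z ^ (-α) * φ z ∂nu := by
    apply integral_nonneg_of_ae
    filter_upwards [ae_nu_pos] with z hz
    exact mul_nonneg (by positivity) (h.nn z)
  have h1 : ∫ y, ‖y ^ (-α) * ψ y‖ ∂nu ≤ wN α β ψ := by
    apply integral_mono_ae i1 hN
    filter_upwards [ae_nu_pos] with y hy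
    rw [norm_mul, Real.norm_eq_abs, Real.norm_eq_abs, abs_of_pos (Real.rpow_pos_of_pos hy _), mul_comm]
    have := weight_ge (β := β) (r := -α) hα0 hy le_rfl (by linarith)
    gcongr
  calc |∫ p in TT x, FF ε w ψ φ p ∂(nu.prod nu)|
      ≤ ∫ p in TT x, 4 * x ^ (1 + 2 * α) * (‖p.1 ^ (-α) * ψ p.1‖ * (p.2 ^ (-α) * φ p.2)) ∂(nu.prod nu) := by
        rw [← Real.norm_eq_abs]
        apply norm_integral_le_of_norm_le ii.restrict
        filter_upwards [ae_restrict_of_ae ae_prod_pos, ae_restrict_mem (TT_meas x)] with p hp hpT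
        obtain ⟨hy, hz⟩ := hp
        have hyx : p.1 ≤ x := hpT.1.le
        have hzx : p.2 ≤ x := by linarith [hpT.2]
        have h0 := hw.nn p.1 p.2
        have hk := ker_le hε hε1 hw hy hz
        have hφ := h.nn p.2
        have hE : p.1 * (2 + ε * w p.1 p.2) ≤ 4 * x ^ (1 + 2 * α) * (p.1 ^ (-α) * p.2 ^ (-α)) := by
          have a1 : x ^ (1 + 2 * α) = x * (x ^ α * x ^ α) := by
            rw [show 1 + 2 * α = 1 + (α + α) by ring, Real.rpow_add hx, Real.rpow_add hx, Real.rpow_one]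
          have a2 : p.1 ^ α ≤ x ^ α := Real.rpow_le_rpow hy.le hyx hα0.le
          have a3 : p.2 ^ α ≤ x ^ α := Real.rpow_le_rpow hz.le hzx hα0.le
          have b1 : p.1 ^ α * p.1 ^ (-α) = 1 := by rw [← Real.rpow_add hy]; simp
          have b2 : p.2 ^ α * p.2 ^ (-α) = 1 := by rw [← Real.rpow_add hz]; simp
          have c1 : p.1 ^ (1 + α) = p.1 * p.1 ^ α := by rw [Real.rpow_add hy, Real.rpow_one]
          have c2 : p.1 ^ (1 - α) = p.1 * p.1 ^ (-α) := by
            rw [show 1 - α = 1 + -α by ring, Real.rpow_add hy, Real.rpow_one]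
          set u := p.1 ^ α
          set u' := p.1 ^ (-α)
          set v := p.2 ^ α
          set v' := p.2 ^ (-α)
          have pu : 0 < u := by positivity
          have pv : 0 < v := by positivity
          have pu' : 0 < u' := by positivity
          have pv' : 0 < v' := by positivity
          have t1 : p.1 * (u * v) ≤ x * (x ^ α * x ^ α) := by gcongr
          have t2 : p.1 * (u * u) ≤ x * (x ^ α * x ^ α) := by gcongr
          have t3 : p.1 * (v * v) ≤ x * (x ^ α * x ^ α) := by gcongr
          have q : 0 < u' * v' := by positivity
          calc _ ≤ _ := hk
            _ = (2 * (p.1 * (u * v)) + p.1 * (u * u) + p.1 * (v * v)) * (u' * v') := by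
              rw [c1, c2]
              linear_combination (-2 * p.1 * (v * v') - p.1 * u * v') * b1 + (-2 * p.1 - p.1 * u' * v) * b2
            _ ≤ (4 * (x * (x ^ α * x ^ α))) * (u' * v') := by gcongr; linarith
            _ = _ := by rw [a1]
        simp only [FF, norm_mul, Real.norm_eq_abs]
        rw [abs_of_pos hy, abs_of_pos (show 0 < 2 + ε * w p.1 p.2 by positivity), abs_of_nonneg hφ,
          abs_of_pos (Real.rpow_pos_of_pos hy _)]
        calc p.1 * (2 + ε * w p.1 p.2) * |ψ p.1| * φ p.2 ≤ 4 * x ^ (1 + 2 * α) * (p.1 ^ (-α) * p.2 ^ (-α)) * |ψ p.1| * φ p.2 := by gcongr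
          _ = _ := by ring
    _ ≤ ∫ p, 4 * x ^ (1 + 2 * α) * (‖p.1 ^ (-α) * ψ p.1‖ * (p.2 ^ (-α) * φ p.2)) ∂(nu.prod nu) := by
        apply setIntegral_le_integral ii
        filter_upwards [ae_prod_pos] with p hp
        have := h.nn p.2
        have := hp.2
        simp only [Pi.zero_apply]
        positivity
    _ = 4 * x ^ (1 + 2 * α) * ((∫ y, ‖y ^ (-α) * ψ y‖ ∂nu) * ∫ z, z ^ (-α) * φ z ∂nu) := by
        rw [integral_const_mul, integral_prod_mul (fun y => ‖y ^ (-α) * ψ y‖) (fun z => z ^ (-α) * φ z)]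
    _ ≤ 4 * x ^ (1 + 2 * α) * (wN α β ψ * ∫ z, z ^ (-α) * φ z ∂nu) := by gcongr
    _ = _ := by ring

lemma termS_le {β x : ℝ} {ψ : ℝ → ℝ} (hα : α ∈ Ioo (0:ℝ) 1) (hβ : α ≤ β) (hε : 0 < ε) (hε1 : ε ≤ 1) (hw : GW α w) (h : Good ε w φ)
    (hn : Nice α φ) (hN : Integrable (fun x => |ψ x| * weight (-α) β x) nu)
    (hx : 0 < x) (hx1 : x ≤ 1) :
    |∫ p in SS x, FF ε w φ ψ p ∂(nu.prod nu)| ≤ (3 * mm φ x + ε * ∫ y in Ioo 0 x, y ^ (1 - α) * φ y) * wN α β ψ := by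
  have hα0 := hα.1
  have hα1 := hα.2
  set k : ℝ → ℝ := (Iio x).indicator (fun y => (3 * y + ε * y ^ (1 - α)) * φ y) with hk
  have j1 : Integrable (fun y => 3 * (y * φ y)) nu := h.int1.const_mul 3
  have j2 : Integrable (fun y => ε * (y ^ (1 - α) * φ y)) nu := (hn.int (1 - α) (by linarith) (by linarith)).const_mul ε
  have i1 : Integrable k nu := by
    apply Integrable.indicator _ measurableSet_Iio
    refine (j1.add j2).congr (Eventually.of_forall fun y => ?_)
    simp only [Pi.add_apply]; ring
  have ii := i1.mul_prod hN
  have hki : ∫ y, k y ∂nu = 3 * mm φ x + ε * ∫ y in Ioo 0 x, y ^ (1 - α) * φ y := by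
    rw [hk, integral_indicator measurableSet_Iio, nu_Iio, mm, ← integral_const_mul, ← integral_const_mul, ← integral_add]
    · congr 1
      ext y; ring
    · exact j1.mono_measure (Measure.restrict_mono Ioo_subset_Ioi_self le_rfl)
    · exact j2.mono_measure (Measure.restrict_mono Ioo_subset_Ioi_self le_rfl)
  have hwn : ∀ z, 0 < z → 0 ≤ weight (-α) β z := by
    intro z hz; unfold weight; split_ifs <;> positivity
  calc |∫ p in SS x, FF ε w φ ψ p ∂(nu.prod nu)|
      ≤ ∫ p in SS x, k p.1 * (|ψ p.2| * weight (-α) β p.2) ∂(nu.prod nu) := by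
        rw [← Real.norm_eq_abs]
        apply norm_integral_le_of_norm_le ii.restrict
        filter_upwards [ae_restrict_of_ae ae_prod_pos, ae_restrict_mem (SS_meas x)] with p hp hpT
        obtain ⟨hy, hz⟩ := hp
        have hyx : p.1 < x := hpT.1
        have h0 := hw.nn p.1 p.2
        have hφ := h.nn p.1
        have hle := hw.le _ _ hy hz
        rw [hk, indicator_of_mem (by exact hyx)]
        have w0 := weight_ge (β := β) (r := 0) hα0 hz (by linarith) (by linarith)
        have w1 := weight_ge (β := β) (r := -α) hα0 hz (by linarith) (by linarith)
        have w2 := weight_ge (β := β) (r := α) hα0 hz (by linarith) (by linarith)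
        rw [Real.rpow_zero] at w0
        set ω := weight (-α) β p.2
        have e1 : (p.1 / p.2) ^ α ≤ ω := by
          rw [Real.div_rpow hy.le hz.le, div_eq_mul_inv, ← Real.rpow_neg hz.le]
          have : p.1 ^ α ≤ 1 := Real.rpow_le_one hy.le (by linarith) hα0.le
          calc p.1 ^ α * p.2 ^ (-α) ≤ 1 * p.2 ^ (-α) := by gcongr
            _ ≤ ω := by linarith
        have e2 : p.1 * (p.2 / p.1) ^ α = p.1 ^ (1 - α) * p.2 ^ α := by
          rw [Real.div_rpow hz.le hy.le, Real.rpow_sub hy, Real.rpow_one]; field_simp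
        have hE : p.1 * (2 + ε * w p.1 p.2) ≤ (3 * p.1 + ε * p.1 ^ (1 - α)) * ω := by
          calc p.1 * (2 + ε * w p.1 p.2) ≤ p.1 * (2 + ε * ((p.1 / p.2) ^ α + (p.2 / p.1) ^ α)) := by gcongr
            _ = 2 * p.1 * 1 + ε * (p.1 * (p.1 / p.2) ^ α) + ε * (p.1 ^ (1 - α) * p.2 ^ α) := by rw [← e2]; ring
            _ ≤ 2 * p.1 * ω + 1 * (p.1 * ω) + ε * (p.1 ^ (1 - α) * ω) := by gcongr
            _ = _ := by ring
        simp only [FF, norm_mul, Real.norm_eq_abs]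
        rw [abs_of_pos hy, abs_of_pos (show 0 < 2 + ε * w p.1 p.2 by positivity), abs_of_nonneg hφ]
        calc p.1 * (2 + ε * w p.1 p.2) * φ p.1 * |ψ p.2| ≤ ((3 * p.1 + ε * p.1 ^ (1 - α)) * ω) * φ p.1 * |ψ p.2| := by gcongr
          _ = _ := by ring
    _ ≤ ∫ p, k p.1 * (|ψ p.2| * weight (-α) β p.2) ∂(nu.prod nu) := by
        apply setIntegral_le_integral ii
        filter_upwards [ae_prod_pos] with p hp
        have a1 := h.nn p.1
        have a2 := hwn p.2 hp.2
        have a3 := hp.1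
        simp only [Pi.zero_apply]
        apply mul_nonneg _ (by positivity)
        rw [hk, indicator_apply]
        split_ifs
        · positivity
        · exact le_rfl
    _ = _ := by
        rw [integral_prod_mul k (fun z => |ψ z| * weight (-α) β z), hki]; rfl

end

open MeasureTheory Real Set Filter
open scoped ENNReal Topology

section
variable {α ε : ℝ} {w : ℝ → ℝ → ℝ} {φ : ℝ → ℝ}

lemma FF_fst (ψ φ : ℝ → ℝ) (y : ℝ) :
    ∫ z, FF ε w ψ φ (y, z) ∂nu = y * AA ε w φ y * ψ y := by
  unfold AA FF
  simp only
  rw [show y * (∫ z, (2 + ε * w y z) * φ z ∂nu) * ψ y = (y * ψ y) * ∫ z, (2 + ε * w y z) * φ z ∂nu by ring,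
    ← integral_const_mul]
  congr 1
  ext z; ring

lemma g_int (hα : α ∈ Ioo (0:ℝ) 1) (hε : 0 < ε) (hε1 : ε ≤ 1) (hw : GW α w) {ψ φ : ℝ → ℝ}
    (hn : Nice α φ) (hψ : Nice α ψ) : Integrable (fun y => y * AA ε w φ y * ψ y) nu := by
  have := (FF_int hα hε hε1 hw hψ hn).integral_prod_left
  simpa only [FF_fst] using this

lemma FF_strip (hα : α ∈ Ioo (0:ℝ) 1) (hε : 0 < ε) (hε1 : ε ≤ 1) (hw : GW α w) {ψ φ : ℝ → ℝ}
    (hn : Nice α φ) (hψ : Nice α ψ) {x : ℝ} (hx : 0 < x) :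
    ∫ p in Iio x ×ˢ univ, FF ε w ψ φ p ∂(nu.prod nu) = ∫ y in (0:ℝ)..x, y * AA ε w φ y * ψ y := by
  rw [setIntegral_prod _ (FF_int hα hε hε1 hw hψ hn).integrableOn]
  simp only [Measure.restrict_univ, FF_fst]
  rw [nu_Iio, intervalIntegral.integral_of_le hx.le, restrict_Ioo_eq_restrict_Ioc]

lemma decomp (hα : α ∈ Ioo (0:ℝ) 1) {β : ℝ} (hβ : α ≤ β) (hε : 0 < ε) (hε1 : ε ≤ 1) (hw : GW α w) {φ1 φ2 : ℝ → ℝ}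
    (h1 : Good ε w φ1) (h2 : Good ε w φ2) (n1 : Nice α φ1) (n2 : Nice α φ2)
    (hN : Integrable (fun x => |φ1 x - φ2 x| * weight (-α) β x) nu) :
    ∀ᵐ x ∂nu, x ≤ 1 → |x ^ 2 * (φ1 x - φ2 x) - ∫ y in (0:ℝ)..x, y * AA ε w φ1 y * (φ1 y - φ2 y)| ≤
      (3 * mm φ2 x + ε * (∫ y in Ioo 0 x, y ^ (1 - α) * φ2 y) + 4 * x ^ (1 + 2 * α) * (∫ z, z ^ (-α) * φ1 z ∂nu))
        * wN α β (fun x => φ1 x - φ2 x) := by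
  filter_upwards [h1.eqn_real hα hε hε1 hw n1, h2.eqn_real hα hε hε1 hw n2, ae_nu_pos] with x e1 e2 hx hx1
  have nψ := n1.sub n2
  have iψ1 := FF_int hα hε hε1 hw nψ n1
  have i2ψ := FF_int hα hε hε1 hw n2 nψ
  have hd : ∫ p in SS x, FF ε w φ1 φ1 p ∂(nu.prod nu) - ∫ p in SS x, FF ε w φ2 φ2 p ∂(nu.prod nu) =
      ∫ p in SS x, FF ε w (fun x => φ1 x - φ2 x) φ1 p ∂(nu.prod nu) +
      ∫ p in SS x, FF ε w φ2 (fun x => φ1 x - φ2 x) p ∂(nu.prod nu) := by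
    rw [← integral_sub (FF_int hα hε hε1 hw n1 n1).restrict (FF_int hα hε hε1 hw n2 n2).restrict,
      ← integral_add iψ1.restrict i2ψ.restrict]
    congr 1
    ext p
    unfold FF; ring
  have hsplit : ∫ p in Iio x ×ˢ univ, FF ε w (fun x => φ1 x - φ2 x) φ1 p ∂(nu.prod nu) =
      ∫ p in SS x, FF ε w (fun x => φ1 x - φ2 x) φ1 p ∂(nu.prod nu) +
      ∫ p in TT x, FF ε w (fun x => φ1 x - φ2 x) φ1 p ∂(nu.prod nu) := by
    rw [← setIntegral_union _ (TT_meas x) iψ1.integrableOn iψ1.integrableOn]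
    · congr 2
      ext p
      simp only [mem_prod, mem_Iio, mem_univ, and_true, SS, TT, mem_union, mem_setOf_eq]
      constructor
      · intro h
        rcases lt_or_ge (x - p.1) p.2 with h' | h'
        · exact Or.inl ⟨h, h'⟩
        · exact Or.inr ⟨h, h'⟩
      · rintro (h | h) <;> exact h.1
    · rw [Set.disjoint_left]
      intro p hp hq
      have := hp.2
      have := hq.2
      linarith
  rw [FF_strip hα hε hε1 hw n1 nψ hx] at hsplit
  have t1 := termT_le (β := β) hα (by linarith [hα.1]) hε hε1 hw h1 n1 nψ hN hx hx1
  have t2 := termS_le (β := β) hα hβ hε hε1 hw h2 n2 hN hx hx1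
  have e : x ^ 2 * (φ1 x - φ2 x) - ∫ y in (0:ℝ)..x, y * AA ε w φ1 y * (φ1 y - φ2 y) =
      ∫ p in SS x, FF ε w φ2 (fun x => φ1 x - φ2 x) p ∂(nu.prod nu) -
      ∫ p in TT x, FF ε w (fun x => φ1 x - φ2 x) φ1 p ∂(nu.prod nu) := by
    rw [hsplit, mul_sub, e1, e2, hd]; ring
  rw [e]
  calc _ ≤ _ := abs_sub _ _
    _ ≤ _ := add_le_add t2 t1
    _ = _ := by ring

lemma gron_one (ψ A : ℝ → ℝ) {x1 a p c : ℝ} (hx1 : 0 < x1) (hp : 0 < p) (hpa : p < a) (hc : 0 ≤ c)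
    (hA : ∀ y, 0 < y → a ≤ A y)
    (hg : IntervalIntegrable (fun y => y * A y * ψ y) volume 0 x1)
    (hR : ∀ᵐ x ∂nu, x < x1 → |x ^ 2 * ψ x - ∫ y in (0:ℝ)..x, y * A y * ψ y| ≤ c * x ^ p)
    (hend : ∫ y in (0:ℝ)..x1, y * A y * ψ y ≤ a / (a - p) * c * x1 ^ p) :
    ∀ x, 0 < x → x ≤ x1 → ∫ y in (0:ℝ)..x, y * A y * ψ y ≤ a / (a - p) * c * x ^ p := by
  have hap : 0 < a - p := by linarith
  apply compare _ hx1 hp hg hend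
  filter_upwards [hR, ae_nu_pos] with x hx hxp hxx hlt
  have h1 := (abs_le.1 (hx hxx)).1
  have h2 := hA x hxp
  have e : x ^ p = x * x ^ (p - 1) := by
    rw [show p = 1 + (p - 1) by ring, Real.rpow_add hxp, Real.rpow_one]
    congr 2; ring
  set m := ∫ y in (0:ℝ)..x, y * A y * ψ y
  have e3 : a / (a - p) - 1 = p / (a - p) := by field_simp; ring
  have h3 : p / (a - p) * c * x ^ p ≤ x ^ 2 * ψ x := by
    rw [← e3]; linarith
  have h4 : p / (a - p) * c * x ^ (p - 1) ≤ x * ψ x := by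
    rw [e] at h3
    have : x * (p / (a - p) * c * x ^ (p - 1)) ≤ x * (x * ψ x) := by linarith
    exact le_of_mul_le_mul_left this hxp
  have h5 : 0 ≤ p / (a - p) * c * x ^ (p - 1) := by positivity
  calc p * (a / (a - p) * c) * x ^ (p - 1) = a * (p / (a - p) * c * x ^ (p - 1)) := by ring
    _ ≤ A x * (x * ψ x) := mul_le_mul h2 h4 h5 (by linarith)
    _ = _ := by ring

lemma gron (ψ A : ℝ → ℝ) {x1 a p c : ℝ} (hx1 : 0 < x1) (hp : 0 < p) (hpa : p < a) (hc : 0 ≤ c)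
    (hA : ∀ y, 0 < y → a ≤ A y)
    (hg : IntervalIntegrable (fun y => y * A y * ψ y) volume 0 x1)
    (hR : ∀ᵐ x ∂nu, x < x1 → |x ^ 2 * ψ x - ∫ y in (0:ℝ)..x, y * A y * ψ y| ≤ c * x ^ p)
    (hend : |∫ y in (0:ℝ)..x1, y * A y * ψ y| ≤ a / (a - p) * c * x1 ^ p) :
    ∀ᵐ x ∂nu, x < x1 → x ^ 2 * |ψ x| ≤ (a / (a - p) + 1) * c * x ^ p := by
  have k1 := gron_one ψ A hx1 hp hpa hc hA hg hR ((le_abs_self _).trans hend)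
  have en : ∀ x, ∫ y in (0:ℝ)..x, y * A y * (-ψ y) = - ∫ y in (0:ℝ)..x, y * A y * ψ y := by
    intro x
    rw [← intervalIntegral.integral_neg]
    congr 1; ext y; ring
  have k2 := gron_one (fun y => - ψ y) A hx1 hp hpa hc hA
    (by
      have := hg.neg
      refine this.congr (fun y _ => ?_)
      simp only [Pi.neg_apply]; ring)
    (by
      filter_upwards [hR] with x hx hxx
      rw [en, ← abs_neg]
      convert hx hxx using 2
      ring)
    (by rw [en]; exact (neg_le_abs _).trans hend)
  filter_upwards [hR, ae_nu_pos] with x hx hxp hxx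
  have a1 := k1 x hxp hxx.le
  have a2 := k2 x hxp hxx.le
  rw [en] at a2
  have a3 := abs_le.1 (hx hxx)
  rw [← abs_of_nonneg (sq_nonneg x), ← abs_mul, abs_le]
  constructor <;> nlinarith [a3.1, a3.2]

/-- The final deterministic estimate. -/
lemma final_est (ψ A : ℝ → ℝ) {α β δ a p C N B : ℝ} (hα : 0 < α) (hβ : 0 ≤ β) (hδ : 0 < δ) (hδ1 : δ ≤ 1)
    (hp : 1 + α < p) (hpa : p < a) (hC : 0 ≤ C) (hNn : 0 ≤ N)
    (hψm : Measurable ψ)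
    (hN : Integrable (fun x => |ψ x| * weight (-α) β x) nu)
    (hB : B = ∫ x, |(1 - exp (-x)) * ψ x| * weight (-α) β x ∂nu)
    (hA : ∀ y, 0 < y → a ≤ A y)
    (hg : Integrable (fun y => y * A y * ψ y) nu)
    (hR : ∀ᵐ x ∂nu, x < 2 * δ → |x ^ 2 * ψ x - ∫ y in (0:ℝ)..x, y * A y * ψ y| ≤ C * N * x ^ p) :
    ∫ x, |exp (-x) * ψ x| * weight (-α) β x ∂nu ≤
      (a / (a - p) + 1) * C * (δ ^ (p - 1 - α) / (p - 1 - α)) * N +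
      ((a / (a - p) + 1) * (4 * δ / ((1 - exp (-δ)) * δ ^ p)) * (δ ^ (p - 1 - α) / (p - 1 - α)) + 1 / (1 - exp (-δ))) * B := by
  have hap : 0 < a - p := by linarith
  have hp0 : 0 < p := by linarith
  have ha0 : 0 < a := by linarith
  have hwn : ∀ z, 0 < z → 0 ≤ weight (-α) β z := by
    intro z hz; unfold weight; split_ifs <;> positivity
  have hwm : Measurable (weight (-α) β) := by
    unfold weight
    exact Measurable.ite measurableSet_Iic (by fun_prop) (by fun_prop)
  have hed : 0 < 1 - exp (-δ) := by
    have : exp (-δ) < 1 := by rw [Real.exp_lt_one_iff]; linarith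
    linarith
  have iB : Integrable (fun x => |(1 - exp (-x)) * ψ x| * weight (-α) β x) nu := by
    refine hN.mono' (by fun_prop) ?_
    filter_upwards [ae_nu_pos] with x hx
    have := hwn x hx
    have h1 := one_sub_exp_nn hx.le
    have h2 := exp_pos (-x)
    rw [norm_of_nonneg (by positivity), abs_mul, abs_of_nonneg h1]
    gcongr
    calc (1 - exp (-x)) * |ψ x| ≤ 1 * |ψ x| := by gcongr; linarith
      _ = _ := one_mul _
  have iE : Integrable (fun x => |exp (-x) * ψ x| * weight (-α) β x) nu := by
    refine hN.mono' (by fun_prop) ?_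
    filter_upwards [ae_nu_pos] with x hx
    have := hwn x hx
    have h2 : exp (-x) ≤ 1 := by rw [Real.exp_le_one_iff]; linarith
    rw [norm_of_nonneg (by positivity), abs_mul, abs_of_pos (exp_pos _)]
    gcongr
    calc exp (-x) * |ψ x| ≤ 1 * |ψ x| := by gcongr
      _ = _ := one_mul _
  have hBn : 0 ≤ B := by
    rw [hB]
    apply integral_nonneg_of_ae
    filter_upwards [ae_nu_pos] with x hx
    have := hwn x hx
    simp only [Pi.zero_apply]
    positivity
  have hfar : ∀ x, δ ≤ x → (1 - exp (-δ)) * (|ψ x| * weight (-α) β x) ≤ |(1 - exp (-x)) * ψ x| * weight (-α) β x := by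
    intro x hx
    have := hwn x (hδ.trans_le hx)
    have h1 : exp (-x) ≤ exp (-δ) := by rw [Real.exp_le_exp]; linarith
    have h2 : 0 ≤ 1 - exp (-x) := by linarith
    rw [abs_mul, abs_of_nonneg h2, mul_assoc]
    gcongr
  have hsub : ∀ s : Set ℝ, MeasurableSet s → (∀ x ∈ s, δ ≤ x) →
      ∫ x in s, |ψ x| * weight (-α) β x ∂nu ≤ B / (1 - exp (-δ)) := by
    intro s hs hsd
    rw [le_div_iff₀ hed, mul_comm, ← integral_const_mul, hB]
    calc _ ≤ ∫ x in s, |(1 - exp (-x)) * ψ x| * weight (-α) β x ∂nu := by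
          apply integral_mono_ae (hN.restrict.const_mul _) iB.restrict
          filter_upwards [ae_restrict_mem hs] with x hx
          exact hfar x (hsd x hx)
      _ ≤ _ := by
          apply setIntegral_le_integral iB
          filter_upwards [ae_nu_pos] with x hx
          have := hwn x hx
          simp only [Pi.zero_apply]
          positivity
  set μ1 := nu.restrict (Ioo δ (2 * δ)) with hμ1
  have hvol : nu (Ioo δ (2 * δ)) = ENNReal.ofReal δ := by
    rw [nu, Measure.restrict_apply measurableSet_Ioo, inter_eq_left.2, Real.volume_Ioo]
    · congr 1; ring
    · intro s hs; exact hδ.trans hs.1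
  have hmuniv : μ1 univ = ENNReal.ofReal δ := by rw [hμ1, Measure.restrict_apply_univ, hvol]
  have : IsFiniteMeasure μ1 := ⟨by rw [hmuniv]; exact ENNReal.ofReal_lt_top⟩
  have hμne : μ1 ≠ 0 := by
    intro h0
    rw [h0] at hmuniv
    simp at hmuniv
    linarith
  obtain ⟨x1, hx1N, hx1⟩ := exists_notMem_null_le_average hμne (hN.restrict (s := Ioo δ (2 * δ)))
    (N := {x | ¬ ((x < 2 * δ → |x ^ 2 * ψ x - ∫ y in (0:ℝ)..x, y * A y * ψ y| ≤ C * N * x ^ p) ∧ x ∈ Ioo δ (2 * δ))})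
    (by
      have : ∀ᵐ x ∂μ1, ((x < 2 * δ → |x ^ 2 * ψ x - ∫ y in (0:ℝ)..x, y * A y * ψ y| ≤ C * N * x ^ p) ∧ x ∈ Ioo δ (2 * δ)) := by
        filter_upwards [ae_restrict_of_ae hR, ae_restrict_mem measurableSet_Ioo] with x h1 h2
        exact ⟨h1, h2⟩
      exact this)
  simp only [mem_setOf_eq, not_not] at hx1N
  obtain ⟨hx1R, hx1m⟩ := hx1N
  have hx1p : 0 < x1 := hδ.trans hx1m.1
  have hR1 := hx1R hx1m.2
  have hψ1 : |ψ x1| ≤ B / (1 - exp (-δ)) / δ := by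
    have h1 : |ψ x1| ≤ |ψ x1| * weight (-α) β x1 := by
      have := weight_ge (β := β) (r := 0) hα hx1p (by linarith) hβ
      rw [Real.rpow_zero] at this
      exact le_mul_of_one_le_right (abs_nonneg _) this
    have h2 : ⨍ x, |ψ x| * weight (-α) β x ∂μ1 ≤ B / (1 - exp (-δ)) / δ := by
      rw [average_eq, smul_eq_mul]
      have : μ1.real univ = δ := by rw [Measure.real, hmuniv, ENNReal.toReal_ofReal hδ.le]
      rw [this, div_eq_inv_mul _ δ]
      gcongr
      exact hsub _ measurableSet_Ioo (fun x hx => hx.1.le)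
    exact h1.trans (hx1.trans h2)
  set D := 4 * δ / ((1 - exp (-δ)) * δ ^ p) with hD
  have hDn : 0 ≤ D := by positivity
  set c' := C * N + D * B with hc'
  have hc'n : 0 ≤ c' := by positivity
  have hδx : δ ^ p ≤ x1 ^ p := Real.rpow_le_rpow hδ.le hx1m.1.le hp0.le
  have hm1 : |∫ y in (0:ℝ)..x1, y * A y * ψ y| ≤ c' * x1 ^ p := by
    set m := ∫ y in (0:ℝ)..x1, y * A y * ψ y
    have h1 : |m| ≤ x1 ^ 2 * |ψ x1| + C * N * x1 ^ p := by
      have h3 : |m| ≤ |x1 ^ 2 * ψ x1| + |x1 ^ 2 * ψ x1 - m| := by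
        have := abs_sub (x1 ^ 2 * ψ x1) (x1 ^ 2 * ψ x1 - m)
        simpa using this
      rw [abs_mul, abs_of_nonneg (sq_nonneg x1)] at h3
      linarith
    have h2 : x1 ^ 2 * |ψ x1| ≤ D * B * x1 ^ p := by
      calc x1 ^ 2 * |ψ x1| ≤ (2 * δ) ^ 2 * (B / (1 - exp (-δ)) / δ) := by
            gcongr
            exact hx1m.2.le
        _ = D * B * δ ^ p := by rw [hD]; field_simp; ring
        _ ≤ _ := by gcongr
    rw [hc']; linarith
  have hκ : 1 ≤ a / (a - p) := by rw [le_div_iff₀ hap]; linarith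
  have hgr := gron ψ A hx1p hp0 hpa hc'n hA
    (by
      rw [intervalIntegrable_iff_integrableOn_Ioc_of_le hx1p.le]
      exact hg.mono_measure (Measure.restrict_mono Ioc_subset_Ioi_self le_rfl))
    (by
      filter_upwards [hR, ae_nu_pos] with x hx hxp hxx
      refine (hx (hxx.trans hx1m.2)).trans ?_
      have : 0 ≤ D * B := by positivity
      rw [hc']
      gcongr
      linarith)
    (hm1.trans (by
      gcongr
      exact le_mul_of_one_le_left hc'n hκ))
  have hq : -1 < p - 2 - α := by linarith
  have hipow : IntegrableOn (fun x : ℝ => x ^ (p - 2 - α)) (Ioc 0 δ) :=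
    (intervalIntegrable_iff_integrableOn_Ioc_of_le hδ.le).1 (intervalIntegral.intervalIntegrable_rpow' hq)
  have hpow : ∫ x in Ioo 0 δ, x ^ (p - 2 - α) = δ ^ (p - 1 - α) / (p - 1 - α) := by
    rw [restrict_Ioo_eq_restrict_Ioc, ← intervalIntegral.integral_of_le hδ.le, integral_rpow (Or.inl hq),
      Real.zero_rpow (by linarith), show p - 2 - α + 1 = p - 1 - α by ring, sub_zero]
  have hnear : ∫ x in Iio δ, |exp (-x) * ψ x| * weight (-α) β x ∂nu ≤
      (a / (a - p) + 1) * c' * (δ ^ (p - 1 - α) / (p - 1 - α)) := by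
    rw [← hpow, ← integral_const_mul, ← nu_Iio]
    apply integral_mono_ae iE.restrict
    · rw [nu_Iio, restrict_Ioo_eq_restrict_Ioc]
      exact hipow.const_mul _
    · filter_upwards [ae_restrict_of_ae hgr, ae_restrict_of_ae ae_nu_pos, ae_restrict_mem measurableSet_Iio] with x hx hxp hxδ
      have hxd : x < δ := hxδ
      have h1 := hx (hxd.trans hx1m.1)
      have h2 : exp (-x) ≤ 1 := by rw [Real.exp_le_one_iff]; linarith
      have e1 : weight (-α) β x = x ^ (-α) := by unfold weight; rw [if_pos (by linarith)]
      rw [e1, abs_mul, abs_of_pos (exp_pos _)]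
      have e2 : x ^ (p - 2 - α) = x ^ p * x ^ (-α) * (x ^ 2)⁻¹ := by
        rw [show p - 2 - α = p + -α + -2 by ring, Real.rpow_add hxp, Real.rpow_add hxp,
          Real.rpow_neg hxp.le 2]
        norm_num
      rw [e2]
      have h3 : |ψ x| ≤ (a / (a - p) + 1) * c' * x ^ p * (x ^ 2)⁻¹ := by
        rw [← div_eq_mul_inv, le_div_iff₀ (by positivity)]; linarith
      calc exp (-x) * |ψ x| * x ^ (-α) ≤ 1 * ((a / (a - p) + 1) * c' * x ^ p * (x ^ 2)⁻¹) * x ^ (-α) := by gcongr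
        _ = _ := by ring
  have hfarI : ∫ x in (Iio δ)ᶜ, |exp (-x) * ψ x| * weight (-α) β x ∂nu ≤ B / (1 - exp (-δ)) := by
    refine le_trans ?_ (hsub (Iio δ)ᶜ measurableSet_Iio.compl (fun x hx => by simpa using hx))
    apply integral_mono_ae iE.restrict hN.restrict
    filter_upwards [ae_restrict_of_ae ae_nu_pos] with x hx
    have := hwn x hx
    have h2 : exp (-x) ≤ 1 := by rw [Real.exp_le_one_iff]; linarith
    rw [abs_mul, abs_of_pos (exp_pos _)]
    gcongr
    calc exp (-x) * |ψ x| ≤ 1 * |ψ x| := by gcongr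
      _ = _ := one_mul _
  rw [← integral_add_compl (measurableSet_Iio (a := δ)) iE]
  calc _ ≤ _ := add_le_add hnear hfarI
    _ = _ := by rw [hc']; ring
end

open MeasureTheory Real Set Filter
open scoped ENNReal Topology

section
variable {α ε : ℝ} {w : ℝ → ℝ → ℝ} {φ : ℝ → ℝ}

lemma exps {α : ℝ} (hα : α ∈ Ioo (0:ℝ) 1) : ∃ η p : ℝ, η ∈ Ioo (0:ℝ) 1 ∧ 1 + α < p ∧
    p ≤ 1 + 2 * α ∧ p < 2 - η ∧ (α < 1/2 → p ≤ 2 - η - α) := by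
  obtain ⟨h0, h1⟩ := hα
  by_cases h : α < 1/2
  · refine ⟨(1 - 2*α)/4, 1 + α + min α ((1 - 2*α)/2), ⟨by linarith, by linarith⟩, ?_, ?_, ?_, ?_⟩
    · have : 0 < min α ((1 - 2*α)/2) := lt_min h0 (by linarith)
      linarith
    · linarith [min_le_left α ((1 - 2*α)/2)]
    · linarith [min_le_right α ((1 - 2*α)/2)]
    · intro _; linarith [min_le_right α ((1 - 2*α)/2)]
  · refine ⟨(1 - α)/4, 1 + α + min α ((1 - α)/2), ⟨by linarith, by linarith⟩, ?_, ?_, ?_, ?_⟩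
    · have : 0 < min α ((1 - α)/2) := lt_min h0 (by linarith)
      linarith
    · linarith [min_le_left α ((1 - α)/2)]
    · linarith [min_le_right α ((1 - α)/2)]
    · intro h'; exact absurd h' h

lemma Q_bound (hα : α ∈ Ioo (0:ℝ) 1) (W : ℝ → ℝ → ℝ) (hW : GoodW α W)
    (hlow : 1/2 ≤ α → ∃ cstar > (0:ℝ), ∀ x y : ℝ, 0 < x → 0 < y →
      cstar * ((x / y) ^ α + (y / x) ^ α) ≤ W x y) {η p x0 : ℝ} (hη : η ∈ Ioo (0:ℝ) 1)
    (hpa : p < 2 - η) (hp1 : 1 + α < p) (hp2 : α < 1/2 → p ≤ 2 - η - α) (hx0 : 0 < x0) (hx01 : x0 ≤ 1) :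
    ∃ CQ > (0:ℝ), ∀ ε, 0 < ε → ε ≤ 1 → ∀ φ, Good ε (cutW W) φ →
      ENNReal.ofReal (1 - η / 2) ≤ ∫⁻ z in Ioi x0, ENNReal.ofReal (φ z) ∂nu →
      ∀ x, 0 < x → 2 * x ≤ x0 → ε * (∫ y in Ioo 0 x, y ^ (1 - α) * φ y) ≤ CQ * x ^ p := by
  have hw := cutW_GW hW
  have h0 := hα.1
  have h1 := hα.2
  have key : ∀ ε, 0 < ε → ∀ φ, Good ε (cutW W) φ → ∀ x, ∀ D : ℝ, 0 ≤ D →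
      ENNReal.ofReal ε * ∫⁻ y in Iio x, ENNReal.ofReal (y ^ (1 - α) * φ y) ∂nu ≤ ENNReal.ofReal D →
      ε * (∫ y in Ioo 0 x, y ^ (1 - α) * φ y) ≤ D := by
    intro ε hε φ h x D hD hle
    rw [nu_Iio] at hle
    have hm := h.meas
    rw [integral_eq_lintegral_of_nonneg_ae]
    · have := ENNReal.toReal_mono ENNReal.ofReal_ne_top hle
      rwa [ENNReal.toReal_mul, ENNReal.toReal_ofReal hε.le, ENNReal.toReal_ofReal hD] at this
    · filter_upwards [ae_restrict_mem measurableSet_Ioo] with y hy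
      have := h.nn y
      have := hy.1
      show 0 ≤ y ^ (1 - α) * φ y
      positivity
    · exact (by fun_prop : Measurable (fun y => y ^ (1 - α) * φ y)).aestronglyMeasurable
  by_cases hc : α < 1/2
  · have hd : 0 < 2 - η - α := by linarith [hη.2]
    refine ⟨x0 ^ (η - 1) * (1 + α / (2 - η - α)), by positivity, ?_⟩
    intro ε hε hε1 φ h hl x hx hxx
    apply key ε hε φ h x _ (by positivity)
    have h2 := h.weighted hα hε hw hx0 hη hl h0 (by linarith) hx (by linarith : x ≤ x0)
    calc _ ≤ 1 * ∫⁻ y in Iio x, ENNReal.ofReal (y ^ (1 - α) * φ y) ∂nu := by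
            gcongr; simpa using hε1
      _ ≤ _ := by
        rw [one_mul]
        refine h2.trans (ENNReal.ofReal_le_ofReal ?_)
        exact mul_le_mul_of_nonneg_left (rpow_le_rpow_of_exponent_ge hx (by linarith) (hp2 hc)) (by positivity)
  · obtain ⟨c, hc0, hcl⟩ := hlow (not_lt.1 hc)
    refine ⟨16 * x0 ^ (η - 1) / (c * x0 ^ α), by positivity, ?_⟩
    intro ε hε hε1 φ h hl x hx hxx
    apply key ε hε φ h x _ (by positivity)
    refine (h.Q_le hα hε hw hx0 hη hl hc0 ?_ hx hxx).trans (ENNReal.ofReal_le_ofReal ?_)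
    · intro y z hy hz
      rw [cutW_of_pos hy hz]; exact hcl y z hy hz
    · exact mul_le_mul_of_nonneg_left (rpow_le_rpow_of_exponent_ge hx (by linarith) hpa.le) (by positivity)

end

open MeasureTheory Real Set Filter
open scoped ENNReal Topology

lemma main_good (α β : ℝ) (hα : α ∈ Ioo (0:ℝ) 1) (hβ : β ∈ Ioo (1 + α) 2)
    (W : ℝ → ℝ → ℝ) (hW : GoodW α W)
    (hlow : 1/2 ≤ α → ∃ cstar > (0:ℝ), ∀ x y : ℝ, 0 < x → 0 < y →
      cstar * ((x / y) ^ α + (y / x) ^ α) ≤ W x y)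
    (μ : ℝ) (hμ : 0 < μ) :
    ∃ Cμ > (0:ℝ), ∃ εstar > (0:ℝ), ∀ ε : ℝ, 0 < ε → ε < εstar →
      ∀ φ₁ φ₂ : ℝ → ℝ, Good ε (cutW W) φ₁ → Good ε (cutW W) φ₂ →
        Xnorm (-α) β (fun x => exp (-x) * (φ₁ x - φ₂ x)) ≤
          μ * Xnorm (-α) β (fun x => φ₁ x - φ₂ x) +
          Cμ * Xnorm (-α) β (fun x => (1 - exp (-x)) * (φ₁ x - φ₂ x)) := by
  have hw := cutW_GW hW
  have hα0 := hα.1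
  have hα1 := hα.2
  obtain ⟨η, p, hη, hp, hp2, hpa, hp3⟩ := exps hα
  obtain ⟨ε0, hε0, x0, hx0, hx01, hlm⟩ := lower_mass hα (η := η / 2) (by linarith [hη.1])
  obtain ⟨CQ, hCQ, hQ⟩ := Q_bound hα W hW hlow hη hpa hp hp3 hx0 hx01
  have hs : 1 + α < 2 - η := by linarith
  have hs' : 0 < 2 - η - (1 + α) := by linarith
  set M1 := x0 ^ (η - 1) * (1 + (1 + α) / (2 - η - (1 + α))) * x0 ^ (2 - η - (1 + α)) + x0 ^ (-α) with hM1
  have hM1p : 0 < M1 := by positivity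
  set C := 3 * x0 ^ (η - 1) + CQ + 4 * M1 with hC
  have hCp : 0 < C := by positivity
  set q := p - 1 - α with hq
  have hqp : 0 < q := by linarith
  set κ := (2 - η) / (2 - η - p) with hκ
  have hκp : 0 < κ := div_pos (by linarith [hη.2]) (by linarith)
  set D := μ * q / ((κ + 1) * C) with hD
  have hDp : 0 < D := by positivity
  set δ := min (x0 / 4) (D ^ (1 / q)) with hδ
  have hδp : 0 < δ := lt_min (by linarith) (by positivity)
  have hδx : δ ≤ x0 / 4 := min_le_left _ _
  have hδ1 : δ ≤ 1 := by linarith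
  have hδq : δ ^ q ≤ D := by
    calc δ ^ q ≤ (D ^ (1 / q)) ^ q := rpow_le_rpow hδp.le (min_le_right _ _) hqp.le
      _ = D := by rw [← rpow_mul hDp.le, one_div_mul_cancel hqp.ne', rpow_one]
  have hcoef : (κ + 1) * C * (δ ^ q / q) ≤ μ := by
    calc (κ + 1) * C * (δ ^ q / q) ≤ (κ + 1) * C * (D / q) := by gcongr
      _ = μ := by rw [hD]; field_simp
  have hexp : 0 < 1 - exp (-δ) := by
    have : exp (-δ) < 1 := by rw [exp_lt_one_iff]; linarith
    linarith
  refine ⟨(κ + 1) * (4 * δ / ((1 - exp (-δ)) * δ ^ p)) * (δ ^ q / q) + 1 / (1 - exp (-δ)),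
    by positivity, min 1 ε0, by positivity, ?_⟩
  intro ε hε hεs φ1 φ2 h1 h2
  have hε1 : ε ≤ 1 := (hεs.trans_le (min_le_left _ _)).le
  have hεε : ε < ε0 := hεs.trans_le (min_le_right _ _)
  have hl1 := hlm ε hε hεε _ _ hw h1
  have hl2 := hlm ε hε hεε _ _ hw h2
  have mn1 := h1.mom_neg hα hε hw hx0 hη hl1 hs
  have mn2 := h2.mom_neg hα hε hw hx0 hη hl2 hs
  have mt1 : Mom φ1 (-α) ≠ ⊤ := ne_top_of_le_ne_top ENNReal.ofReal_ne_top mn1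
  have mt2 : Mom φ2 (-α) ≠ ⊤ := ne_top_of_le_ne_top ENNReal.ofReal_ne_top mn2
  have hβ1 := hβ.1
  have mb1 := h1.mom_fin hα hε hw (b := β) (by linarith) hβ.2
  have mb2 := h2.mom_fin hα hε hw (b := β) (by linarith) hβ.2
  have n1 : Nice α φ1 := ⟨h1.meas, fun r ha hb => h1.int_range mt1 mb1 ha (by linarith)⟩
  have n2 : Nice α φ2 := ⟨h2.meas, fun r ha hb => h2.int_range mt2 mb2 ha (by linarith)⟩
  have hm1 := h1.meas
  have hm2 := h2.meas
  have hwm : Measurable (weight (-α) β) := by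
    unfold weight
    exact Measurable.ite measurableSet_Iic (by fun_prop) (by fun_prop)
  have hwn : ∀ z, 0 < z → 0 ≤ weight (-α) β z := by
    intro z hz; unfold weight; split_ifs <;> positivity
  have hN : Integrable (fun x => |φ1 x - φ2 x| * weight (-α) β x) nu := by
    refine (((h1.int_of_mom mt1).add (h1.int_of_mom mb1)).add
      ((h2.int_of_mom mt2).add (h2.int_of_mom mb2))).mono' (by fun_prop) ?_
    filter_upwards [ae_nu_pos] with x hx
    have p1 := h1.nn x
    have p2 := h2.nn x
    have p3 := hwn x hx
    have p4 : weight (-α) β x ≤ x ^ (-α) + x ^ β := by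
      have : 0 < x ^ (-α) := by positivity
      have : 0 < x ^ β := by positivity
      unfold weight; split_ifs <;> linarith
    have p5 : |φ1 x - φ2 x| ≤ φ1 x + φ2 x := by rw [abs_le]; constructor <;> linarith
    rw [norm_of_nonneg (by positivity)]
    simp only [Pi.add_apply]
    calc |φ1 x - φ2 x| * weight (-α) β x ≤ (φ1 x + φ2 x) * (x ^ (-α) + x ^ β) := by gcongr
      _ = _ := by ring
  set N := wN α β (fun x => φ1 x - φ2 x) with hNdef
  have hNn : 0 ≤ N := by
    apply integral_nonneg_of_ae
    filter_upwards [ae_nu_pos] with x hx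
    exact mul_nonneg (abs_nonneg _) (hwn x hx)
  have hM : ∫ z, z ^ (-α) * φ1 z ∂nu ≤ M1 := by
    rw [integral_eq_lintegral_of_nonneg_ae]
    · have := ENNReal.toReal_mono ENNReal.ofReal_ne_top mn1
      rwa [ENNReal.toReal_ofReal hM1p.le] at this
    · filter_upwards [ae_nu_pos] with y hy
      have := h1.nn y
      show 0 ≤ y ^ (-α) * φ1 y
      positivity
    · exact (by fun_prop : Measurable (fun y => y ^ (-α) * φ1 y)).aestronglyMeasurable
  have hfin := final_est (fun x => φ1 x - φ2 x) (AA ε (cutW W) φ1) (β := β) (δ := δ) (a := 2 - η) (p := p)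
    (C := C) (N := N) hα0 (by linarith) hδp hδ1 hp hpa hCp.le hNn (hm1.sub hm2) hN rfl
    (fun y hy => h1.AA_ge hα hε hε1 hw n1 hy hη hl1) (g_int hα hε hε1 hw n1 (n1.sub n2)) (by
      filter_upwards [decomp hα (by linarith) hε hε1 hw h1 h2 n1 n2 hN, ae_nu_pos] with x hd hx hxd
      have hx1 : x ≤ 1 := by linarith
      refine (hd hx1).trans ?_
      have a1 : mm φ2 x ≤ x0 ^ (η - 1) * x ^ p :=
        (h2.near_zero hα hε hw hx0 hη hl2 x hx (by linarith)).trans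
          (mul_le_mul_of_nonneg_left (rpow_le_rpow_of_exponent_ge hx hx1 hpa.le) (by positivity))
      have a2 := hQ ε hε hε1 φ2 h2 hl2 x hx (by linarith)
      have a3 : x ^ (1 + 2 * α) * (∫ z, z ^ (-α) * φ1 z ∂nu) ≤ x ^ p * M1 := by
        have : x ^ (1 + 2 * α) ≤ x ^ p := rpow_le_rpow_of_exponent_ge hx hx1 hp2
        calc _ ≤ x ^ (1 + 2 * α) * M1 := by gcongr
          _ ≤ _ := by gcongr
      have : C * N * x ^ p = (3 * (x0 ^ (η - 1) * x ^ p) + CQ * x ^ p + 4 * (x ^ p * M1)) * N := by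
        rw [hC]; ring
      rw [this]
      apply mul_le_mul_of_nonneg_right _ hNn
      linarith)
  refine hfin.trans ?_
  have : (κ + 1) * C * (δ ^ q / q) * N ≤ μ * N := mul_le_mul_of_nonneg_right hcoef hNn
  exact add_le_add_left this _

theorem stmt13 (α β : ℝ) (hα : α ∈ Ioo (0:ℝ) 1) (hβ : β ∈ Ioo (1 + α) 2)
    (W : ℝ → ℝ → ℝ) (hW : GoodW α W)
    (hlow : 1/2 ≤ α → ∃ cstar > (0:ℝ), ∀ x y : ℝ, 0 < x → 0 < y →
      cstar * ((x / y) ^ α + (y / x) ^ α) ≤ W x y)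
    (μ : ℝ) (hμ : 0 < μ) :
    ∃ Cμ > (0:ℝ), ∃ εstar > (0:ℝ), ∀ ε : ℝ, 0 < ε → ε < εstar →
      ∀ φ₁ φ₂ : ℝ → ℝ, IsProfile (Kern ε W) φ₁ → IsNormalised φ₁ →
        IsProfile (Kern ε W) φ₂ → IsNormalised φ₂ →
        Xnorm (-α) β (fun x => exp (-x) * (φ₁ x - φ₂ x)) ≤
          μ * Xnorm (-α) β (fun x => φ₁ x - φ₂ x) +
          Cμ * Xnorm (-α) β (fun x => (1 - exp (-x)) * (φ₁ x - φ₂ x)) := by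
  obtain ⟨Cm, hCm, es, hes, H⟩ := main_good α β hα hβ W hW hlow μ hμ
  refine ⟨Cm, hCm, es, hes, fun ε hε hεs φ₁ φ₂ hp1 hn1 hp2 hn2 => ?_⟩
  obtain ⟨f1, hf1, he1⟩ := to_good hα hW hε hp1 hn1
  obtain ⟨f2, hf2, he2⟩ := to_good hα hW hε hp2 hn2
  have key : ∀ g : ℝ → ℝ, Xnorm (-α) β (fun x => g x * (φ₁ x - φ₂ x)) =
      Xnorm (-α) β (fun x => g x * (f1 x - f2 x)) := by
    intro g
    apply integral_congr_ae
    filter_upwards [he1, he2] with x e1 e2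
    simp only [e1, e2]
  have k1 := key (fun x => exp (-x))
  have k2 := key (fun x => 1 - exp (-x))
  have k3 := key (fun _ => 1)
  simp only [one_mul] at k3
  rw [k1, k2, k3]
  exact H ε hε hεs f1 f2 hf1 hf2
end

section
/- Let α ∈ (0,1), β ∈ (1+α, 2), and let W : (0,∞)² → ℝ be measurable with 0 ≤ W(x,y) ≤ (x/y)^α + (y/x)^α for all x,y > 0; set K_ε := 2 + εW with ε bounded above. For a ∈ [0, 2α] and b ≤ 0 there is a constant C > 0 such that for all g, h ∈ X_{−α,β}: ∫₀^∞ ∫₀^∞ ω_{−a,b}(y+z) W(y,z) |g(y)| |h(z)| dz dy ≤ C ‖g‖_{X_{−α,β}} ‖h‖_{X_{−α,β}}, and likewise ∫₀^∞ ∫₀^∞ ω_{−a,b}(y+z) K_ε(y,z) |g(y)| |h(z)| dz dy ≤ C ‖g‖_{X_{−α,β}} ‖h‖_{X_{−α,β}}. -/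
open MeasureTheory Real Set Filter

theorem weight_pos' (a b x : ℝ) (hx : 0 < x) : 0 < weight a b x := by
  unfold weight; split_ifs <;> positivity

theorem one_le_w (α β x : ℝ) (hα : 0 < α) (hβ : 0 ≤ β) (hx : 0 < x) : 1 ≤ weight (-α) β x := by
  unfold weight
  split_ifs with h
  · exact one_le_rpow_of_pos_of_le_one_of_nonpos hx h (by linarith)
  · exact one_le_rpow (by linarith) hβ

theorem w_le_one (a b s : ℝ) (hb : b ≤ 0) (h : 1 < s) : weight a b s ≤ 1 := by
  unfold weight
  rw [if_neg (by linarith)]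
  exact rpow_le_one_of_one_le_of_nonpos h.le hb

theorem w_small (α a s : ℝ) (ha : a ≤ 2 * α) (hs : 0 < s) (h : s ≤ 1) (b : ℝ) :
    weight (-a) b s ≤ s ^ (-α) * s ^ (-α) := by
  unfold weight
  rw [if_pos h, ← rpow_add hs]
  exact rpow_le_rpow_of_exponent_ge hs h (by linarith)

theorem ptA (α β a b y z : ℝ) (hα : 0 < α) (hβ : α ≤ β) (ha : a ≤ 2 * α) (hb : b ≤ 0)
    (hy : 0 < y) (hz : 0 < z) :
    weight (-a) b (y + z) * (y / z) ^ α ≤ weight (-α) β y * weight (-α) β z := by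
  have hdiv : (y / z) ^ α = y ^ α * z ^ (-α) := by
    rw [div_rpow hy.le hz.le, rpow_neg hz.le]; rfl
  have hyα : 0 < y ^ α := by positivity
  have hzα : 0 < z ^ (-α) := by positivity
  rcases le_or_gt (y + z) 1 with h | h
  · have h1 := w_small α a (y + z) ha (by positivity) h b
    have h2 : (y + z) ^ (-α) ≤ y ^ (-α) :=
      rpow_le_rpow_of_nonpos hy (by linarith) (by linarith)
    have h3 : 0 < (y + z) ^ (-α) := by positivity
    have e : weight (-α) β y = y ^ (-α) := by unfold weight; rw [if_pos (by linarith)]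
    have e' : weight (-α) β z = z ^ (-α) := by unfold weight; rw [if_pos (by linarith)]
    rw [hdiv, e, e']
    have h4 : y ^ (-α) * y ^ α = 1 := by rw [← rpow_add hy]; simp
    calc weight (-a) b (y + z) * (y ^ α * z ^ (-α))
        ≤ (y ^ (-α) * y ^ (-α)) * (y ^ α * z ^ (-α)) := by
          gcongr
          exact h1.trans (by gcongr)
      _ = (y ^ (-α) * y ^ α) * (y ^ (-α) * z ^ (-α)) := by ring
      _ = _ := by rw [h4, one_mul]
  · have h1 := w_le_one (-a) b (y + z) hb h
    have hy1 : y ^ α ≤ weight (-α) β y := by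
      by_cases hh : y ≤ 1
      · exact (rpow_le_one hy.le hh hα.le).trans (one_le_w α β y hα (by linarith) hy)
      · unfold weight
        rw [if_neg hh]
        exact rpow_le_rpow_of_exponent_le (by linarith) hβ
    have hz1 : z ^ (-α) ≤ weight (-α) β z := by
      by_cases hh : z ≤ 1
      · unfold weight
        rw [if_pos hh]
      · exact (rpow_le_one_of_one_le_of_nonpos (by linarith) (by linarith)).trans
          (one_le_w α β z hα (by linarith) hz)
    rw [hdiv]
    calc weight (-a) b (y + z) * (y ^ α * z ^ (-α)) ≤ 1 * (y ^ α * z ^ (-α)) := by gcongr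
      _ = y ^ α * z ^ (-α) := one_mul _
      _ ≤ _ := by
        have := (weight_pos' (-α) β y hy).le
        gcongr

theorem ptB (α β a b y z : ℝ) (hα : 0 < α) (hβ : α ≤ β) (ha : a ≤ 2 * α) (hb : b ≤ 0)
    (hy : 0 < y) (hz : 0 < z) :
    weight (-a) b (y + z) ≤ weight (-α) β y * weight (-α) β z := by
  have hp := (weight_pos' (-a) b (y + z) (by positivity)).le
  rcases le_total z y with h | h
  · refine le_trans ?_ (ptA α β a b y z hα hβ ha hb hy hz)
    exact le_mul_of_one_le_right hp (one_le_rpow ((one_le_div hz).2 h) hα.le)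
  · have := ptA α β a b z y hα hβ ha hb hz hy
    rw [add_comm z y, mul_comm (weight (-α) β z)] at this
    refine le_trans ?_ this
    exact le_mul_of_one_le_right hp (one_le_rpow ((one_le_div hy).2 h) hα.le)

theorem memX_abs (a b : ℝ) (g : ℝ → ℝ) (hg : MemX a b g) :
    IntegrableOn (fun x => |g x| * weight a b x) (Ioi 0) := by
  refine IntegrableOn.congr_fun (Integrable.norm hg) (fun x hx => ?_) measurableSet_Ioi
  simp only [norm_eq_abs, abs_mul]
  rw [abs_of_pos (weight_pos' a b x hx)]

theorem bound_int (α β C : ℝ) (k : ℝ → ℝ → ℝ)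
    (hk : ∀ y z : ℝ, 0 < y → 0 < z →
      0 ≤ k y z ∧ k y z ≤ C * (weight (-α) β y * weight (-α) β z))
    (g h : ℝ → ℝ) (hg : MemX (-α) β g) (hh : MemX (-α) β h) :
    (∫ y in Ioi (0:ℝ), ∫ z in Ioi (0:ℝ), k y z * |g y| * |h z|) ≤
      C * Xnorm (-α) β g * Xnorm (-α) β h := by
  have hg' := memX_abs _ _ g hg
  have hh' := memX_abs _ _ h hh
  have inner : ∀ y : ℝ, 0 < y → (∫ z in Ioi (0:ℝ), k y z * |g y| * |h z|) ≤
      (C * Xnorm (-α) β h) * (|g y| * weight (-α) β y) := by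
    intro y hy
    have : (C * Xnorm (-α) β h) * (|g y| * weight (-α) β y) =
        ∫ z in Ioi (0:ℝ), (C * (|g y| * weight (-α) β y)) * (|h z| * weight (-α) β z) := by
      rw [integral_const_mul]; unfold Xnorm; ring
    rw [this]
    apply integral_mono_of_nonneg
    · filter_upwards [ae_restrict_mem measurableSet_Ioi] with z hz
      have := (hk y z hy hz).1
      simp only [Pi.zero_apply]
      positivity
    · exact hh'.const_mul _
    · filter_upwards [ae_restrict_mem measurableSet_Ioi] with z hz
      have := (hk y z hy hz).2
      calc k y z * |g y| * |h z|
          ≤ (C * (weight (-α) β y * weight (-α) β z)) * |g y| * |h z| := by gcongr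
        _ = _ := by ring
  have : C * Xnorm (-α) β g * Xnorm (-α) β h =
      ∫ y in Ioi (0:ℝ), (C * Xnorm (-α) β h) * (|g y| * weight (-α) β y) := by
    rw [integral_const_mul]; unfold Xnorm; ring
  rw [this]
  apply integral_mono_of_nonneg
  · filter_upwards [ae_restrict_mem measurableSet_Ioi] with y hy
    refine setIntegral_nonneg measurableSet_Ioi (fun z hz => ?_)
    have := (hk y z hy hz).1
    positivity
  · exact hg'.const_mul _
  · filter_upwards [ae_restrict_mem measurableSet_Ioi] with y hy
    exact inner y hy

theorem stmt14 (α β : ℝ) (hα : α ∈ Ioo (0:ℝ) 1) (hβ : β ∈ Ioo (1 + α) 2)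
    (W : ℝ → ℝ → ℝ) (hWmeas : Measurable (Function.uncurry W))
    (hWb : ∀ x y : ℝ, 0 < x → 0 < y → 0 ≤ W x y ∧ W x y ≤ (x / y) ^ α + (y / x) ^ α)
    (a b : ℝ) (ha : a ∈ Icc (0:ℝ) (2 * α)) (hb : b ≤ 0) :
    ∃ C > (0:ℝ), ∀ ε : ℝ, 0 < ε → ε ≤ 1 →
      ∀ g h : ℝ → ℝ, MemX (-α) β g → MemX (-α) β h →
        (∫ y in Ioi (0:ℝ), ∫ z in Ioi (0:ℝ),
            weight (-a) b (y + z) * W y z * |g y| * |h z|) ≤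
          C * Xnorm (-α) β g * Xnorm (-α) β h ∧
        (∫ y in Ioi (0:ℝ), ∫ z in Ioi (0:ℝ),
            weight (-a) b (y + z) * Kern ε W y z * |g y| * |h z|) ≤
          C * Xnorm (-α) β g * Xnorm (-α) β h := by
  obtain ⟨hα0, hα1⟩ := hα
  obtain ⟨hβ0, hβ1⟩ := hβ
  have hWk : ∀ y z : ℝ, 0 < y → 0 < z → 0 ≤ weight (-a) b (y + z) * W y z ∧
      weight (-a) b (y + z) * W y z ≤ 2 * (weight (-α) β y * weight (-α) β z) := by
    intro y z hy hz
    obtain ⟨w0, w1⟩ := hWb y z hy hz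
    have hp := (weight_pos' (-a) b (y + z) (by positivity)).le
    refine ⟨by positivity, ?_⟩
    have h1 := ptA α β a b y z hα0 (by linarith) ha.2 hb hy hz
    have h2 := ptA α β a b z y hα0 (by linarith) ha.2 hb hz hy
    rw [add_comm z y] at h2
    have h3 := mul_le_mul_of_nonneg_left w1 hp
    linarith
  refine ⟨4, by norm_num, fun ε hε0 hε1 g h hg hh => ⟨?_, ?_⟩⟩
  · refine bound_int α β 4 (fun y z => weight (-a) b (y + z) * W y z) ?_ g h hg hh
    intro y z hy hz
    obtain ⟨h1, h2⟩ := hWk y z hy hz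
    exact ⟨h1, by linarith⟩
  · refine bound_int α β 4 (fun y z => weight (-a) b (y + z) * Kern ε W y z) ?_ g h hg hh
    intro y z hy hz
    obtain ⟨h1, h2⟩ := hWk y z hy hz
    have h3 := ptB α β a b y z hα0 (by linarith) ha.2 hb hy hz
    have hp := (weight_pos' (-a) b (y + z) (by positivity)).le
    have e : weight (-a) b (y + z) * Kern ε W y z =
        2 * weight (-a) b (y + z) + ε * (weight (-a) b (y + z) * W y z) := by
      unfold Kern; ring
    have h4 := mul_le_of_le_one_left h1 hε1
    simp only [e]
    exact ⟨by positivity, by linarith⟩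
end
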